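/- arXiv:2211.09465 — 2 statements merged into one kernel-verified Lean document; each statement's English description precedes it below -/
import Mathlib

section
/- There is an absolute constant c > 0 such that the following holds for every prime p. Let P be a finite set of points in F_p^2 with |P| ≤ p^{15/13}, and let C be any finite set of irreducible cubic curves in F_p^2. Then the number of incidences satisfies I(P,C) ≤ c·( (|P||C|)^{39/43} + |P|^{71/43}|C|^{28/43} + |C| ). -/
/-!
Write `m = |P|` and `n = |C|`. The number `N_k` of cubics of `C` containing about `k` points of `P`
satisfies `N_k ≪ m^{39/4} k^{-43/4} + m^8 k^{-8}` for `k ≥ 1000`, provided `m^3 ≤ p^4`.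
Summing `k N_k` over dyadic `k` above the threshold `T ≈ 1000 + m^{39/43} n^{-4/43} + m n^{-1/8}`,
and counting at most `T` incidences on each remaining cubic, gives
`I ≪ nT ≪ (mn)^{39/43} + m n^{7/8} + n`; the middle term is a weighted geometric mean of the first
and of `m^{71/43} n^{28/43}`.

**Reduction to a plane.** Cubic polynomials form a vector space of dimension ten. Fixing seven
points of `P` in turn, each of which lowers the dimension by one, reduces to a linear system `V` of
dimension three at the cost of a factor `(2m/k)^7`. In the projective plane of `V` the cubics are
points and evaluation at a point of `P` is a line. By Bézout's theorem at most nine points of `P`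
lying on two of the cubics give the same line, so that a `k`-rich cubic becomes a point on at least
`k/40` lines.

**Rich points.** Among `n` lines in a projective plane over `𝔽_p`, `n^3 ≤ p^4`, there are
`O(n^{11/4} k^{-15/4} + n/k)` points on about `k` lines. If this number is `M`, then by
Cauchy–Schwarz some pair `q₁, q₂` of these points is joined by the lines to `≫ M k^4 / n^2` of the
others. Sending `q₁` and `q₂` to infinity, the latter form a subset `G` of a grid `A × B` with
`|A|, |B| ≪ k`, each point of which is still on about `k` lines, so it remains to bound the
incidences of `G` with `n` lines.

**Grids.** By Cauchy–Schwarz over `B` it suffices to count the solutions of `l(a) = l'(a')` with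
`a, a' ∈ A` and lines `l, l'`. Attaching to `(a, l')` a red line and to `(a', l)` a blue line in
three-space over the rational function field `𝔽_p(ε)`, such a solution is an intersection of two of
the `N = |A| n` lines of either colour. These are `O(N^{3/2} + kN)` in number when `N ≪ p²`, where
`k` bounds the number of red lines meeting a blue line inside a common bilinear graph
`Z = γXY + αX + βY + δ`.

**Lines in three-space.** The last bound follows the polynomial method of Guth–Katz. A sample of the
red lines lies on a surface of degree `d ≪ √N`, `d < p`; each blue line not on it meets at most `d`
of them. A component containing many lines of both colours is annihilated by two flecnodal
expressions, and in degree less than the characteristic this forces it to be a bilinear graph, by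
uniqueness for a second-order linear differential equation.
-/

open scoped Classical

noncomputable section

def zeroSet {p : ℕ} (f : MvPolynomial (Fin 2) (ZMod p)) : Set (Fin 2 → ZMod p) :=
  {x | MvPolynomial.eval x f = 0}

def IsIrredCubic {p : ℕ} (γ : Set (Fin 2 → ZMod p)) : Prop :=
  ∃ f : MvPolynomial (Fin 2) (ZMod p), Irreducible f ∧ f.totalDegree = 3 ∧ γ = zeroSet f

def incidences {p : ℕ} (P : Finset (Fin 2 → ZMod p)) (C : Finset (Set (Fin 2 → ZMod p))) : ℕ :=
  ((P ×ˢ C).filter fun z => z.1 ∈ z.2).card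

namespace CubicIncidences

/-! ### Bézout's theorem in the plane over a domain -/

section Bezout
open MvPolynomial

theorem finrank_restrictTotalDegree (σ R : Type*) [Fintype σ] [CommRing R] [Nontrivial R]
    (k : ℕ) : Module.finrank R (restrictTotalDegree σ R k) =
      (k + Fintype.card σ).choose (Fintype.card σ) := by
  have hsupport : {n : σ →₀ ℕ | n.degree ≤ k} =
      ((Finset.range (k + 1)).biUnion (Finset.univ : Finset σ).finsuppAntidiag : Set (σ →₀ ℕ)) := by
    ext n
    simp [Finsupp.degree_eq_sum]
  have hrestrict : restrictTotalDegree σ R k = restrictSupport R {n : σ →₀ ℕ | n.degree ≤ k} := by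
    ext f
    rw [mem_restrictTotalDegree, mem_restrictSupport_iff, totalDegree, Finset.sup_le_iff]
    rfl
  have hdisjoint : (Finset.range (k + 1) : Set ℕ).PairwiseDisjoint
      (Finset.univ : Finset σ).finsuppAntidiag := fun i _ j _ hij =>
    Finset.disjoint_left.2 fun n hi hj =>
      hij ((Finset.mem_finsuppAntidiag.1 hi).1.symm.trans (Finset.mem_finsuppAntidiag.1 hj).1)
  rw [hrestrict, Module.finrank_eq_nat_card_basis (basisRestrictSupport R _), Nat.card_coe_set_eq,
    hsupport, Set.ncard_coe_finset, Finset.card_biUnion hdisjoint]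
  simp only [Finset.card_finsuppAntidiag_nat_eq_multichoose, Finset.card_univ,
    Nat.sum_range_multichoose]

variable {A : Type*} [CommRing A]

/-- The submodule of the multiples of `f` by polynomials of total degree at most `k`. -/
def boundedMultiples {σ : Type*} (f : MvPolynomial σ A) (k : ℕ) :
    Submodule A (MvPolynomial σ A) :=
  (restrictTotalDegree σ A k).map (LinearMap.mulLeft A f)

instance {σ : Type*} [Finite σ] (f : MvPolynomial σ A) (k : ℕ) :
    Module.Finite A (boundedMultiples f k) :=
  inferInstanceAs (Module.Finite A (Submodule.map _ _))

theorem boundedMultiples_le {σ : Type*} {f : MvPolynomial σ A} {k l : ℕ}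
    (h : f.totalDegree + k ≤ l) : boundedMultiples f k ≤ restrictTotalDegree σ A l := by
  rintro _ ⟨u, hu, rfl⟩
  rw [SetLike.mem_coe, mem_restrictTotalDegree] at hu
  rw [mem_restrictTotalDegree]
  exact (totalDegree_mul _ _).trans (by omega)

theorem eval_eq_zero_of_mem_boundedMultiples {σ : Type*} {f s : MvPolynomial σ A} {k : ℕ}
    (hs : s ∈ boundedMultiples f k) {z : σ → A} (hz : eval z f = 0) : eval z s = 0 := by
  obtain ⟨u, -, rfl⟩ := hs
  rw [LinearMap.mulLeft_apply, map_mul, hz, zero_mul]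

variable [IsDomain A]

theorem finrank_boundedMultiples {σ : Type*} [Fintype σ] {f : MvPolynomial σ A} (hf : f ≠ 0)
    (k : ℕ) : Module.finrank A (boundedMultiples f k) =
      (k + Fintype.card σ).choose (Fintype.card σ) := by
  rw [← finrank_restrictTotalDegree σ A k]
  exact (Submodule.equivMapOfInjective _ (mul_right_injective₀ hf) _).finrank_eq.symm

theorem boundedMultiples_inf_le {σ : Type*} {f g : MvPolynomial σ A} (hf : Prime f)
    (hfg : ¬ f ∣ g) (k n : ℕ) :
    boundedMultiples f k ⊓ boundedMultiples g (n + f.totalDegree) ≤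
      boundedMultiples (f * g) n := by
  rintro _ ⟨⟨u, -, rfl⟩, v, hv, hgv⟩
  simp only [LinearMap.mulLeft_apply] at hgv
  obtain ⟨w, rfl⟩ := (hf.dvd_or_dvd (Dvd.intro u hgv.symm)).resolve_left hfg
  refine ⟨w, ?_, by simp only [LinearMap.mulLeft_apply, ← hgv]; ring⟩
  rw [SetLike.mem_coe, mem_restrictTotalDegree] at hv ⊢
  rcases eq_or_ne w 0 with rfl | hw
  · simp
  · rw [totalDegree_mul_of_isDomain hf.ne_zero hw] at hv
    omega

theorem exists_eval_ne_zero_and_eval_eq_zero {σ : Type*} (Z : Finset (σ → A)) (z : σ → A) :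
    ∃ L : MvPolynomial σ A, L.totalDegree ≤ Z.card ∧ eval z L ≠ 0 ∧
      ∀ w ∈ Z, w ≠ z → eval w L = 0 := by
  have hcoord : ∀ w : σ → A, ∃ l : MvPolynomial σ A,
      l.totalDegree ≤ 1 ∧ eval z l ≠ 0 ∧ (w ≠ z → eval w l = 0) := by
    intro w
    by_cases hw : w = z
    · exact ⟨1, by simp, by simp, fun h => absurd hw h⟩
    · obtain ⟨i, hi⟩ := Function.ne_iff.1 hw
      refine ⟨X i - C (w i), (totalDegree_sub _ _).trans (by simp), ?_, by simp⟩
      simpa using sub_ne_zero.2 hi.symm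
  choose l hdeg hz hvanish using hcoord
  refine ⟨∏ w ∈ Z, l w, ?_, ?_, fun w hw hwz => ?_⟩
  · refine (totalDegree_finsetProd _ _).trans ((Finset.sum_le_card_nsmul _ _ 1 ?_).trans (by simp))
    exact fun w _ => hdeg w
  · rw [map_prod]
    exact Finset.prod_ne_zero_iff.2 fun w _ => hz w
  · rw [map_prod]
    exact Finset.prod_eq_zero hw (hvanish w hwz)

theorem exists_interpolation_submodule {σ : Type*} (Z : Finset (σ → A)) :
    ∃ T : Submodule A (MvPolynomial σ A), Module.Finite A T ∧
      T ≤ restrictTotalDegree σ A Z.card ∧ Module.finrank A T = Z.card ∧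
      ∀ f ∈ T, (∀ z ∈ Z, eval z f = 0) → f = 0 := by
  choose L hdeg hself hother using exists_eval_ne_zero_and_eval_eq_zero Z
  have hcoeff : ∀ c : Z → A, (∀ z ∈ Z, eval z (∑ w : Z, c w • L w) = 0) → c = 0 := by
    intro c hc
    ext z
    have hz := hc z z.2
    rw [map_sum, Finset.sum_eq_single z, smul_eval] at hz
    · exact (mul_eq_zero.1 hz).resolve_right (hself z)
    · intro w _ hwz
      rw [smul_eval, hother w z z.2 fun h => hwz (Subtype.ext h.symm), mul_zero]
    · simp
  have hindep : LinearIndependent A fun z : Z => L z :=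
    Fintype.linearIndependent_iff.2 fun c hc =>
      congrFun (hcoeff c fun z _ => by rw [hc, map_zero])
  refine ⟨Submodule.span A (Set.range fun z : Z => L z),
    Module.Finite.span_of_finite A (Set.finite_range _), ?_, ?_, ?_⟩
  · rw [Submodule.span_le]
    rintro _ ⟨z, rfl⟩
    exact (mem_restrictTotalDegree _ _ _).2 (hdeg z)
  · rw [finrank_span_eq_card hindep, Fintype.card_coe]
  · intro f hf hvanish
    obtain ⟨c, rfl⟩ := (Submodule.mem_span_range_iff_exists_fun A).1 hf
    simp [hcoeff c hvanish]

theorem finrank_sup_add_finrank_inf {M : Type*} [AddCommGroup M] [Module A M]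
    (S T : Submodule A M) [Module.Finite A S] [Module.Finite A T] :
    Module.finrank A (S ⊔ T : Submodule A M) + Module.finrank A (S ⊓ T : Submodule A M) =
      Module.finrank A S + Module.finrank A T := by
  have hinf : Module.rank A (S ⊓ T : Submodule A M) < Cardinal.aleph0 :=
    (Submodule.rank_mono inf_le_left).trans_lt (Module.rank_lt_aleph0 A S)
  have h := congrArg Cardinal.toNat (Submodule.rank_sup_add_rank_inf_eq S T)
  rwa [Cardinal.toNat_add (Module.rank_lt_aleph0 _ _) hinf,
    Cardinal.toNat_add (Module.rank_lt_aleph0 _ _) (Module.rank_lt_aleph0 _ _)] at h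

/-- The multiples of `f` and of `g` of degree at most `|Z| + deg f + deg g` span a space of
codimension at most `deg f * deg g`, which meets trivially the `|Z|`-dimensional space of
interpolating polynomials at the points of `Z`. -/
theorem card_common_zeros_le {f g : MvPolynomial (Fin 2) A} (hf : Prime f) (hfg : ¬ f ∣ g)
    (Z : Finset (Fin 2 → A)) (hZf : ∀ z ∈ Z, eval z f = 0) (hZg : ∀ z ∈ Z, eval z g = 0) :
    Z.card ≤ f.totalDegree * g.totalDegree := by
  have hg : g ≠ 0 := fun h => hfg (h ▸ dvd_zero f)
  set d := f.totalDegree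
  set e := g.totalDegree
  set N := Z.card
  obtain ⟨T, hTfin, hTdeg, hTrank, hT⟩ := exists_interpolation_submodule Z
  set S := boundedMultiples f (N + e) ⊔ boundedMultiples g (N + d)
  have hST : S ⊓ T = ⊥ := by
    rw [eq_bot_iff]
    rintro s ⟨hs, hsT⟩
    obtain ⟨a, ha, b, hb, rfl⟩ := Submodule.mem_sup.1 hs
    refine hT _ hsT fun z hz => ?_
    rw [map_add, eval_eq_zero_of_mem_boundedMultiples ha (hZf z hz),
      eval_eq_zero_of_mem_boundedMultiples hb (hZg z hz), add_zero]
  have hle : S ⊔ T ≤ restrictTotalDegree (Fin 2) A (N + d + e) := by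
    refine sup_le (sup_le (boundedMultiples_le (by omega)) (boundedMultiples_le (by omega)))
      (hTdeg.trans fun u hu => ?_)
    rw [mem_restrictTotalDegree] at hu ⊢
    omega
  have hsum := finrank_sup_add_finrank_inf S T
  have hS := finrank_sup_add_finrank_inf (boundedMultiples f (N + e)) (boundedMultiples g (N + d))
  have hinf := Submodule.finrank_mono (boundedMultiples_inf_le hf hfg (N + e) N)
  have hambient := Submodule.finrank_mono hle
  have htriangle : ∀ k : ℕ, 2 * (k + 2).choose 2 = (k + 1) * (k + 2) := by
    intro k
    rw [Nat.choose_two_right, Nat.mul_div_cancel' (Nat.even_mul_pred_self _).two_dvd]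
    exact mul_comm _ _
  rw [hST, finrank_bot, hTrank] at hsum
  rw [finrank_boundedMultiples hf.ne_zero, finrank_boundedMultiples hg, Fintype.card_fin] at hS
  rw [finrank_boundedMultiples (mul_ne_zero hf.ne_zero hg), Fintype.card_fin] at hinf
  rw [finrank_restrictTotalDegree, Fintype.card_fin] at hambient
  nlinarith [htriangle (N + e), htriangle (N + d), htriangle N, htriangle (N + d + e)]

end Bezout

/-! ### Polynomials in three variables and the lines of two rulings -/

section Surface
open MvPolynomial

/-- The index type of the variables `X`, `Y`, `Z` of three-space. It is an `Option` so that
`optionEquivRight` turns a polynomial into one in `X`, `Z` with coefficients in `K[Y]`. -/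
abbrev V3 := Option (Fin 2)

/-- The index of `X`. -/
abbrev xVar : V3 := some 0

/-- The index of `Y`. -/
abbrev yVar : V3 := none

/-- The index of `Z`. -/
abbrev zVar : V3 := some 1

/-- The assignment of values to the variables `X`, `Y`, `Z`. -/
def pt3 {S : Type*} (x y z : S) : V3 → S := fun i => i.elim y ![x, z]

section
variable {S : Type*} (x y z : S)

@[simp] theorem pt3_xVar : pt3 x y z xVar = x := rfl
@[simp] theorem pt3_yVar : pt3 x y z yVar = y := rfl
@[simp] theorem pt3_zVar : pt3 x y z zVar = z := rfl

end

theorem forall_V3 {q : V3 → Prop} : (∀ i, q i) ↔ q yVar ∧ q xVar ∧ q zVar := by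
  rw [Option.forall, Fin.forall_fin_two]

theorem natDegree_aeval_le {σ R S : Type*} [CommRing R] [CommRing S] [Algebra R S]
    {v : σ → Polynomial S} (hv : ∀ i, (v i).natDegree ≤ 1) (g : MvPolynomial σ R) :
    (aeval v g).natDegree ≤ g.totalDegree := by
  have hmap : (map (algebraMap R S) g).totalDegree ≤ g.totalDegree :=
    Finset.sup_mono (support_map_subset _ _)
  simpa only [aeval_map_algebraMap, mul_one] using aeval_natDegree_le _ hmap v hv

theorem eval_aeval {σ R S : Type*} [CommRing R] [CommRing S] [Algebra R S]
    (v : σ → Polynomial S) (t : S) (g : MvPolynomial σ R) :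
    (aeval v g).eval t = aeval (fun i => (v i).eval t) g :=
  comp_aeval_apply v ((Polynomial.aeval t).restrictScalars R) g

theorem totalDegree_aeval_le {σ τ R S : Type*} [CommRing R] [CommRing S] [Algebra R S]
    {v : σ → MvPolynomial τ S} (hv : ∀ i, (v i).totalDegree ≤ 1) (g : MvPolynomial σ R) :
    (aeval v g).totalDegree ≤ g.totalDegree := by
  rw [aeval_def, eval₂_eq]
  refine totalDegree_finsetSum_le fun m hm => (totalDegree_mul _ _).trans ?_
  rw [MvPolynomial.algebraMap_apply, totalDegree_C, zero_add]
  refine (totalDegree_finsetProd _ _).trans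
    ((Finset.sum_le_sum fun i _ => ?_).trans (le_totalDegree hm))
  exact (totalDegree_pow _ _).trans ((Nat.mul_le_mul_left _ (hv i)).trans_eq (mul_one _))

variable {K : Type*} [Field K]

/-- The restriction of a polynomial to the red line `Y = y`, `Z = aX - c`. -/
def redRestrict (a y c : K) : MvPolynomial V3 K →ₐ[K] Polynomial K :=
  aeval (pt3 Polynomial.X (Polynomial.C y) (Polynomial.C a * Polynomial.X - Polynomial.C c))

/-- The restriction of a polynomial to the blue line `X = y`, `Z = aY - c`. -/
def blueRestrict (a y c : K) : MvPolynomial V3 K →ₐ[K] Polynomial K :=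
  aeval (pt3 (Polynomial.C y) Polynomial.X (Polynomial.C a * Polynomial.X - Polynomial.C c))

theorem natDegree_C_mul_X_sub_C_le (a c : K) :
    (Polynomial.C a * Polynomial.X - Polynomial.C c).natDegree ≤ 1 := by
  rw [Polynomial.natDegree_sub_C]
  exact (Polynomial.natDegree_C_mul_le _ _).trans Polynomial.natDegree_X_le

theorem natDegree_redRestrict_le (a y c : K) (g : MvPolynomial V3 K) :
    (redRestrict a y c g).natDegree ≤ g.totalDegree :=
  natDegree_aeval_le (forall_V3.2 ⟨by simp, by simp, natDegree_C_mul_X_sub_C_le a c⟩) g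

theorem natDegree_blueRestrict_le (a y c : K) (g : MvPolynomial V3 K) :
    (blueRestrict a y c g).natDegree ≤ g.totalDegree :=
  natDegree_aeval_le (forall_V3.2 ⟨by simp, by simp, natDegree_C_mul_X_sub_C_le a c⟩) g

theorem eval_redRestrict (a y c x : K) (g : MvPolynomial V3 K) :
    (redRestrict a y c g).eval x = eval (pt3 x y (a * x - c)) g := by
  rw [redRestrict, eval_aeval, aeval_eq_eval]
  congr 2
  exact funext (forall_V3.2 (by simp))

theorem eval_blueRestrict (a y c x : K) (g : MvPolynomial V3 K) :
    (blueRestrict a y c g).eval x = eval (pt3 y x (a * x - c)) g := by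
  rw [blueRestrict, eval_aeval, aeval_eq_eval]
  congr 2
  exact funext (forall_V3.2 (by simp))

theorem totalDegree_optionEquivRight_le (g : MvPolynomial V3 K) :
    (optionEquivRight K (Fin 2) g).totalDegree ≤ g.totalDegree := by
  rw [optionEquivRight_apply]
  exact totalDegree_aeval_le (forall_V3.2 (by simp)) g

theorem eval_optionEquivRight (a y c : K) (g : MvPolynomial V3 K) :
    eval ![Polynomial.C y, Polynomial.C a * Polynomial.X - Polynomial.C c]
      (optionEquivRight K (Fin 2) g) = blueRestrict a y c g := by
  rw [optionEquivRight_apply, ← aeval_eq_eval]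
  refine (comp_aeval_apply _ ((aeval (R := Polynomial K) _).restrictScalars K) g).trans ?_
  congr 2
  exact funext (forall_V3.2 (by simp))

/-- Over the coefficient ring `K[Y]`, blue lines are points of the `(X, Z)`-plane. -/
theorem card_common_blue_lines_le {ι : Type*} {a y c : ι → K} (hy : Function.Injective y)
    {g h : MvPolynomial V3 K} (hg : Irreducible g) (hgh : ¬ g ∣ h) (s : Finset ι)
    (hsg : ∀ j ∈ s, blueRestrict (a j) (y j) (c j) g = 0)
    (hsh : ∀ j ∈ s, blueRestrict (a j) (y j) (c j) h = 0) :
    s.card ≤ g.totalDegree * h.totalDegree := by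
  set e := optionEquivRight K (Fin 2)
  let z : ι → Fin 2 → Polynomial K := fun j =>
    ![Polynomial.C (y j), Polynomial.C (a j) * Polynomial.X - Polynomial.C (c j)]
  have hz : Function.Injective z := fun i j hij =>
    hy (Polynomial.C_injective (by simpa [z] using congrFun hij 0))
  have hprime : Prime (e g) := (MulEquiv.prime_iff e.toMulEquiv).2 hg.prime
  have hndvd : ¬ e g ∣ e h := fun hd => hgh ((map_dvd_iff e.toMulEquiv).1 hd)
  rw [← Finset.card_image_of_injective s hz]
  refine (card_common_zeros_le hprime hndvd _ ?_ ?_).trans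
    (Nat.mul_le_mul (totalDegree_optionEquivRight_le g) (totalDegree_optionEquivRight_le h))
  all_goals refine Finset.forall_mem_image.2 fun j hj => (eval_optionEquivRight _ _ _ _).trans ?_
  exacts [hsg j hj, hsh j hj]

end Surface

section Flecnodal
open MvPolynomial

variable {K : Type*} [CommRing K]

theorem totalDegree_pderiv_add_one_le {σ : Type*} {g : MvPolynomial σ K} {i : σ}
    (h : pderiv i g ≠ 0) : (pderiv i g).totalDegree + 1 ≤ g.totalDegree := by
  obtain ⟨m, hm, hdeg⟩ := Finset.exists_mem_eq_sup (pderiv i g).support (support_nonempty.2 h)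
    (fun s => s.sum fun _ e => e)
  rw [totalDegree, hdeg]
  rw [mem_support_iff, coeff_pderiv] at hm
  have hle := le_totalDegree (mem_support_iff.2 (left_ne_zero_of_mul hm))
  rwa [Finsupp.sum_add_index' (by simp) (by simp), Finsupp.sum_single_index rfl] at hle

theorem totalDegree_pderiv_le {σ : Type*} (g : MvPolynomial σ K) (i : σ) :
    (pderiv i g).totalDegree ≤ g.totalDegree := by
  by_cases h : pderiv i g = 0
  · simp [h]
  · exact Nat.le_of_succ_le (totalDegree_pderiv_add_one_le h)

theorem pderiv_comm {σ : Type*} (i j : σ) (g : MvPolynomial σ K) :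
    pderiv i (pderiv j g) = pderiv j (pderiv i g) := by
  have hbracket : ⁅pderiv (R := K) i, pderiv (R := K) j⁆ = 0 := by
    ext k
    simp [Derivation.commutator_apply, pderiv_X, Pi.single_apply, apply_ite]
  rw [← sub_eq_zero, ← Derivation.commutator_apply, hbracket, Derivation.zero_apply]

theorem derivation_aeval {σ B : Type*} [CommRing B] [Algebra K B] {D : Derivation K B B}
    {D' : Derivation K (MvPolynomial σ K) (MvPolynomial σ K)} {v : σ → B}
    (hv : ∀ i, D (v i) = aeval v (D' (X i))) (g : MvPolynomial σ K) :
    D (aeval v g) = aeval v (D' g) := by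
  induction g using MvPolynomial.induction_on with
  | C k => simp
  | add q r hq hr => simp only [map_add, hq, hr]
  | mul_X q i hq => simp only [map_mul, map_add, Derivation.leibniz, smul_eq_mul, aeval_X, hv, hq]

/-- The derivation `∂ᵢ + l ∂_Z`, which is differentiation in the `i`-th direction along a graph
`Z = ζ` with `∂ᵢ ζ = l`. -/
def tiltedDeriv (i : V3) (l : MvPolynomial V3 K) :
    Derivation K (MvPolynomial V3 K) (MvPolynomial V3 K) :=
  pderiv i + l • pderiv zVar

theorem tiltedDeriv_apply (i : V3) (l g : MvPolynomial V3 K) :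
    tiltedDeriv i l g = pderiv i g + l * pderiv zVar g := rfl

/-- The flecnodal expression in the direction of the variables `i` and `Z`: it vanishes on every
line of the surface `g = 0` along which the remaining variable is constant. -/
def flecnodal (i : V3) (g : MvPolynomial V3 K) : MvPolynomial V3 K :=
  pderiv i (pderiv i g) * pderiv zVar g ^ 2
    - 2 * (pderiv i g * pderiv zVar g * pderiv zVar (pderiv i g))
    + pderiv i g ^ 2 * pderiv zVar (pderiv zVar g)

theorem totalDegree_flecnodal_le (i : V3) (g : MvPolynomial V3 K) :
    (flecnodal i g).totalDegree ≤ 3 * g.totalDegree := by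
  have hi := totalDegree_pderiv_le g i
  have hz := totalDegree_pderiv_le g zVar
  have hii := (totalDegree_pderiv_le (pderiv i g) i).trans hi
  have hzi := (totalDegree_pderiv_le (pderiv i g) zVar).trans hi
  have hzz := (totalDegree_pderiv_le (pderiv zVar g) zVar).trans hz
  have htwo : (2 : MvPolynomial V3 K).totalDegree = 0 := totalDegree_C (2 : K)
  refine (totalDegree_add _ _).trans (max_le ((totalDegree_sub _ _).trans (max_le ?_ ?_)) ?_)
  · grind [totalDegree_mul (pderiv i (pderiv i g)) (pderiv zVar g ^ 2),
      totalDegree_pow (pderiv zVar g) 2]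
  · grind [totalDegree_mul 2 (pderiv i g * pderiv zVar g * pderiv zVar (pderiv i g)),
      totalDegree_mul (pderiv i g * pderiv zVar g) (pderiv zVar (pderiv i g)),
      totalDegree_mul (pderiv i g) (pderiv zVar g)]
  · grind [totalDegree_mul (pderiv i g ^ 2) (pderiv zVar (pderiv zVar g)),
      totalDegree_pow (pderiv i g) 2]

theorem exists_sq_mul_tiltedDeriv_tiltedDeriv_eq {i : V3} {l : MvPolynomial V3 K}
    (hl : tiltedDeriv i l l = 0) (g : MvPolynomial V3 K) :
    ∃ U, pderiv zVar g ^ 2 * tiltedDeriv i l (tiltedDeriv i l g) =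
      flecnodal i g + tiltedDeriv i l g * U := by
  have hsecond : tiltedDeriv i l (tiltedDeriv i l g) = pderiv i (pderiv i g) +
      2 * (l * pderiv zVar (pderiv i g)) + l ^ 2 * pderiv zVar (pderiv zVar g) := by
    rw [tiltedDeriv_apply i l g, map_add, Derivation.leibniz, hl, smul_zero, smul_eq_mul,
      tiltedDeriv_apply, tiltedDeriv_apply, pderiv_comm i zVar g]
    ring
  refine ⟨2 * pderiv zVar g * pderiv zVar (pderiv i g) +
    (l * pderiv zVar g - pderiv i g) * pderiv zVar (pderiv zVar g), ?_⟩
  rw [hsecond, tiltedDeriv_apply, flecnodal]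
  ring

end Flecnodal

section FlecnodalLines
open MvPolynomial

variable {K : Type*} [Field K]

theorem derivative_redRestrict (a y c : K) (g : MvPolynomial V3 K) :
    Polynomial.derivative (redRestrict a y c g) =
      redRestrict a y c (tiltedDeriv xVar (C a) g) := by
  refine derivation_aeval (D := Polynomial.derivative') (forall_V3.2 ?_) g
  simp [tiltedDeriv_apply, pderiv_X, Polynomial.algebraMap_eq]

/-- The slope may vary with `X`, as `X` is constant on the line. -/
theorem derivative_blueRestrict (a y c γ : K) (g : MvPolynomial V3 K) :
    Polynomial.derivative (blueRestrict a y c g) =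
      blueRestrict a y c (tiltedDeriv yVar (C a + C γ * (X xVar - C y)) g) := by
  refine derivation_aeval (D := Polynomial.derivative') (forall_V3.2 ?_) g
  simp [tiltedDeriv_apply, pderiv_X, Polynomial.algebraMap_eq]

theorem flecnodal_eq_zero_of_derivative {φ : MvPolynomial V3 K →ₐ[K] Polynomial K} {i : V3}
    {l g : MvPolynomial V3 K} (hl : tiltedDeriv i l l = 0)
    (hφ : ∀ q, Polynomial.derivative (φ q) = φ (tiltedDeriv i l q)) (hg : φ g = 0) :
    φ (flecnodal i g) = 0 := by
  obtain ⟨U, hU⟩ := exists_sq_mul_tiltedDeriv_tiltedDeriv_eq hl g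
  have hfirst : φ (tiltedDeriv i l g) = 0 := by rw [← hφ, hg, Polynomial.derivative_zero]
  have hsecond : φ (tiltedDeriv i l (tiltedDeriv i l g)) = 0 := by
    rw [← hφ, hfirst, Polynomial.derivative_zero]
  simpa only [map_mul, map_add, hfirst, hsecond, mul_zero, zero_mul, add_zero, eq_comm]
    using congrArg φ hU

theorem redRestrict_flecnodal_eq_zero {a y c : K} {g : MvPolynomial V3 K}
    (hg : redRestrict a y c g = 0) : redRestrict a y c (flecnodal xVar g) = 0 :=
  flecnodal_eq_zero_of_derivative (by simp) (derivative_redRestrict a y c) hg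

theorem blueRestrict_flecnodal_eq_zero {a y c : K} {g : MvPolynomial V3 K}
    (hg : blueRestrict a y c g = 0) : blueRestrict a y c (flecnodal yVar g) = 0 :=
  flecnodal_eq_zero_of_derivative (by simp) (derivative_blueRestrict a y c 0) hg

end FlecnodalLines

/-! ### Doubly ruled surfaces -/

section DoublyRuled
open MvPolynomial

theorem natCast_ne_zero_of_injective {R S : Type*} [Semiring R] [Semiring S] {p : ℕ}
    {f : R →+* S} (hf : Function.Injective f) (hp : ∀ n : ℕ, n ≠ 0 → n < p → (n : R) ≠ 0) :
    ∀ n : ℕ, n ≠ 0 → n < p → (n : S) ≠ 0 := fun n hn hnp => by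
  rw [← map_natCast f]
  exact (map_ne_zero_iff f hf).2 (hp n hn hnp)

/-- At a zero of `η` of order `n ≥ 2`, the left-hand side of the differential equation has order
`n - 2` and the right-hand side has order at least `n - 1`. -/
theorem eq_zero_of_mul_derivative_derivative_eq {A : Type*} [CommRing A] [IsDomain A] {p : ℕ}
    (hp : ∀ n : ℕ, n ≠ 0 → n < p → (n : A) ≠ 0) {η a b c : Polynomial A} {t : A}
    (hode : a * η.derivative.derivative = η * b + η.derivative * c) (ha : a.eval t ≠ 0)
    (hη : η.eval t = 0) (hη' : η.derivative.eval t = 0) (hdeg : η.natDegree < p) : η = 0 := by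
  by_contra hne
  set π : Polynomial A := Polynomial.X - Polynomial.C t
  set n := η.rootMultiplicity t
  have hn : 1 < n := (Polynomial.one_lt_rootMultiplicity_iff_isRoot hne).2 ⟨hη, hη'⟩
  have hnp : n < p := by
    have hle := Polynomial.natDegree_le_of_dvd (η.pow_rootMultiplicity_dvd t) hne
    rw [Polynomial.natDegree_pow, Polynomial.natDegree_X_sub_C, mul_one] at hle
    exact hle.trans_lt hdeg
  have hfirst : η.derivative.rootMultiplicity t = n - 1 :=
    Polynomial.derivative_rootMultiplicity_of_root_of_mem_nonZeroDivisors hη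
      (mem_nonZeroDivisors_of_ne_zero (hp n (by omega) hnp))
  have hη'ne : η.derivative ≠ 0 := fun h => by
    rw [h, Polynomial.rootMultiplicity_zero] at hfirst
    omega
  have hsecond : η.derivative.derivative.rootMultiplicity t = n - 1 - 1 := by
    rw [← hfirst]
    refine Polynomial.derivative_rootMultiplicity_of_root_of_mem_nonZeroDivisors hη'
      (mem_nonZeroDivisors_of_ne_zero ?_)
    rw [hfirst]
    exact hp _ (by omega) (by omega)
  have hdvd : π ^ (n - 1) ∣ η.derivative.derivative := by
    refine (Polynomial.prime_X_sub_C t).pow_dvd_of_dvd_mul_left _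
      (mt Polynomial.dvd_iff_isRoot.1 ha) ?_
    rw [hode]
    exact dvd_add (((pow_dvd_pow _ (by omega)).trans (η.pow_rootMultiplicity_dvd t)).mul_right _)
      ((hfirst ▸ η.derivative.pow_rootMultiplicity_dvd t).mul_right _)
  have hη'' : η.derivative.derivative.IsRoot t :=
    Polynomial.dvd_iff_isRoot.1 ((dvd_pow_self _ (by omega)).trans hdvd)
  have hn' := (Polynomial.one_lt_rootMultiplicity_iff_isRoot hη'ne).2 ⟨hη', hη''⟩
  have hη''ne : η.derivative.derivative ≠ 0 := fun h => by
    rw [h, Polynomial.rootMultiplicity_zero] at hsecond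
    omega
  have := (Polynomial.le_rootMultiplicity_iff hη''ne).2 hdvd
  omega

theorem X_sub_dvd_of_aeval_update_eq_zero {σ R : Type*} [CommRing R] [DecidableEq σ] {i : σ}
    {e g : MvPolynomial σ R} (h : aeval (Function.update X i e) g = 0) : X i - e ∣ g := by
  set π := Ideal.Quotient.mkₐ R (Ideal.span {X i - e})
  have hi : π (X i) = π e := Ideal.Quotient.eq.2 (Ideal.mem_span_singleton_self _)
  have hcomp : (fun j => π (Function.update X i e j)) = fun j => π (X j) := by
    ext j
    rcases eq_or_ne j i with rfl | hj
    · rw [Function.update_self, hi]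
    · rw [Function.update_of_ne hj]
  have hg : π g = 0 := by
    rw [← aeval_X_left_apply g, comp_aeval_apply, ← hcomp, ← comp_aeval_apply, h, map_zero]
  exact Ideal.mem_span_singleton.1 (Ideal.Quotient.eq_zero_iff_mem.1 hg)

variable {K : Type*} [Field K]

/-- The polynomial `Z - (γXY + αX + βY + δ)`, where `τ = (γ, α, β, δ)`. -/
def bilinearGraph (τ : K × K × K × K) : MvPolynomial V3 K :=
  X zVar - (C τ.1 * X xVar * X yVar + C τ.2.1 * X xVar + C τ.2.2.1 * X yVar + C τ.2.2.2)

/-- The restriction of a polynomial to the graph `Z = uY - v + (X - s)(α + γY)`, which contains the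
blue line `X = s`, `Z = uY - v`. The result is a polynomial in `X` over `K[Y]`. -/
def graphRestrict (u s v α γ : K) : MvPolynomial V3 K →ₐ[K] Polynomial (Polynomial K) :=
  aeval (pt3 Polynomial.X (Polynomial.C Polynomial.X)
    (Polynomial.C (Polynomial.C u * Polynomial.X - Polynomial.C v) +
      (Polynomial.X - Polynomial.C (Polynomial.C s)) *
        Polynomial.C (Polynomial.C α + Polynomial.C γ * Polynomial.X)))

section
variable (u s v α γ : K) (g : MvPolynomial V3 K)

theorem eval_graphRestrict :
    (graphRestrict u s v α γ g).eval (Polynomial.C s) = blueRestrict u s v g := by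
  rw [graphRestrict, eval_aeval, blueRestrict]
  congr 2
  exact funext (forall_V3.2 (by simp))

theorem derivative_graphRestrict : Polynomial.derivative (graphRestrict u s v α γ g) =
    graphRestrict u s v α γ (tiltedDeriv xVar (C α + C γ * X yVar) g) := by
  let D : Derivation K (Polynomial (Polynomial K)) (Polynomial (Polynomial K)) :=
    Polynomial.derivative'.restrictScalars K
  refine derivation_aeval (D := D) (forall_V3.2 ?_) g
  simp [D, tiltedDeriv_apply, pderiv_X, Polynomial.algebraMap_apply, Polynomial.algebraMap_eq]

theorem natDegree_graphRestrict_le : (graphRestrict u s v α γ g).natDegree ≤ g.totalDegree := by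
  refine natDegree_aeval_le (forall_V3.2 ⟨by simp, by simp, ?_⟩) g
  simp only [pt3_zVar]
  rw [Polynomial.natDegree_C_add]
  exact (Polynomial.natDegree_mul_C_le _ _).trans (by simp)

variable {u s v α γ g}

theorem bilinearGraph_dvd_of_graphRestrict_eq_zero (h : graphRestrict u s v α γ g = 0) :
    bilinearGraph (γ, α, u - s * γ, -v - s * α) ∣ g := by
  set e : MvPolynomial V3 K := C u * X yVar - C v + (X xVar - C s) * (C α + C γ * X yVar) with he
  have hback : aeval (Function.update X zVar e) g = Polynomial.aevalAeval (X yVar) (X xVar)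
      (graphRestrict u s v α γ g) := by
    rw [graphRestrict, comp_aeval_apply]
    congr 2
    exact funext (forall_V3.2 (by simp [he, MvPolynomial.algebraMap_eq]))
  have hgraph : bilinearGraph (γ, α, u - s * γ, -v - s * α) = X zVar - e := by
    simp only [bilinearGraph, he, map_sub, map_mul, map_neg]
    ring
  rw [hgraph]
  exact X_sub_dvd_of_aeval_update_eq_zero (by rw [hback, h, map_zero])

end

section
variable {u s v α γ y₀ : K} {g : MvPolynomial V3 K}

theorem tiltedDeriv_yVar_tiltedDeriv_xVar (q : MvPolynomial V3 K) :
    tiltedDeriv yVar (C u + C γ * (X xVar - C s)) (tiltedDeriv xVar (C α + C γ * X yVar) q) =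
      tiltedDeriv xVar (C α + C γ * X yVar)
        (tiltedDeriv yVar (C u + C γ * (X xVar - C s)) q) := by
  have hbracket : ⁅tiltedDeriv yVar (C u + C γ * (X xVar - C s)),
      tiltedDeriv xVar (C α + C γ * X yVar)⁆ = 0 := by
    refine MvPolynomial.derivation_ext (forall_V3.2 ?_)
    simp [Derivation.commutator_apply, tiltedDeriv_apply, pderiv_X]
  rw [← sub_eq_zero, ← Derivation.commutator_apply, hbracket, Derivation.zero_apply]

/-- The equation arises by differentiating `exists_sq_mul_tiltedDeriv_tiltedDeriv_eq` in the
direction across the blue line. -/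
theorem exists_ode_blueRestrict (hb : g ∣ flecnodal yVar g) (hg : blueRestrict u s v g = 0)
    (α γ : K) : ∃ b c, blueRestrict u s v (pderiv zVar g) ^ 2 * Polynomial.derivative
        (Polynomial.derivative (blueRestrict u s v (tiltedDeriv xVar (C α + C γ * X yVar) g))) =
      blueRestrict u s v (tiltedDeriv xVar (C α + C γ * X yVar) g) * b + Polynomial.derivative
        (blueRestrict u s v (tiltedDeriv xVar (C α + C γ * X yVar) g)) * c := by
  set ψ := blueRestrict u s v
  set L := tiltedDeriv xVar (C α + C γ * X yVar)
  set M := tiltedDeriv yVar (C u + C γ * (X xVar - C s))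
  have hψ (q) : Polynomial.derivative (ψ q) = ψ (M q) := derivative_blueRestrict u s v γ q
  have hML (q) : M (L q) = L (M q) := tiltedDeriv_yVar_tiltedDeriv_xVar q
  have hfirst : ψ (M g) = 0 := by rw [← hψ, hg, Polynomial.derivative_zero]
  have hsecond : ψ (M (M g)) = 0 := by rw [← hψ, hfirst, Polynomial.derivative_zero]
  obtain ⟨w, hw⟩ := hb
  obtain ⟨U, hU⟩ := exists_sq_mul_tiltedDeriv_tiltedDeriv_eq
    (i := yVar) (l := C u + C γ * (X xVar - C s)) (by simp [tiltedDeriv_apply, pderiv_X]) g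
  have hLU := congrArg (fun q => ψ (L q)) (hU.trans (congrArg (· + M g * U) hw))
  simp only [Derivation.leibniz, map_add, smul_eq_mul, map_mul, hg, zero_mul] at hLU
  refine ⟨ψ w, ψ U, ?_⟩
  rw [hψ, hψ, hML, hML, ← map_pow]
  linear_combination hLU - ψ (L (pderiv zVar g ^ 2)) * hsecond + ψ (L U) * hfirst

theorem exists_eval_add_linear_mul_eq_zero (F : Polynomial K) {φ : Polynomial K}
    (hφ : φ.eval y₀ ≠ 0) : ∃ α γ : K,
      (F + (Polynomial.C α + Polynomial.C γ * Polynomial.X) * φ).eval y₀ = 0 ∧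
      (F + (Polynomial.C α + Polynomial.C γ * Polynomial.X) * φ).derivative.eval y₀ = 0 := by
  set κ := -F.eval y₀ / φ.eval y₀ with hκ
  set γ := -(F.derivative.eval y₀ + φ.derivative.eval y₀ * κ) / φ.eval y₀ with hγ
  refine ⟨κ - γ * y₀, γ, ?_, ?_⟩
  · simp [hκ, hφ]
  · simp only [Polynomial.derivative_add, Polynomial.derivative_mul, Polynomial.derivative_C,
      Polynomial.derivative_X, Polynomial.eval_add, Polynomial.eval_mul, Polynomial.eval_C,
      Polynomial.eval_X, zero_mul, zero_add, mul_one, sub_add_cancel]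
    rw [hγ, div_mul_cancel₀ _ hφ]
    ring

theorem blueRestrict_tiltedDeriv_xVar : blueRestrict u s v
      (tiltedDeriv xVar (C α + C γ * X yVar) g) = blueRestrict u s v (pderiv xVar g) +
      (Polynomial.C α + Polynomial.C γ * Polynomial.X) * blueRestrict u s v (pderiv zVar g) := by
  rw [tiltedDeriv_apply, map_add, map_mul]
  congr 2
  simp [blueRestrict, Polynomial.algebraMap_eq]

theorem natDegree_blueRestrict_tiltedDeriv_xVar_le : (blueRestrict u s v
    (tiltedDeriv xVar (C α + C γ * X yVar) g)).natDegree ≤ g.totalDegree + 1 := by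
  have hl : (C α + C γ * X yVar : MvPolynomial V3 K).totalDegree ≤ 1 := by
    refine (totalDegree_add _ _).trans (max_le (by simp) ((totalDegree_mul _ _).trans (by simp)))
  refine (natDegree_blueRestrict_le u s v _).trans ?_
  rw [tiltedDeriv_apply]
  refine (totalDegree_add _ _).trans (max_le ?_ ((totalDegree_mul _ _).trans ?_))
  · exact (totalDegree_pderiv_le g xVar).trans (Nat.le_succ _)
  · have := totalDegree_pderiv_le g zVar
    omega

theorem exists_ode_graphRestrict (hr : g ∣ flecnodal xVar g) : ∃ b c,
    graphRestrict u s v α γ (pderiv zVar g) ^ 2 *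
        Polynomial.derivative (Polynomial.derivative (graphRestrict u s v α γ g)) =
      graphRestrict u s v α γ g * b + Polynomial.derivative (graphRestrict u s v α γ g) * c := by
  obtain ⟨w, hw⟩ := hr
  obtain ⟨U, hU⟩ := exists_sq_mul_tiltedDeriv_tiltedDeriv_eq
    (i := xVar) (l := C α + C γ * X yVar) (by simp [tiltedDeriv_apply, pderiv_X]) g
  refine ⟨graphRestrict u s v α γ w, graphRestrict u s v α γ U, ?_⟩
  rw [derivative_graphRestrict, derivative_graphRestrict, ← map_pow, ← map_mul, hU, hw, map_add,
    map_mul, map_mul]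

theorem not_isUnit_bilinearGraph (τ : K × K × K × K) : ¬ IsUnit (bilinearGraph τ) := fun h => by
  have := h.map (eval (pt3 0 0 τ.2.2.2))
  simp [bilinearGraph] at this

/-- There is a unique bilinear graph through the blue line which agrees with the surface to second
order at the given point. The differential equations, first along the blue line and then in the
direction of `X`, show that the surface contains this graph. -/
theorem associated_bilinearGraph_of_dvd_flecnodal {p : ℕ}
    (hp : ∀ n : ℕ, n ≠ 0 → n < p → (n : K) ≠ 0) (hg : Irreducible g) (hdeg : g.totalDegree + 1 < p)
    (hr : g ∣ flecnodal xVar g) (hb : g ∣ flecnodal yVar g) (hline : blueRestrict u s v g = 0)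
    (hz : (blueRestrict u s v (pderiv zVar g)).eval y₀ ≠ 0) :
    ∃ τ, Associated g (bilinearGraph τ) := by
  have hpY := natCast_ne_zero_of_injective (Polynomial.C_injective (R := K)) hp
  obtain ⟨α, γ, h₀, h₁⟩ :=
    exists_eval_add_linear_mul_eq_zero (blueRestrict u s v (pderiv xVar g)) hz
  rw [← blueRestrict_tiltedDeriv_xVar] at h₀ h₁
  obtain ⟨b, c, hode⟩ := exists_ode_blueRestrict hb hline α γ
  have hslope := eq_zero_of_mul_derivative_derivative_eq hp hode
    (by rw [Polynomial.eval_pow]; exact pow_ne_zero 2 hz) h₀ h₁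
    (natDegree_blueRestrict_tiltedDeriv_xVar_le.trans_lt hdeg)
  obtain ⟨b', c', hode'⟩ := exists_ode_graphRestrict (u := u) (s := s) (v := v) (α := α) (γ := γ) hr
  have hgraph : graphRestrict u s v α γ g = 0 := by
    refine eq_zero_of_mul_derivative_derivative_eq (t := Polynomial.C s) hpY hode' ?_ ?_ ?_
      ((natDegree_graphRestrict_le ..).trans_lt ((Nat.lt_succ_self _).trans hdeg))
    · rw [Polynomial.eval_pow, eval_graphRestrict]
      exact pow_ne_zero 2 fun h => hz (by rw [h, Polynomial.eval_zero])
    · rw [eval_graphRestrict, hline]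
    · rw [derivative_graphRestrict, eval_graphRestrict, hslope]
  exact ⟨_, (((hg.dvd_iff.1 (bilinearGraph_dvd_of_graphRestrict_eq_zero hgraph)).resolve_left
    (not_isUnit_bilinearGraph _)))⟩

end

end DoublyRuled

section Components
open MvPolynomial

theorem natCast_fin_injective {A : Type*} [Ring A] {p : ℕ}
    (hp : ∀ n : ℕ, n ≠ 0 → n < p → (n : A) ≠ 0) :
    Function.Injective fun i : Fin p => ((i : ℕ) : A) := by
  intro i j hij
  wlog hle : i ≤ j
  · exact (this hp hij.symm (le_of_not_ge hle)).symm
  by_contra hne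
  refine hp (j - i) (by omega) (by omega) ?_
  rw [Nat.cast_sub hle, sub_eq_zero]
  exact hij.symm

theorem exists_eval_ne_zero {A : Type*} [CommRing A] [IsDomain A] {p : ℕ}
    (hp : ∀ n : ℕ, n ≠ 0 → n < p → (n : A) ≠ 0) {q : Polynomial A} (hq : q ≠ 0)
    (hdeg : q.natDegree < p) : ∃ t, q.eval t ≠ 0 := by
  by_contra! h
  exact hq (Polynomial.eq_zero_of_natDegree_lt_card_of_eval_eq_zero q (natCast_fin_injective hp)
    (fun _ => h _) (by rwa [Fintype.card_fin]))

theorem eq_C_of_derivative_eq_zero {A : Type*} [CommRing A] [IsDomain A] {p : ℕ}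
    (hp : ∀ n : ℕ, n ≠ 0 → n < p → (n : A) ≠ 0) {q : Polynomial A} (hq : q.derivative = 0)
    (hdeg : q.natDegree < p) : q = Polynomial.C (q.coeff 0) := by
  refine Polynomial.eq_C_of_natDegree_eq_zero ?_
  by_contra h
  have hcoeff := congrArg (Polynomial.coeff · (q.natDegree - 1)) hq
  simp only [Polynomial.coeff_derivative, Polynomial.coeff_zero, Nat.sub_add_cancel
    (Nat.pos_of_ne_zero h)] at hcoeff
  have hcast : ((q.natDegree - 1 : ℕ) : A) + 1 = (q.natDegree : A) := by
    rw [← Nat.cast_add_one, Nat.sub_add_cancel (Nat.pos_of_ne_zero h)]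
  rw [hcast, mul_eq_zero] at hcoeff
  refine hcoeff.elim (fun h0 => h ?_) (hp _ h hdeg)
  rw [Polynomial.leadingCoeff_eq_zero.1 h0, Polynomial.natDegree_zero]

variable {K : Type*} [Field K]

/-- If `∂_Z g = 0`, then `g` does not involve `Z`, since its degree is below the characteristic. -/
theorem blueRestrict_eq_of_pderiv_eq_zero {p : ℕ} (hp : ∀ n : ℕ, n ≠ 0 → n < p → (n : K) ≠ 0)
    {g : MvPolynomial V3 K} (hdeg : g.totalDegree < p) (hz : pderiv zVar g = 0) (a a' s c c' : K) :
    blueRestrict a s c g = blueRestrict a' s c' g := by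
  have hpY := natCast_ne_zero_of_injective (Polynomial.C_injective (R := K)) hp
  set v : V3 → Polynomial (Polynomial K) :=
    pt3 (Polynomial.C (Polynomial.C s)) (Polynomial.C Polynomial.X) Polynomial.X
  let D : Derivation K (Polynomial (Polynomial K)) (Polynomial (Polynomial K)) :=
    Polynomial.derivative'.restrictScalars K
  have hderiv : Polynomial.derivative (aeval v g) = 0 := by
    refine (derivation_aeval (D := D) (D' := pderiv zVar) (forall_V3.2 ?_) g).trans
      (by rw [hz, map_zero])
    simp [D, v, pderiv_X]
  have hconst := eq_C_of_derivative_eq_zero hpY hderiv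
    ((natDegree_aeval_le (forall_V3.2 (by simp [v])) g).trans_lt hdeg)
  have hblue (b d : K) : blueRestrict b s d g = (aeval v g).coeff 0 := by
    have heval : blueRestrict b s d g =
        (aeval v g).eval (Polynomial.C b * Polynomial.X - Polynomial.C d) := by
      rw [eval_aeval, blueRestrict]
      congr 2
      exact funext (forall_V3.2 (by simp [v]))
    rw [heval, hconst, Polynomial.eval_C, Polynomial.coeff_C_zero]
  rw [hblue, hblue]

theorem totalDegree_pos_of_irreducible {σ : Type*} {g : MvPolynomial σ K} (hg : Irreducible g) :
    1 ≤ g.totalDegree := by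
  by_contra! h
  obtain ⟨k, rfl⟩ : ∃ k, g = C k := ⟨_, totalDegree_eq_zero_iff_eq_C.1 (Nat.lt_one_iff.1 h)⟩
  have hk : k ≠ 0 := fun hk => hg.ne_zero (by rw [hk, C_0])
  exact hg.not_isUnit ((isUnit_iff_ne_zero.2 hk).map C)

theorem not_dvd_pderiv {σ : Type*} {g : MvPolynomial σ K} {i : σ} (h : pderiv i g ≠ 0) :
    ¬ g ∣ pderiv i g := fun hdvd =>
  (totalDegree_pderiv_add_one_le h).not_gt
    (Nat.lt_succ_of_le (totalDegree_le_of_dvd_of_isDomain hdvd h))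

variable {ι : Type*} (a y c : ι → K)

/-- The `i`-th red line `Y = yᵢ`, `Z = aᵢX - cᵢ` lies on the surface `g = 0`. -/
def RedIn (i : ι) (g : MvPolynomial V3 K) : Prop := redRestrict (a i) (y i) (c i) g = 0

/-- The `j`-th blue line `X = yⱼ`, `Z = aⱼY - cⱼ` lies on the surface `g = 0`. -/
def BlueIn (j : ι) (g : MvPolynomial V3 K) : Prop := blueRestrict (a j) (y j) (c j) g = 0

/-- The `i`-th red line lies on the graph `Z = γXY + αX + βY + δ`, where `τ = (γ, α, β, δ)`. -/
def OnRed (τ : K × K × K × K) (i : ι) : Prop :=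
  a i = τ.1 * y i + τ.2.1 ∧ c i = -(τ.2.2.1 * y i + τ.2.2.2)

/-- The `j`-th blue line lies on the graph `Z = γXY + αX + βY + δ`, where `τ = (γ, α, β, δ)`. -/
def OnBlue (τ : K × K × K × K) (j : ι) : Prop :=
  a j = τ.1 * y j + τ.2.2.1 ∧ c j = -(τ.2.1 * y j + τ.2.2.2)

/-- The red lines of `R` on the surface `g = 0` that are related to the `b`-th blue line by `E` but
do not lie with it on any of the bilinear graphs in `Q`. -/
def stray (E : ι → ι → Prop) (R : Finset ι) (Q : Finset (K × K × K × K))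
    (g : MvPolynomial V3 K) (b : ι) : Finset ι :=
  {r ∈ R | (E r b ∧ RedIn a y c r g) ∧ ¬ ∃ τ ∈ Q, OnBlue a y c τ b ∧ OnRed a y c τ r}

variable {a y c} {E : ι → ι → Prop} {R B : Finset ι} {g : MvPolynomial V3 K} {p : ℕ}

theorem eq_zero_of_C_mul_X_add_C_eq_zero {m b : K}
    (h : Polynomial.C m * Polynomial.X + Polynomial.C b = 0) : m = 0 ∧ b = 0 :=
  ⟨by simpa using congrArg (Polynomial.coeff · 1) h,
    by simpa using congrArg (Polynomial.coeff · 0) h⟩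

theorem onRed_of_redIn {τ : K × K × K × K} {i : ι} (h : RedIn a y c i (bilinearGraph τ)) :
    OnRed a y c τ i := by
  have hline : Polynomial.C (a i - (τ.1 * y i + τ.2.1)) * Polynomial.X +
      Polynomial.C (-c i - (τ.2.2.1 * y i + τ.2.2.2)) = 0 := by
    rw [← show redRestrict (a i) (y i) (c i) (bilinearGraph τ) = 0 from h]
    simp only [bilinearGraph, redRestrict, map_sub, map_add, map_mul, map_neg, aeval_X, pt3_xVar,
      pt3_yVar, pt3_zVar, aeval_C, Polynomial.algebraMap_eq]
    ring
  obtain ⟨hslope, hconst⟩ := eq_zero_of_C_mul_X_add_C_eq_zero hline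
  exact ⟨sub_eq_zero.1 hslope, by linear_combination -hconst⟩

theorem onBlue_of_blueIn {τ : K × K × K × K} {i : ι} (h : BlueIn a y c i (bilinearGraph τ)) :
    OnBlue a y c τ i := by
  have hline : Polynomial.C (a i - (τ.1 * y i + τ.2.2.1)) * Polynomial.X +
      Polynomial.C (-c i - (τ.2.1 * y i + τ.2.2.2)) = 0 := by
    rw [← show blueRestrict (a i) (y i) (c i) (bilinearGraph τ) = 0 from h]
    simp only [bilinearGraph, blueRestrict, map_sub, map_add, map_mul, map_neg, aeval_X, pt3_xVar,
      pt3_yVar, pt3_zVar, aeval_C, Polynomial.algebraMap_eq]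
    ring
  obtain ⟨hslope, hconst⟩ := eq_zero_of_C_mul_X_add_C_eq_zero hline
  exact ⟨sub_eq_zero.1 hslope, by linear_combination -hconst⟩

theorem card_red_meeting_le_of_not_blueIn (hy : Function.Injective y)
    (hE : ∀ i j, E i j → a i * y j - c i = a j * y i - c j) {j : ι} (hj : ¬ BlueIn a y c j g)
    {s : Finset ι} (hs : ∀ i ∈ s, E i j ∧ RedIn a y c i g) : s.card ≤ g.totalDegree := by
  rw [← Finset.card_image_of_injective s hy]
  refine (Polynomial.card_le_degree_of_subset_roots fun z hz => ?_).trans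
    (natDegree_blueRestrict_le (a j) (y j) (c j) g)
  obtain ⟨i, hi, rfl⟩ := Finset.mem_image.1 hz
  obtain ⟨hij, hred⟩ := hs i hi
  rw [Polynomial.mem_roots hj, Polynomial.IsRoot, eval_blueRestrict, ← hE i j hij,
    ← eval_redRestrict, show redRestrict (a i) (y i) (c i) g = 0 from hred, Polynomial.eval_zero]

theorem card_stray_le_of_not_blueIn (hy : Function.Injective y)
    (hE : ∀ i j, E i j → a i * y j - c i = a j * y i - c j) {b : ι} (hb : ¬ BlueIn a y c b g)
    (Q : Finset (K × K × K × K)) : (stray a y c E R Q g b).card ≤ g.totalDegree :=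
  card_red_meeting_le_of_not_blueIn hy hE hb fun _ hr => (Finset.mem_filter.1 hr).2.1

theorem card_stray_le_of_not_blueIn_flecnodal (hy : Function.Injective y)
    (hE : ∀ i j, E i j → a i * y j - c i = a j * y i - c j) {b : ι}
    (hb : ¬ BlueIn a y c b (flecnodal xVar g)) (Q : Finset (K × K × K × K)) :
    (stray a y c E R Q g b).card ≤ 3 * g.totalDegree :=
  (card_red_meeting_le_of_not_blueIn hy hE hb fun _ hr =>
    have hmeet := (Finset.mem_filter.1 hr).2.1
    ⟨hmeet.1, redRestrict_flecnodal_eq_zero hmeet.2⟩).trans (totalDegree_flecnodal_le _ _)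

theorem card_blueIn_blueIn_le (hy : Function.Injective y) (hg : Irreducible g)
    {h : MvPolynomial V3 K} (hgh : ¬ g ∣ h) (hdeg : h.totalDegree ≤ 3 * g.totalDegree) :
    (B.filter fun b => BlueIn a y c b g ∧ BlueIn a y c b h).card ≤ 3 * g.totalDegree ^ 2 := by
  refine (card_common_blue_lines_le hy hg hgh _ (fun j hj => (Finset.mem_filter.1 hj).2.1)
    fun j hj => (Finset.mem_filter.1 hj).2.2).trans ?_
  nlinarith

theorem card_blueIn_le_of_pderiv_eq_zero (hp : ∀ n : ℕ, n ≠ 0 → n < p → (n : K) ≠ 0)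
    (hy : Function.Injective y) (hg : Irreducible g) (hdeg : g.totalDegree < p)
    (hz : pderiv zVar g = 0) :
    (B.filter fun b => BlueIn a y c b g).card ≤ 3 * g.totalDegree ^ 2 := by
  have hndvd : ¬ g ∣ X zVar := by
    rintro ⟨q, hq⟩
    have hone := congrArg (pderiv zVar) hq
    rw [pderiv_X_self, pderiv_mul, hz, zero_mul, zero_add] at hone
    exact hg.not_isUnit (IsUnit.of_mul_eq_one _ hone.symm)
  have hcard := card_common_blue_lines_le (a := fun _ => 0) (c := fun _ => 0) hy hg hndvd
    (B.filter fun b => BlueIn a y c b g)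
    (fun j hj => (blueRestrict_eq_of_pderiv_eq_zero hp hdeg hz _ _ _ _ _).trans
      (Finset.mem_filter.1 hj).2)
    (fun j _ => by simp [blueRestrict])
  rw [totalDegree_X] at hcard
  nlinarith

theorem exists_few_stray_of_card_le (hy : Function.Injective y)
    (hE : ∀ i j, E i j → a i * y j - c i = a j * y i - c j) {T : ι → Prop}
    {Q : Finset (K × K × K × K)} (hQ : Q.card ≤ 1)
    (hT : (B.filter fun b => BlueIn a y c b g ∧ T b).card ≤ 3 * g.totalDegree ^ 2)
    (hstray : ∀ b ∈ B, BlueIn a y c b g → ¬ T b →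
      (stray a y c E R Q g b).card ≤ 3 * g.totalDegree) :
    ∃ (X : Finset ι) (Q : Finset (K × K × K × K)), X.card ≤ 3 * g.totalDegree ^ 2 ∧ Q.card ≤ 1 ∧
      ∀ b ∈ B, b ∉ X → (stray a y c E R Q g b).card ≤ 3 * g.totalDegree := by
  refine ⟨_, Q, hT, hQ, fun b hb hX => ?_⟩
  by_cases hbg : BlueIn a y c b g
  · exact hstray b hb hbg fun h => hX (Finset.mem_filter.2 ⟨hb, hbg, h⟩)
  · have := card_stray_le_of_not_blueIn (R := R) hy hE hbg Q
    omega

theorem exists_few_stray_of_dvd_flecnodal (hp : ∀ n : ℕ, n ≠ 0 → n < p → (n : K) ≠ 0)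
    (hy : Function.Injective y) (hE : ∀ i j, E i j → a i * y j - c i = a j * y i - c j)
    (hg : Irreducible g) (hdeg : g.totalDegree + 1 < p) (hr : g ∣ flecnodal xVar g)
    (hb : g ∣ flecnodal yVar g) (hz : pderiv zVar g ≠ 0) :
    ∃ (X : Finset ι) (Q : Finset (K × K × K × K)), X.card ≤ 3 * g.totalDegree ^ 2 ∧ Q.card ≤ 1 ∧
      ∀ b ∈ B, b ∉ X → (stray a y c E R Q g b).card ≤ 3 * g.totalDegree := by
  have hcard : (B.filter fun b => BlueIn a y c b g ∧ BlueIn a y c b (pderiv zVar g)).card ≤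
      3 * g.totalDegree ^ 2 :=
    card_blueIn_blueIn_le hy hg (not_dvd_pderiv hz)
      ((totalDegree_pderiv_le g zVar).trans (by omega))
  by_cases hall : ∀ b ∈ B, BlueIn a y c b g → BlueIn a y c b (pderiv zVar g)
  · exact exists_few_stray_of_card_le hy hE (Q := ∅) (by simp) hcard
      fun b hbB hbg hbz => absurd (hall b hbB hbg) hbz
  push Not at hall
  obtain ⟨b₀, -, hb₀, hb₀z⟩ := hall
  obtain ⟨y₀, hy₀⟩ := exists_eval_ne_zero hp hb₀z
    (((natDegree_blueRestrict_le ..).trans (totalDegree_pderiv_le g zVar)).trans_lt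
      ((Nat.lt_succ_self _).trans hdeg))
  obtain ⟨τ, hτ⟩ := associated_bilinearGraph_of_dvd_flecnodal hp hg hdeg hr hb hb₀ hy₀
  have hgraph {φ : MvPolynomial V3 K →ₐ[K] Polynomial K} (h : φ g = 0) :
      φ (bilinearGraph τ) = 0 := zero_dvd_iff.1 (h ▸ map_dvd φ hτ.dvd)
  refine exists_few_stray_of_card_le hy hE (Q := {τ}) (by simp) hcard fun b _ hbg _ => ?_
  have hempty : stray a y c E R {τ} g b = ∅ := Finset.filter_eq_empty_iff.2 fun r _ hr =>
    hr.2 ⟨τ, Finset.mem_singleton_self τ, onBlue_of_blueIn (hgraph hbg),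
      onRed_of_redIn (hgraph hr.1.2)⟩
  rw [hempty, Finset.card_empty]
  exact Nat.zero_le _

theorem exists_few_stray_of_irreducible (hp : ∀ n : ℕ, n ≠ 0 → n < p → (n : K) ≠ 0)
    (hy : Function.Injective y) (hE : ∀ i j, E i j → a i * y j - c i = a j * y i - c j)
    (R B : Finset ι) (hg : Irreducible g) (hdeg : g.totalDegree + 1 < p) :
    ∃ (X : Finset ι) (Q : Finset (K × K × K × K)), X.card ≤ 3 * g.totalDegree ^ 2 ∧ Q.card ≤ 1 ∧
      ∀ b ∈ B, b ∉ X → (stray a y c E R Q g b).card ≤ 3 * g.totalDegree := by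
  by_cases hb : g ∣ flecnodal yVar g
  swap
  · exact exists_few_stray_of_card_le hy hE (Q := ∅) (by simp)
      (card_blueIn_blueIn_le hy hg hb (totalDegree_flecnodal_le _ _))
      fun b _ hbg hflec => absurd (blueRestrict_flecnodal_eq_zero hbg) hflec
  by_cases hr : g ∣ flecnodal xVar g
  swap
  · exact exists_few_stray_of_card_le hy hE (Q := ∅) (by simp)
      (card_blueIn_blueIn_le hy hg hr (totalDegree_flecnodal_le _ _))
      fun b _ _ hflec => card_stray_le_of_not_blueIn_flecnodal hy hE hflec ∅
  by_cases hz : pderiv zVar g = 0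
  · refine exists_few_stray_of_card_le hy hE (T := fun _ => True) (Q := ∅) (by simp) ?_
      fun b _ _ h => absurd trivial h
    simpa only [and_true] using
      card_blueIn_le_of_pderiv_eq_zero hp hy hg ((Nat.lt_succ_self _).trans hdeg) hz
  · exact exists_few_stray_of_dvd_flecnodal hp hy hE hg hdeg hr hb hz

theorem stray_mul_subset (R : Finset ι) (Q Q' : Finset (K × K × K × K)) (f g : MvPolynomial V3 K)
    (b : ι) : stray a y c E R (Q ∪ Q') (f * g) b ⊆
      stray a y c E R Q f b ∪ stray a y c E R Q' g b := by
  intro r hr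
  obtain ⟨hrR, ⟨hrE, hrfg⟩, hgraph⟩ := Finset.mem_filter.1 hr
  rw [RedIn, map_mul, mul_eq_zero] at hrfg
  refine Finset.mem_union.2 (hrfg.imp (fun h => ?_) fun h => ?_) <;>
    refine Finset.mem_filter.2 ⟨hrR, ⟨hrE, h⟩, fun ⟨τ, hτ, hon⟩ => hgraph ⟨τ, ?_, hon⟩⟩
  exacts [Finset.mem_union_left _ hτ, Finset.mem_union_right _ hτ]

theorem exists_few_stray (hp : ∀ n : ℕ, n ≠ 0 → n < p → (n : K) ≠ 0)
    (hy : Function.Injective y) (hE : ∀ i j, E i j → a i * y j - c i = a j * y i - c j)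
    (R B : Finset ι) {f : MvPolynomial V3 K} (hf : f ≠ 0) (hdeg : f.totalDegree + 1 < p) :
    ∃ (X : Finset ι) (Q : Finset (K × K × K × K)),
      X.card ≤ 3 * f.totalDegree ^ 2 ∧ Q.card ≤ f.totalDegree ∧
      ∀ b ∈ B, b ∉ X → (stray a y c E R Q f b).card ≤ 3 * f.totalDegree := by
  induction f using UniqueFactorizationMonoid.induction_on_prime with
  | h₁ => exact absurd rfl hf
  | h₂ u hu =>
    refine ⟨∅, ∅, by simp, by simp, fun b _ _ => ?_⟩
    have hempty : stray a y c E R ∅ u b = ∅ := Finset.filter_eq_empty_iff.2 fun r _ hr =>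
      (hu.map (redRestrict (a r) (y r) (c r))).ne_zero hr.1.2
    simp [hempty]
  | h₃ f g hf0 hg ih =>
    have hmul := totalDegree_mul_of_isDomain hg.ne_zero hf0
    have hgpos := totalDegree_pos_of_irreducible hg.irreducible
    obtain ⟨X, Q, hX, hQ, hf⟩ := ih hf0 (by omega)
    obtain ⟨X', Q', hX', hQ', hg⟩ :=
      exists_few_stray_of_irreducible hp hy hE R B hg.irreducible (by omega)
    refine ⟨X' ∪ X, Q' ∪ Q, (Finset.card_union_le _ _).trans ?_,
      (Finset.card_union_le _ _).trans (by omega), fun b hb hbX => ?_⟩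
    · rw [hmul]
      nlinarith
    · rw [Finset.mem_union, not_or] at hbX
      rw [hmul, mul_add]
      exact (Finset.card_le_card (stray_mul_subset ..)).trans
        ((Finset.card_union_le _ _).trans (add_le_add (hg b hb hbX.1) (hf b hb hbX.2)))

end Components

/-! ### Interpolation and sampling -/

section Interpolation
open MvPolynomial

variable {K : Type*} [Field K]

/-- There are `(k + 1)(k + 2)(k + 3) / 6` coefficients, and `k + 1` conditions for each line. -/
theorem exists_totalDegree_le_forall_redIn {ι : Type*} (a y c : ι → K) {R : Finset ι} {k : ℕ}
    (hk : 6 * R.card < (k + 2) * (k + 3)) :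
    ∃ f : MvPolynomial V3 K, f ≠ 0 ∧ f.totalDegree ≤ k ∧ ∀ r ∈ R, RedIn a y c r f := by
  let ψ : restrictTotalDegree V3 K k →ₗ[K] (R → Fin (k + 1) → K) :=
    LinearMap.pi fun r => LinearMap.pi fun i => (Polynomial.lcoeff K i).comp
      ((redRestrict (a r) (y r) (c r)).toLinearMap.comp (Submodule.subtype _))
  have hlt : Module.finrank K (R → Fin (k + 1) → K) <
      Module.finrank K (restrictTotalDegree V3 K k) := by
    have hchoose : 6 * (k + 3).choose 3 = (k + 3) * (k + 2) * (k + 1) := by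
      rw [← show Nat.factorial 3 = 6 from rfl, ← Nat.descFactorial_eq_factorial_mul_choose,
        Nat.add_descFactorial_eq_ascFactorial]
      simp only [Nat.ascFactorial]
      ring
    rw [finrank_restrictTotalDegree, Module.finrank_pi_fintype]
    simp only [Module.finrank_fin_fun, Finset.sum_const, Finset.card_univ, Fintype.card_coe,
      smul_eq_mul, Fintype.card_option, Fintype.card_fin, Nat.reduceAdd]
    nlinarith
  obtain ⟨f, hf, hf0⟩ :=
    (Submodule.ne_bot_iff _).1 (LinearMap.ker_ne_bot_of_finrank_lt (f := ψ) hlt)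
  have hdeg : (f : MvPolynomial V3 K).totalDegree ≤ k := (mem_restrictTotalDegree _ _ _).1 f.2
  refine ⟨f, mt Submodule.coe_eq_zero.1 hf0, hdeg, fun r hr => Polynomial.ext fun n => ?_⟩
  rw [Polynomial.coeff_zero]
  by_cases hn : n < k + 1
  · exact congrFun (congrFun hf ⟨r, hr⟩) ⟨n, hn⟩
  · have := natDegree_redRestrict_le (a r) (y r) (c r) (f : MvPolynomial V3 K)
    exact Polynomial.coeff_eq_zero_of_natDegree_lt (by omega)

end Interpolation

section Sampling

variable {ι : Type*} (E : ι → ι → Prop)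

/-- The number of elements of `R` related to `b`. -/
def relDegree (R : Finset ι) (b : ι) : ℕ := (R.filter fun r => E r b).card

theorem relDegree_le (R : Finset ι) (b : ι) : relDegree E R b ≤ R.card := Finset.card_filter_le _ _

theorem relDegree_insert {R : Finset ι} {r : ι} (hr : r ∉ R) (b : ι) :
    relDegree E (insert r R) b = relDegree E R b + if E r b then 1 else 0 := by
  rw [relDegree, relDegree, Finset.filter_insert]
  split_ifs
  · exact Finset.card_insert_of_notMem fun h => hr (Finset.filter_subset _ _ h)
  · rfl

theorem relDegree_sdiff_add {R S : Finset ι} (hS : S ⊆ R) (b : ι) :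
    relDegree E (R \ S) b + relDegree E S b = relDegree E R b := by
  rw [relDegree, relDegree, relDegree, ← Finset.card_union_of_disjoint
    (Finset.disjoint_filter_filter Finset.sdiff_disjoint), ← Finset.filter_union,
    Finset.sdiff_union_of_subset hS]

theorem sum_add_sq_le_or_sum_sub_sq_le {α : Type*} [CommRing α] [LinearOrder α]
    [IsStrictOrderedRing α] (s : Finset ι) (x w : ι → α) :
    ∑ i ∈ s, (x i + w i) ^ 2 ≤ ∑ i ∈ s, x i ^ 2 + ∑ i ∈ s, w i ^ 2 ∨
      ∑ i ∈ s, (x i - w i) ^ 2 ≤ ∑ i ∈ s, x i ^ 2 + ∑ i ∈ s, w i ^ 2 := by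
  simp only [add_sq, sub_sq, mul_assoc, Finset.sum_add_distrib, Finset.sum_sub_distrib,
    ← Finset.mul_sum]
  rcases le_total (∑ i ∈ s, x i * w i) 0 with h | h
  · exact Or.inl (by linarith)
  · exact Or.inr (by linarith)

/-- A deterministic form of random halving: the elements are put into `S` or its complement one
after the other, keeping the variance below its expected value. -/
theorem exists_subset_sum_sq_relDegree_sub_le (R B : Finset ι) :
    ∃ S ⊆ R, ∑ b ∈ B, ((relDegree E R b : ℤ) - 2 * relDegree E S b) ^ 2 ≤
      ∑ b ∈ B, (relDegree E R b : ℤ) := by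
  induction R using Finset.induction_on with
  | empty => exact ⟨∅, le_rfl, by simp [relDegree]⟩
  | insert r R hr ih =>
    obtain ⟨S, hS, h⟩ := ih
    have hrS : r ∉ S := fun h => hr (hS h)
    let w : ι → ℤ := fun b => if E r b then 1 else 0
    have hw (b) : w b ^ 2 = w b := by dsimp only [w]; split_ifs <;> norm_num
    have hinsert {S : Finset ι} (hr : r ∉ S) (b : ι) :
        (relDegree E (insert r S) b : ℤ) = relDegree E S b + w b := by
      rw [relDegree_insert E hr]
      simp [w]
    simp only [hinsert hr, Finset.sum_add_distrib]
    rcases sum_add_sq_le_or_sum_sub_sq_le B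
      (fun b => (relDegree E R b : ℤ) - 2 * relDegree E S b) w with hadd | hsub
    · refine ⟨S, hS.trans (Finset.subset_insert _ _), ?_⟩
      simp only [hw, sub_add_eq_add_sub] at hadd
      linarith
    · refine ⟨insert r S, Finset.insert_subset_insert _ hS, ?_⟩
      simp only [hinsert hrS]
      simp only [hw] at hsub
      refine (Finset.sum_congr rfl fun b _ => ?_).trans_le (hsub.trans (add_le_add_left h _))
      ring

theorem exists_half_sum_sq_relDegree_sub_le (R B : Finset ι) :
    ∃ S ⊆ R, 2 * S.card ≤ R.card ∧
      ∑ b ∈ B, ((relDegree E R b : ℤ) - 2 * relDegree E S b) ^ 2 ≤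
        ∑ b ∈ B, (relDegree E R b : ℤ) := by
  obtain ⟨S, hS, h⟩ := exists_subset_sum_sq_relDegree_sub_le E R B
  by_cases hcard : 2 * S.card ≤ R.card
  · exact ⟨S, hS, hcard, h⟩
  · refine ⟨R \ S, Finset.sdiff_subset, by rw [Finset.card_sdiff_of_subset hS]; omega,
      (Finset.sum_congr rfl fun b _ => ?_).trans_le h⟩
    rw [← relDegree_sdiff_add E hS b]
    push_cast
    ring

theorem exists_sparse_sum_sq_relDegree_sub_le (R B : Finset ι) (j : ℕ) :
    ∃ S ⊆ R, 2 ^ j * S.card ≤ R.card ∧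
      ∑ b ∈ B, ((relDegree E R b : ℤ) - 2 ^ j * relDegree E S b) ^ 2 ≤
        4 ^ j * (R.card * B.card : ℤ) := by
  induction j with
  | zero => exact ⟨R, le_rfl, by simp, by simpa using by positivity⟩
  | succ j ih =>
    obtain ⟨S, hS, hSR, h⟩ := ih
    obtain ⟨T, hT, hTS, hhalf⟩ := exists_half_sum_sq_relDegree_sub_le E S B
    refine ⟨T, hT.trans hS, by rw [pow_succ]; nlinarith [Nat.mul_le_mul_left (2 ^ j) hTS], ?_⟩
    have hdeg : ∑ b ∈ B, (relDegree E S b : ℤ) ≤ R.card * B.card := by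
      rw [mul_comm, ← nsmul_eq_mul]
      refine Finset.sum_le_card_nsmul _ _ _ fun b _ => ?_
      exact_mod_cast (relDegree_le E S b).trans (Finset.card_le_card hS)
    have hsq (b : ι) : ((relDegree E R b : ℤ) - 2 ^ (j + 1) * relDegree E T b) ^ 2 ≤
        2 * ((relDegree E R b : ℤ) - 2 ^ j * relDegree E S b) ^ 2 +
          2 * 4 ^ j * ((relDegree E S b : ℤ) - 2 * relDegree E T b) ^ 2 := by
      rw [show (4 : ℤ) ^ j = (2 ^ j) ^ 2 by rw [← pow_mul, mul_comm, pow_mul]; norm_num,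
        pow_succ (2 : ℤ) j]
      linarith [sq_nonneg (((relDegree E R b : ℤ) - 2 ^ j * relDegree E S b) -
        2 ^ j * ((relDegree E S b : ℤ) - 2 * relDegree E T b))]
    refine (Finset.sum_le_sum fun b _ => hsq b).trans ?_
    rw [Finset.sum_add_distrib, ← Finset.mul_sum, ← Finset.mul_sum, pow_succ]
    have hpow : (0 : ℤ) ≤ 4 ^ j := by positivity
    nlinarith [mul_le_mul_of_nonneg_left (hhalf.trans hdeg) hpow]

end Sampling

/-! ### Incidences between red and blue lines -/

section RedBlue

variable {K : Type*} [Field K] {ι : Type*} {a y c : ι → K} {E : ι → ι → Prop} {k p : ℕ}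

/-- Each blue line is related to at most `k` red lines lying with it on a common bilinear graph. -/
def CommonGraphBound (a y c : ι → K) (E : ι → ι → Prop) (k : ℕ) : Prop :=
  ∀ (j : ι) (s : Finset ι) (τ : K × K × K × K), OnBlue a y c τ j →
    (∀ i ∈ s, OnRed a y c τ i ∧ E i j) → s.card ≤ k

theorem eq_of_onBlue_of_ne (hy : Function.Injective y) {τ σ : K × K × K × K} (hne : τ ≠ σ)
    {i j : ι} (hτi : OnBlue a y c τ i) (hσi : OnBlue a y c σ i) (hτj : OnBlue a y c τ j)
    (hσj : OnBlue a y c σ j) : i = j := by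
  by_contra hij
  have hyij : y i - y j ≠ 0 := sub_ne_zero.2 (hy.ne hij)
  have hγ : τ.1 = σ.1 := mul_right_cancel₀ hyij (by
    linear_combination -hτi.1 + hσi.1 + hτj.1 - hσj.1)
  have hα : τ.2.1 = σ.2.1 := mul_right_cancel₀ hyij (by
    linear_combination hτi.2 - hσi.2 - hτj.2 + hσj.2)
  have hβ : τ.2.2.1 = σ.2.2.1 := by linear_combination -hτi.1 + hσi.1 - y i * hγ
  have hδ : τ.2.2.2 = σ.2.2.2 := by linear_combination hτi.2 - hσi.2 - y i * hα
  exact hne (Prod.ext hγ (Prod.ext hα (Prod.ext hβ hδ)))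

/-- Two distinct graphs share at most one blue line. -/
theorem sum_card_onBlue_le (hy : Function.Injective y) (B : Finset ι)
    (Q : Finset (K × K × K × K)) :
    ∑ b ∈ B, (Q.filter fun τ => OnBlue a y c τ b).card ≤ B.card + Q.card ^ 2 := by
  have hpairs (b : ι) : (Q.filter fun τ => OnBlue a y c τ b).card ≤
      1 + (Q.offDiag.filter fun x => OnBlue a y c x.1 b ∧ OnBlue a y c x.2 b).card := by
    have hsub : (Q.filter fun τ => OnBlue a y c τ b).offDiag ⊆
        Q.offDiag.filter fun x => OnBlue a y c x.1 b ∧ OnBlue a y c x.2 b := fun x => by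
      simp only [Finset.mem_offDiag, Finset.mem_filter]
      tauto
    have hcard := Finset.card_le_card hsub
    rw [Finset.offDiag_card] at hcard
    generalize (Q.filter fun τ => OnBlue a y c τ b).card = m at *
    rcases Nat.lt_or_ge m 2 with h | h
    · omega
    · have := Nat.mul_le_mul_right m h
      omega
  refine (Finset.sum_le_sum fun b _ => hpairs b).trans ?_
  rw [Finset.sum_add_distrib, Finset.sum_const, smul_eq_mul, mul_one,
    show ∑ b ∈ B, (Q.offDiag.filter fun x => OnBlue a y c x.1 b ∧ OnBlue a y c x.2 b).card =
      ∑ x ∈ Q.offDiag, (B.filter fun b => OnBlue a y c x.1 b ∧ OnBlue a y c x.2 b).card from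
      Finset.sum_card_bipartiteAbove_eq_sum_card_bipartiteBelow _]
  refine Nat.add_le_add_left ((Finset.sum_le_card_nsmul _ _ 1 fun x hx =>
    Finset.card_le_one.2 fun i hi j hj => ?_).trans ?_) _
  · rw [Finset.mem_filter] at hi hj
    exact eq_of_onBlue_of_ne hy (Finset.mem_offDiag.1 hx).2.2 hi.2.1 hi.2.2 hj.2.1 hj.2.2
  · rw [smul_eq_mul, mul_one, Finset.offDiag_card, sq]
    exact Nat.sub_le _ _

theorem relDegree_le_card_stray_add (hk : CommonGraphBound a y c E k) {S : Finset ι}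
    {f : MvPolynomial V3 K} (hS : ∀ r ∈ S, RedIn a y c r f) (Q : Finset (K × K × K × K)) (b : ι) :
    relDegree E S b ≤
      (stray a y c E S Q f b).card + k * (Q.filter fun τ => OnBlue a y c τ b).card := by
  have hsub : (S.filter fun r => E r b) ⊆ stray a y c E S Q f b ∪
      (Q.filter fun τ => OnBlue a y c τ b).biUnion fun τ =>
        S.filter fun r => OnRed a y c τ r ∧ E r b := by
    intro r hr
    rw [Finset.mem_filter] at hr
    by_cases h : ∃ τ ∈ Q, OnBlue a y c τ b ∧ OnRed a y c τ r
    · obtain ⟨τ, hτ, hblue, hred⟩ := h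
      exact Finset.mem_union_right _ (Finset.mem_biUnion.2 ⟨τ, Finset.mem_filter.2 ⟨hτ, hblue⟩,
        Finset.mem_filter.2 ⟨hr.1, hred, hr.2⟩⟩)
    · exact Finset.mem_union_left _ (Finset.mem_filter.2 ⟨hr.1, ⟨hr.2, hS r hr.1⟩, h⟩)
  refine (Finset.card_le_card hsub).trans ((Finset.card_union_le _ _).trans
    (Nat.add_le_add_left (Finset.card_biUnion_le.trans ?_) _))
  rw [mul_comm]
  exact Finset.sum_le_card_nsmul _ _ _ fun τ hτ =>
    hk b _ τ (Finset.mem_filter.1 hτ).2 fun i hi => (Finset.mem_filter.1 hi).2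

theorem sum_relDegree_le_of_card_stray_le (hy : Function.Injective y)
    (hk : CommonGraphBound a y c E k) {S B : Finset ι} {f : MvPolynomial V3 K}
    (hS : ∀ r ∈ S, RedIn a y c r f) {Q : Finset (K × K × K × K)} {m : ℕ}
    (hm : ∀ b ∈ B, (stray a y c E S Q f b).card ≤ m) :
    ∑ b ∈ B, relDegree E S b ≤ m * B.card + k * (B.card + Q.card ^ 2) := by
  refine (Finset.sum_le_sum fun b hb => (relDegree_le_card_stray_add hk hS Q b).trans
    (Nat.add_le_add_right (hm b hb) _)).trans ?_
  rw [Finset.sum_add_distrib, ← Finset.mul_sum, Finset.sum_const, smul_eq_mul, mul_comm m]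
  exact Nat.add_le_add_left (Nat.mul_le_mul_left k (sum_card_onBlue_le hy B Q)) _

theorem sum_abs_le_mul_sqrt {s : Finset ι} {x : ι → ℝ} {N : ℕ} {m : ℝ} (hm : 0 ≤ m)
    (hs : s.card ≤ N) (hx : ∑ i ∈ s, x i ^ 2 ≤ m ^ 2 * (N * N)) :
    ∑ i ∈ s, |x i| ≤ m * (N * √N) := by
  have hcauchy := sq_sum_le_card_mul_sum_sq (s := s) (f := fun i => |x i|)
  simp only [sq_abs] at hcauchy
  refine le_of_sq_le_sq (hcauchy.trans ((mul_le_mul (Nat.cast_le.2 hs) hx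
    (Finset.sum_nonneg fun _ _ => sq_nonneg _) N.cast_nonneg).trans_eq ?_)) (by positivity)
  rw [mul_pow, mul_pow, Real.sq_sqrt N.cast_nonneg]
  ring

theorem sum_relDegree_le_of_sample {R S B B₁ : Finset ι} {N j : ℕ} (hR : R.card ≤ N)
    (hB : B.card ≤ N) (hB₁ : B₁ ⊆ B)
    (hS : ∑ b ∈ B, ((relDegree E R b : ℤ) - 2 ^ j * relDegree E S b) ^ 2 ≤
      4 ^ j * (R.card * B.card : ℤ)) :
    ∑ b ∈ B₁, (relDegree E R b : ℝ) ≤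
      2 ^ j * (N * √N) + 2 ^ j * ∑ b ∈ B₁, (relDegree E S b : ℝ) := by
  have hS' : ∑ b ∈ B, ((relDegree E R b : ℝ) - 2 ^ j * relDegree E S b) ^ 2 ≤
      4 ^ j * (R.card * B.card : ℝ) := by exact_mod_cast hS
  have hdev : ∑ b ∈ B₁, ((relDegree E R b : ℝ) - 2 ^ j * relDegree E S b) ^ 2 ≤
      (2 ^ j) ^ 2 * (N * N : ℝ) := by
    refine (Finset.sum_le_sum_of_subset_of_nonneg hB₁ fun _ _ _ => sq_nonneg _).trans
      (hS'.trans ?_)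
    rw [← pow_mul, mul_comm j, pow_mul, show (2 : ℝ) ^ 2 = 4 by norm_num]
    gcongr
  have habs := sum_abs_le_mul_sqrt (by positivity) ((Finset.card_le_card hB₁).trans hB) hdev
  rw [Finset.mul_sum]
  calc ∑ b ∈ B₁, (relDegree E R b : ℝ)
      ≤ ∑ b ∈ B₁, (|(relDegree E R b : ℝ) - 2 ^ j * relDegree E S b| +
          2 ^ j * relDegree E S b) := Finset.sum_le_sum fun b _ => by
        linarith [le_abs_self ((relDegree E R b : ℝ) - 2 ^ j * relDegree E S b)]
    _ ≤ 2 ^ j * (N * √N) + ∑ b ∈ B₁, (2 ^ j * (relDegree E S b : ℝ)) := by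
        rw [Finset.sum_add_distrib]
        gcongr

theorem exists_forall_redIn_of_sparse (hp2 : 2 ≤ p) (a y c : ι → K) {S : Finset ι} {N : ℕ}
    (hS : 2 ^ 16 * S.card ≤ N) (hN : N ≤ 600 * p ^ 2) :
    ∃ f : MvPolynomial V3 K, f ≠ 0 ∧ 9 * f.totalDegree ^ 2 ≤ N ∧ f.totalDegree + 1 < p ∧
      ∀ r ∈ S, RedIn a y c r f := by
  obtain ⟨f, hf0, hdeg, hred⟩ := exists_totalDegree_le_forall_redIn a y c (R := S)
    (k := Nat.sqrt (6 * S.card)) (by nlinarith [Nat.lt_succ_sqrt (6 * S.card)])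
  have hsq : f.totalDegree ^ 2 ≤ 6 * S.card :=
    (Nat.pow_le_pow_left hdeg 2).trans (Nat.sqrt_le' _)
  have hlt : (2 * f.totalDegree) ^ 2 < p ^ 2 := by nlinarith
  have := lt_of_pow_lt_pow_left₀ 2 (by positivity) hlt
  exact ⟨f, hf0, by omega, by omega, hred⟩

/-- The interpolating surface has degree less than the characteristic, as it need only contain a
sample of the red lines of density `2 ^ (-16)`. -/
theorem exists_half_sum_relDegree_le (hp : ∀ n : ℕ, n ≠ 0 → n < p → (n : K) ≠ 0) (hp2 : 2 ≤ p)
    (hy : Function.Injective y) (hE : ∀ i j, E i j → a i * y j - c i = a j * y i - c j)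
    (hk : CommonGraphBound a y c E k) {R B : Finset ι} {N : ℕ} (hR : R.card ≤ N)
    (hB : B.card ≤ N) (hN : N ≤ 600 * p ^ 2) :
    ∃ B' ⊆ B, 2 * B'.card ≤ N ∧
      ∑ b ∈ B \ B', (relDegree E R b : ℝ) ≤ 2 ^ 17 * (N * √N + k * N) := by
  obtain ⟨S, -, hSR, hdev⟩ := exists_sparse_sum_sq_relDegree_sub_le E R B 16
  obtain ⟨f, hf0, hfN, hfp, hS⟩ := exists_forall_redIn_of_sparse hp2 a y c (hSR.trans hR) hN
  obtain ⟨X, Q, hX, hQ, hstray⟩ := exists_few_stray hp hy hE S B hf0 hfp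
  set d := f.totalDegree
  have hX' : (B.filter (· ∈ X)).card ≤ X.card :=
    Finset.card_le_card fun b hb => (Finset.mem_filter.1 hb).2
  refine ⟨B.filter (· ∈ X), Finset.filter_subset _ _, by omega, ?_⟩
  rw [← Finset.filter_not]
  set B₁ := B.filter (· ∉ X)
  have hB₁ : B₁.card ≤ N := (Finset.card_filter_le _ _).trans hB
  have hsample := sum_relDegree_le_of_sample hR hB (Finset.filter_subset (· ∉ X) B) hdev
  have hsum : ∑ b ∈ B₁, relDegree E S b ≤ 3 * d * N + k * (N + d ^ 2) := by
    refine (sum_relDegree_le_of_card_stray_le hy hk hS fun b hb =>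
      hstray b (Finset.mem_filter.1 hb).1 (Finset.mem_filter.1 hb).2).trans ?_
    gcongr
  have hsum' : ∑ b ∈ B₁, (relDegree E S b : ℝ) ≤ 3 * d * N + k * (N + d ^ 2) := by
    exact_mod_cast hsum
  have hfN' : 9 * (d : ℝ) ^ 2 ≤ N := by exact_mod_cast hfN
  have hdsqrt : 3 * (d : ℝ) * N ≤ √N * N := by
    gcongr
    exact Real.le_sqrt_of_sq_le (by nlinarith)
  have hkd : (k : ℝ) * d ^ 2 ≤ k * N := by
    gcongr
    nlinarith
  linarith

theorem sum_relDegree_comm (hs : ∀ i j, E i j → E j i) (R B : Finset ι) :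
    ∑ b ∈ B, relDegree E R b = ∑ r ∈ R, relDegree E B r := by
  refine (Finset.sum_card_bipartiteAbove_eq_sum_card_bipartiteBelow fun b r => E r b).trans
    (Finset.sum_congr rfl fun r _ => congrArg _ (Finset.filter_congr fun b _ => ?_))
  exact ⟨hs _ _, hs _ _⟩

/-- Half of the lines of each colour are accounted for at a time. -/
theorem sum_relDegree_le (hp : ∀ n : ℕ, n ≠ 0 → n < p → (n : K) ≠ 0) (hp2 : 2 ≤ p)
    (hy : Function.Injective y) (hE : ∀ i j, E i j → a i * y j - c i = a j * y i - c j)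
    (hs : ∀ i j, E i j → E j i) (hk : CommonGraphBound a y c E k) {N : ℕ} (hN : N ≤ 600 * p ^ 2)
    {R B : Finset ι} (hR : R.card ≤ N) (hB : B.card ≤ N) :
    ∑ b ∈ B, (relDegree E R b : ℝ) ≤ 2 ^ 20 * (N * √N + k * N) := by
  induction N using Nat.strong_induction_on generalizing R B with
  | _ N ih =>
  rcases Nat.eq_zero_or_pos N with h0 | h0
  · rw [Finset.card_eq_zero.1 (show B.card = 0 by omega), Finset.sum_empty]
    positivity
  have hcomm (R B : Finset ι) :
      ∑ b ∈ B, (relDegree E R b : ℝ) = ∑ r ∈ R, (relDegree E B r : ℝ) := by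
    exact_mod_cast sum_relDegree_comm hs R B
  obtain ⟨B', hB'B, hB', hblue⟩ := exists_half_sum_relDegree_le hp hp2 hy hE hk hR hB hN
  obtain ⟨R', hR'R, hR', hred⟩ :=
    exists_half_sum_relDegree_le hp hp2 hy hE hk (R := B') (by omega) hR hN
  have hrest := ih (N / 2) (by omega) (by omega) (R := B') (B := R') (by omega) (by omega)
  rw [← Finset.sum_sdiff hB'B, hcomm R B', ← Finset.sum_sdiff hR'R]
  have hhalf : ((N / 2 : ℕ) : ℝ) ≤ N / 2 := Nat.cast_div_le
  have hsqrt : ((N / 2 : ℕ) : ℝ) * √((N / 2 : ℕ) : ℝ) ≤ N / 2 * √N :=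
    mul_le_mul hhalf (Real.sqrt_le_sqrt (hhalf.trans (half_le_self N.cast_nonneg)))
      (Real.sqrt_nonneg _) (by positivity)
  have hkN : (k : ℝ) * ((N / 2 : ℕ) : ℝ) ≤ k * (N / 2) := by gcongr
  have : (0 : ℝ) ≤ N * √N := by positivity
  have : (0 : ℝ) ≤ k * N := by positivity
  linarith

end RedBlue

/-! ### Incidences in a grid -/

section Grid
open Polynomial

variable {F : Type*} [Field F]

/-- The denominator `1 - aε²` in `F(ε)` of the coordinates of the line attached to `(a, s, t)`. -/
def twistDenom (i : F × F × F) : RatFunc F := algebraMap F[X] (RatFunc F) (1 - C i.1 * X ^ 2)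

/-- The slope of the line attached to `(a, s, t)`, in either colour: the red line is
`Y = twistPos`, `Z = twistSlope · X - twistIntercept`, and in the blue line `X` and `Y` are
exchanged. -/
def twistSlope (i : F × F × F) : RatFunc F := algebraMap F[X] (RatFunc F) (C i.1) / twistDenom i

/-- The constant coordinate of the line attached to `(a, s, t)`. -/
def twistPos (i : F × F × F) : RatFunc F :=
  algebraMap F[X] (RatFunc F) (C i.2.1 + C i.1 * X + C i.2.2 * X ^ 2) / twistDenom i

/-- The negative of the intercept of the line attached to `(a, s, t)`. -/
def twistIntercept (i : F × F × F) : RatFunc F :=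
  algebraMap F[X] (RatFunc F) (C i.2.2) / twistDenom i

/-- For `l = (s, t)` the value `sa + t` at `i = (a, s, t)`. -/
def lineValue (i : F × F × F) : F := i.1 * i.2.1 + i.2.2

theorem twistDenom_ne_zero (i : F × F × F) : twistDenom i ≠ 0 := by
  rw [twistDenom, Ne, map_eq_zero_iff _ (RatFunc.algebraMap_injective F)]
  intro h
  simpa using congrArg (eval 0) h

theorem twistPos_injective : Function.Injective (twistPos : F × F × F → RatFunc F) := by
  rintro ⟨a, s, t⟩ ⟨a', s', t'⟩ h
  rw [twistPos, twistPos, div_eq_div_iff (twistDenom_ne_zero _) (twistDenom_ne_zero _), twistDenom,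
    twistDenom, ← map_mul, ← map_mul] at h
  have h := RatFunc.algebraMap_injective F h
  have hzero : (C (s - s') + C (a - a') * X + C (t - t' - s * a' + s' * a) * X ^ 2 +
      C (t' * a - t * a') * X ^ 4 : F[X]) = 0 := by
    simp only [map_sub, map_mul, map_add]
    linear_combination h
  have hs : s - s' = 0 := by simpa using congrArg (coeff · 0) hzero
  have ha : a - a' = 0 := by
    simpa [coeff_X, coeff_C, coeff_mul_X_pow'] using congrArg (coeff · 1) hzero
  have ht : t - t' - s * a' + s' * a = 0 := by
    simpa [coeff_X, coeff_C, coeff_mul_X_pow'] using congrArg (coeff · 2) hzero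
  obtain rfl := sub_eq_zero.1 hs
  obtain rfl := sub_eq_zero.1 ha
  obtain rfl : t = t' := by linear_combination ht
  rfl

theorem fst_eq_of_twistSlope_eq {i j : F × F × F} (h : twistSlope i = twistSlope j) :
    i.1 = j.1 := by
  rw [twistSlope, twistSlope, div_eq_div_iff (twistDenom_ne_zero _) (twistDenom_ne_zero _),
    twistDenom, twistDenom, ← map_mul, ← map_mul] at h
  have h := RatFunc.algebraMap_injective F h
  exact C_injective (by linear_combination h)

/-- The red line attached to `(a, s', t')` meets the blue line attached to `(a', s, t)` whenever
`sa + t = s'a' + t'`. -/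
theorem twistSlope_mul_twistPos_sub {i j : F × F × F}
    (h : lineValue (i.1, j.2) = lineValue (j.1, i.2)) :
    twistSlope i * twistPos j - twistIntercept i =
      twistSlope j * twistPos i - twistIntercept j := by
  have hi := twistDenom_ne_zero i
  have hj := twistDenom_ne_zero j
  have hC : (C i.1 * C j.2.1 + C j.2.2 : F[X]) = C j.1 * C i.2.1 + C i.2.2 := by
    simpa only [lineValue, map_mul, map_add] using congrArg C h
  have key : (C i.1 * (C j.2.1 + C j.1 * X + C j.2.2 * X ^ 2) -
      C i.2.2 * (1 - C j.1 * X ^ 2) : F[X]) =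
      C j.1 * (C i.2.1 + C i.1 * X + C i.2.2 * X ^ 2) - C j.2.2 * (1 - C i.1 * X ^ 2) := by
    linear_combination hC
  have key := congrArg (algebraMap F[X] (RatFunc F)) key
  rw [map_sub, map_sub, map_mul, map_mul, map_mul, map_mul] at key
  change _ - _ * twistDenom j = _ - _ * twistDenom i at key
  rw [twistSlope, twistSlope, twistPos, twistPos, twistIntercept, twistIntercept]
  field_simp
  linear_combination key

/-- The relation `l(a) = l'(a')` between `i = (a, l')` and `j = (a', l)`, where `l` and `l'` belong
to `Λ`, and `(a, l(a))` and `(a', l'(a'))` to `G`. -/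
def TwistRel (Λ G : Finset (F × F)) (i j : F × F × F) : Prop :=
  lineValue (i.1, j.2) = lineValue (j.1, i.2) ∧ (i.1, lineValue (i.1, j.2)) ∈ G ∧
    (j.1, lineValue (j.1, i.2)) ∈ G ∧ i.2 ∈ Λ ∧ j.2 ∈ Λ

theorem TwistRel.symm {Λ G : Finset (F × F)} {i j : F × F × F} (h : TwistRel Λ G i j) :
    TwistRel Λ G j i :=
  ⟨h.1.symm, h.2.2.1, h.2.1, h.2.2.2.2, h.2.2.2.1⟩

/-- On a bilinear graph the slope of a red line is a function of its constant coordinate. Hence the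
red lines on it either have distinct parameters `a`, or the graph has `γ = 0`, they share the
parameter `a`, and they come from lines through one point of `G`. -/
theorem commonGraphBound_twist {A : Finset F} {Λ G : Finset (F × F)} {k : ℕ} (hA : A.card ≤ k)
    (hGA : ∀ g ∈ G, g.1 ∈ A)
    (hG : ∀ g ∈ G, (Λ.filter fun l => g.1 * l.1 + l.2 = g.2).card ≤ k) :
    CommonGraphBound (twistSlope : F × F × F → RatFunc F) twistPos twistIntercept
      (TwistRel Λ G) k := by
  intro j s τ _ hs
  by_cases hinj : Set.InjOn Prod.fst (s : Set (F × F × F))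
  · exact (Finset.card_le_card_of_injOn _ (fun i hi => hGA _ (hs i hi).2.2.1) hinj).trans hA
  simp only [Set.InjOn, not_forall] at hinj
  obtain ⟨i₁, h₁, i₂, h₂, h₁₂, hne⟩ := hinj
  have hslope : twistSlope i₁ = twistSlope i₂ := by
    rw [twistSlope, twistSlope, twistDenom, twistDenom, h₁₂]
  have hγ : τ.1 = 0 := by
    have hmul : τ.1 * (twistPos i₁ - twistPos i₂) = 0 := by
      linear_combination hslope - (hs i₁ h₁).1.1 + (hs i₂ h₂).1.1
    exact (mul_eq_zero.1 hmul).resolve_right (sub_ne_zero.2 (twistPos_injective.ne hne))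
  have hfst (i) (hi : i ∈ s) : i.1 = i₁.1 := fst_eq_of_twistSlope_eq (by
    rw [(hs i hi).1.1, (hs i₁ h₁).1.1, hγ, zero_mul, zero_mul])
  have hE₁ := (hs i₁ h₁).2
  refine (Finset.card_le_card_of_injOn Prod.snd (fun i hi => Finset.mem_coe.2
    (Finset.mem_filter.2 ⟨(hs i hi).2.2.2.2.1, ?_⟩)) fun x hx y hy hxy =>
      Prod.ext ((hfst x hx).trans (hfst y hy).symm) hxy).trans (hG _ hE₁.2.2.1)
  have hvalue := (hs i hi).2.1
  rw [hfst i hi, hE₁.1] at hvalue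
  exact hvalue.symm

/-- The pairs `(a, l)` such that the line `l` meets `G` above `a`. -/
def graphIncidences (A : Finset F) (Λ G : Finset (F × F)) : Finset (F × F × F) :=
  (A ×ˢ Λ).filter fun i => (i.1, lineValue i) ∈ G

theorem card_incidences_le_card_graphIncidences {A : Finset F} {Λ G : Finset (F × F)}
    (hGA : ∀ g ∈ G, g.1 ∈ A) :
    ((G ×ˢ Λ).filter fun z => z.1.1 * z.2.1 + z.2.2 = z.1.2).card ≤
      (graphIncidences A Λ G).card := by
  refine Finset.card_le_card_of_injOn (fun z => (z.1.1, z.2)) (fun z hz => ?_) ?_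
  · obtain ⟨hmem, heq⟩ := Finset.mem_filter.1 (Finset.mem_coe.1 hz)
    obtain ⟨hg, hl⟩ := Finset.mem_product.1 hmem
    refine Finset.mem_coe.2 (Finset.mem_filter.2 ⟨Finset.mem_product.2 ⟨hGA _ hg, hl⟩, ?_⟩)
    rwa [lineValue, heq]
  · rintro ⟨⟨a, b⟩, l⟩ hz ⟨⟨a', b'⟩, l'⟩ hz' h
    have heq := (Finset.mem_filter.1 (Finset.mem_coe.1 hz)).2
    have heq' := (Finset.mem_filter.1 (Finset.mem_coe.1 hz')).2
    simp only [Prod.mk.injEq] at h heq heq' ⊢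
    obtain ⟨rfl, rfl⟩ := h
    exact ⟨⟨rfl, heq.symm.trans heq'⟩, rfl⟩

/-- Two elements `(a, l)`, `(a', l')` of one fibre give the related pair `(a, l')`, `(a', l)`. -/
theorem sum_card_fiber_sq_le (A : Finset F) (B : Finset F) (Λ G : Finset (F × F))
    (hGB : ∀ g ∈ G, g.2 ∈ B) :
    ∑ b ∈ B, ((graphIncidences A Λ G).filter fun i => lineValue i = b).card ^ 2 ≤
      ∑ j ∈ A ×ˢ Λ, relDegree (TwistRel Λ G) (A ×ˢ Λ) j := by
  have hcard : ∑ j ∈ A ×ˢ Λ, relDegree (TwistRel Λ G) (A ×ˢ Λ) j =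
      (((A ×ˢ Λ) ×ˢ (A ×ˢ Λ)).filter fun z => TwistRel Λ G z.2 z.1).card := by
    rw [Finset.card_filter, Finset.sum_product (A ×ˢ Λ) (A ×ˢ Λ)]
    exact Finset.sum_congr rfl fun j _ => Finset.card_filter (fun i => TwistRel Λ G i j) _
  rw [hcard, Finset.card_eq_sum_card_fiberwise (t := B) (f := fun z => lineValue (z.1.1, z.2.2))
    fun z hz => hGB _ (Finset.mem_filter.1 (Finset.mem_coe.1 hz)).2.2.2.1]
  refine Finset.sum_le_sum fun b _ => ?_
  rw [sq, ← Finset.card_product]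
  refine Finset.card_le_card_of_injOn (fun z => ((z.1.1, z.2.2), (z.2.1, z.1.2))) ?_ ?_
  · rintro ⟨⟨a, l⟩, a', l'⟩ hz
    simp only [graphIncidences, Finset.coe_product, Set.mem_prod, Finset.mem_coe,
      Finset.mem_filter, Finset.mem_product] at hz ⊢
    obtain ⟨⟨⟨⟨ha, hl⟩, hG⟩, hb⟩, ⟨⟨ha', hl'⟩, hG'⟩, hb'⟩ := hz
    exact ⟨⟨⟨⟨ha, hl'⟩, ha', hl⟩, hb'.trans hb.symm, hG', hG, hl, hl'⟩, hb⟩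
  · rintro ⟨⟨a, l⟩, a', l'⟩ _ ⟨⟨b, m⟩, b', m'⟩ _ h
    simp only [Prod.mk.injEq] at h ⊢
    tauto

/-- The sum over `B` of the squared fibre sizes is the number of solutions of `l(a) = l'(a')`,
which is a number of incidences between red and blue lines. -/
theorem sq_card_incidences_le {p : ℕ} (hp : ∀ n : ℕ, n ≠ 0 → n < p → (n : F) ≠ 0) (hp2 : 2 ≤ p)
    {A B : Finset F} {Λ G : Finset (F × F)} {k N : ℕ} (hA : A.card ≤ k)
    (hGA : ∀ g ∈ G, g.1 ∈ A) (hGB : ∀ g ∈ G, g.2 ∈ B)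
    (hG : ∀ g ∈ G, (Λ.filter fun l => g.1 * l.1 + l.2 = g.2).card ≤ k)
    (hN : A.card * Λ.card ≤ N) (hNp : N ≤ 600 * p ^ 2) :
    (((G ×ˢ Λ).filter fun z => z.1.1 * z.2.1 + z.2.2 = z.1.2).card : ℝ) ^ 2 ≤
      B.card * (2 ^ 20 * (N * √N + k * N)) := by
  have hp' : ∀ n : ℕ, n ≠ 0 → n < p → (n : RatFunc F) ≠ 0 := natCast_ne_zero_of_injective
    (f := (algebraMap F[X] (RatFunc F)).comp C)
    ((RatFunc.algebraMap_injective F).comp C_injective) hp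
  have hR : (A ×ˢ Λ).card ≤ N := by rwa [Finset.card_product]
  have henergy := sum_relDegree_le hp' hp2 twistPos_injective
    (fun i j (h : TwistRel Λ G i j) => twistSlope_mul_twistPos_sub h.1) (fun _ _ => TwistRel.symm)
    (commonGraphBound_twist hA hGA hG) hNp hR hR
  have hcauchy : (graphIncidences A Λ G).card ^ 2 ≤
      B.card * ∑ j ∈ A ×ˢ Λ, relDegree (TwistRel Λ G) (A ×ˢ Λ) j := by
    rw [Finset.card_eq_sum_card_fiberwise (s := graphIncidences A Λ G) (t := B) (f := lineValue)
      fun i hi => hGB _ (Finset.mem_filter.1 (Finset.mem_coe.1 hi)).2]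
    exact sq_sum_le_card_mul_sum_sq.trans
      (Nat.mul_le_mul_left _ (sum_card_fiber_sq_le A B Λ G hGB))
  calc (((G ×ˢ Λ).filter fun z => z.1.1 * z.2.1 + z.2.2 = z.1.2).card : ℝ) ^ 2
      ≤ ((graphIncidences A Λ G).card : ℝ) ^ 2 := by
        gcongr
        exact card_incidences_le_card_graphIncidences hGA
    _ ≤ B.card * ∑ j ∈ A ×ˢ Λ, (relDegree (TwistRel Λ G) (A ×ˢ Λ) j : ℝ) := by
        exact_mod_cast hcauchy
    _ ≤ B.card * (2 ^ 20 * (N * √N + k * N)) := by gcongr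

end Grid

/-! ### Corners -/

section Corners

variable {α β : Type*} {inc : α → β → Prop} {Q : Finset α} {L : Finset β}

/-- Two distinct points of `Q` lie on at most one common line of `L`. -/
def IsPartialLinear (inc : α → β → Prop) (Q : Finset α) (L : Finset β) : Prop :=
  ∀ ⦃q⦄, q ∈ Q → ∀ ⦃q'⦄, q' ∈ Q → q ≠ q' → ∀ ⦃l⦄, l ∈ L → ∀ ⦃l'⦄, l' ∈ L →
    inc q l → inc q' l → inc q l' → inc q' l' → l = l'

/-- The lines of `L` through `q`. -/
def linesThrough (inc : α → β → Prop) (L : Finset β) (q : α) : Finset β := L.filter (inc q)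

/-- The points of `Q` on `l`. -/
def pointsOn (inc : α → β → Prop) (Q : Finset α) (l : β) : Finset α := Q.filter (inc · l)

/-- The points `x` of `Q` joined to `q₁` and `q₂` by two distinct lines of `L`. -/
def corner (inc : α → β → Prop) (Q : Finset α) (L : Finset β) (q₁ q₂ : α) : Finset α :=
  Q.filter fun x => x ≠ q₁ ∧ x ≠ q₂ ∧ ∃ l₁ ∈ L, ∃ l₂ ∈ L, l₁ ≠ l₂ ∧ inc x l₁ ∧ inc q₁ l₁ ∧
    inc x l₂ ∧ inc q₂ l₂

theorem mem_corner {q₁ q₂ x : α} : x ∈ corner inc Q L q₁ q₂ ↔ x ∈ Q ∧ x ≠ q₁ ∧ x ≠ q₂ ∧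
    ∃ l₁ ∈ L, ∃ l₂ ∈ L, l₁ ≠ l₂ ∧ inc x l₁ ∧ inc q₁ l₁ ∧ inc x l₂ ∧ inc q₂ l₂ :=
  Finset.mem_filter

theorem IsPartialLinear.corner_self (h : IsPartialLinear inc Q L) {q : α} (hq : q ∈ Q) :
    corner inc Q L q q = ∅ := by
  refine Finset.eq_empty_of_forall_notMem fun x hx => ?_
  obtain ⟨hxQ, hne, -, l₁, h₁, l₂, h₂, hl, hx₁, hq₁, hx₂, hq₂⟩ := mem_corner.1 hx
  exact hl (h hxQ hq hne h₁ h₂ hx₁ hq₁ hx₂ hq₂)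

theorem sum_card_linesThrough (inc : α → β → Prop) (Q : Finset α) (L : Finset β) :
    ∑ q ∈ Q, (linesThrough inc L q).card = ∑ l ∈ L, (pointsOn inc Q l).card :=
  Finset.sum_card_bipartiteAbove_eq_sum_card_bipartiteBelow _

theorem IsPartialLinear.sum_card_pointsOn_sq_le (h : IsPartialLinear inc Q L) :
    ∑ l ∈ L, (pointsOn inc Q l).card ^ 2 ≤
      ∑ q ∈ Q, (linesThrough inc L q).card + Q.card ^ 2 := by
  have hsq (l : β) : (pointsOn inc Q l).card ^ 2 ≤ (pointsOn inc Q l).card +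
      (Q.offDiag.filter fun z => inc z.1 l ∧ inc z.2 l).card := by
    have hsub : (pointsOn inc Q l).offDiag ⊆
        Q.offDiag.filter fun z => inc z.1 l ∧ inc z.2 l := fun z => by
      simp only [pointsOn, Finset.mem_filter, Finset.mem_offDiag]
      tauto
    have := Finset.card_le_card hsub
    rw [Finset.offDiag_card] at this
    rw [sq]
    omega
  refine (Finset.sum_le_sum fun l _ => hsq l).trans ?_
  rw [Finset.sum_add_distrib, ← sum_card_linesThrough]
  refine Nat.add_le_add_left ?_ _
  rw [show ∑ l ∈ L, (Q.offDiag.filter fun z => inc z.1 l ∧ inc z.2 l).card =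
    ∑ z ∈ Q.offDiag, (L.filter fun l => inc z.1 l ∧ inc z.2 l).card from
    Finset.sum_card_bipartiteAbove_eq_sum_card_bipartiteBelow
      fun (l : β) (z : α × α) => inc z.1 l ∧ inc z.2 l]
  refine (Finset.sum_le_card_nsmul _ _ 1 fun z hz => Finset.card_le_one.2 fun l hl l' hl' =>
    ?_).trans ?_
  · rw [Finset.mem_filter] at hl hl'
    obtain ⟨h₁, h₂, hne⟩ := Finset.mem_offDiag.1 hz
    exact h h₁ h₂ hne hl.1 hl'.1 hl.2.1 hl.2.2 hl'.2.1 hl'.2.2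
  · rw [smul_eq_mul, mul_one, Finset.offDiag_card, sq]
    exact Nat.sub_le _ _

theorem IsPartialLinear.card_mul_le (h : IsPartialLinear inc Q L) {k : ℕ}
    (hk : ∀ q ∈ Q, k ≤ (linesThrough inc L q).card) (hL : 2 * L.card ≤ k ^ 2) :
    Q.card * k ≤ 2 * L.card := by
  set I := ∑ q ∈ Q, (linesThrough inc L q).card with hI
  have hQI : Q.card * k ≤ I := Finset.card_nsmul_le_sum _ _ _ hk
  have hcauchy : I ^ 2 ≤ L.card * (I + Q.card ^ 2) := by
    rw [hI, sum_card_linesThrough]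
    refine sq_sum_le_card_mul_sum_sq.trans (Nat.mul_le_mul_left _ ?_)
    rw [← sum_card_linesThrough]
    exact h.sum_card_pointsOn_sq_le
  have hhalf : 2 * (L.card * Q.card ^ 2) ≤ I ^ 2 :=
    calc 2 * (L.card * Q.card ^ 2) = (2 * L.card) * Q.card ^ 2 := by ring
      _ ≤ k ^ 2 * Q.card ^ 2 := Nat.mul_le_mul_right _ hL
      _ = (Q.card * k) ^ 2 := by ring
      _ ≤ I ^ 2 := Nat.pow_le_pow_left hQI 2
  refine hQI.trans ?_
  by_contra! hlt
  nlinarith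

/-- Two lines through `x`, and a further point on each of them. -/
theorem IsPartialLinear.mul_card_offDiag_le (h : IsPartialLinear inc Q L) {ρ : ℕ} {L' : Finset β}
    (hL' : L' ⊆ L) (hρ : ∀ l ∈ L', ρ ≤ (pointsOn inc Q l).card) {x : α} (hx : x ∈ Q) :
    (ρ - 1) ^ 2 * (linesThrough inc L' x).offDiag.card ≤
      ((Q ×ˢ Q).filter fun z => x ∈ corner inc Q L z.1 z.2).card := by
  have hpts (l) (hl : l ∈ linesThrough inc L' x) : ρ - 1 ≤ ((pointsOn inc Q l).erase x).card := by
    obtain ⟨hlL', hxl⟩ := Finset.mem_filter.1 hl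
    rw [Finset.card_erase_of_mem
      (show x ∈ pointsOn inc Q l from Finset.mem_filter.2 ⟨hx, hxl⟩)]
    exact Nat.sub_le_sub_right (hρ l hlL') 1
  have huniq {q} (hq : q ∈ Q) (hqx : q ≠ x) {l l'} (hl : l ∈ L' ∧ inc x l)
      (hl' : l' ∈ L' ∧ inc x l') (hql : inc q l) (hql' : inc q l') : l = l' :=
    h hx hq hqx.symm (hL' hl.1) (hL' hl'.1) hl.2 hql hl'.2 hql'
  have hdisj : ((linesThrough inc L' x).offDiag : Set (β × β)).PairwiseDisjoint
      fun l => (pointsOn inc Q l.1).erase x ×ˢ (pointsOn inc Q l.2).erase x := by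
    intro l hl l' hl' hne
    refine Finset.disjoint_left.2 fun z hz hz' => hne ?_
    simp only [linesThrough, pointsOn, Finset.mem_coe, Finset.mem_offDiag, Finset.mem_filter,
      Finset.mem_product, Finset.mem_erase] at hl hl' hz hz'
    exact Prod.ext (huniq hz.1.2.1 hz.1.1 hl.1 hl'.1 hz.1.2.2 hz'.1.2.2)
      (huniq hz.2.2.1 hz.2.1 hl.2.1 hl'.2.1 hz.2.2.2 hz'.2.2.2)
  calc (ρ - 1) ^ 2 * (linesThrough inc L' x).offDiag.card
      ≤ ∑ l ∈ (linesThrough inc L' x).offDiag,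
          ((pointsOn inc Q l.1).erase x ×ˢ (pointsOn inc Q l.2).erase x).card := by
        rw [mul_comm]
        refine Finset.card_nsmul_le_sum _ _ _ fun l hl => ?_
        obtain ⟨h₁, h₂, -⟩ := Finset.mem_offDiag.1 hl
        rw [Finset.card_product, sq]
        exact Nat.mul_le_mul (hpts _ h₁) (hpts _ h₂)
    _ = ((linesThrough inc L' x).offDiag.biUnion fun l =>
          (pointsOn inc Q l.1).erase x ×ˢ (pointsOn inc Q l.2).erase x).card :=
        (Finset.card_biUnion hdisj).symm
    _ ≤ _ := Finset.card_le_card fun z hz => by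
        simp only [linesThrough, pointsOn, Finset.mem_biUnion, Finset.mem_offDiag,
          Finset.mem_filter, Finset.mem_product, Finset.mem_erase, mem_corner] at hz ⊢
        obtain ⟨l, ⟨⟨h₁, hx₁⟩, ⟨h₂, hx₂⟩, hne⟩, ⟨hz₁, hQ₁, hl₁⟩, hz₂, hQ₂, hl₂⟩ := hz
        exact ⟨⟨hQ₁, hQ₂⟩, hx, hz₁.symm, hz₂.symm, l.1, hL' h₁, l.2, hL' h₂, hne, hx₁, hl₁,
          hx₂, hl₂⟩

theorem IsPartialLinear.mul_sum_card_offDiag_le (h : IsPartialLinear inc Q L) {ρ : ℕ}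
    {L' : Finset β} (hL' : L' ⊆ L) (hρ : ∀ l ∈ L', ρ ≤ (pointsOn inc Q l).card) :
    (ρ - 1) ^ 2 * ∑ x ∈ Q, (linesThrough inc L' x).offDiag.card ≤
      ∑ z ∈ Q ×ˢ Q, (corner inc Q L z.1 z.2).card := by
  rw [Finset.mul_sum]
  refine (Finset.sum_le_sum fun x hx => h.mul_card_offDiag_le hL' hρ hx).trans_eq ?_
  refine (Finset.sum_card_bipartiteAbove_eq_sum_card_bipartiteBelow
    fun x (z : α × α) => x ∈ corner inc Q L z.1 z.2).trans ?_
  exact Finset.sum_congr rfl fun z _ => congrArg _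
    (Finset.filter_mem_eq_inter.trans (Finset.inter_eq_right.2 (Finset.filter_subset _ _)))

theorem mul_le_two_mul_sum_card_linesThrough_rich {k ρ : ℕ}
    (hk : ∀ q ∈ Q, k ≤ (linesThrough inc L q).card) (hρ : ρ * (2 * L.card) ≤ Q.card * k) :
    Q.card * k ≤ 2 * ∑ x ∈ Q,
      (linesThrough inc (L.filter fun l => ρ ≤ (pointsOn inc Q l).card) x).card := by
  have hI : Q.card * k ≤ ∑ q ∈ Q, (linesThrough inc L q).card :=
    Finset.card_nsmul_le_sum _ _ _ hk
  have hpoor : ∑ l ∈ L.filter (fun l => ¬ ρ ≤ (pointsOn inc Q l).card), (pointsOn inc Q l).card ≤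
      L.card * ρ :=
    (Finset.sum_le_card_nsmul _ _ ρ fun l hl => (not_le.1 (Finset.mem_filter.1 hl).2).le).trans
      (Nat.mul_le_mul_right _ (Finset.card_filter_le _ _))
  rw [sum_card_linesThrough, ← Finset.sum_filter_add_sum_filter_not L
    (fun l => ρ ≤ (pointsOn inc Q l).card)] at hI
  rw [sum_card_linesThrough]
  nlinarith

/-- For `r = #t` the estimate `r² ≥ kr - k² / 4` is summed. -/
theorem mul_sq_le_sum_card_offDiag {k : ℕ} (hk : 4 ≤ k) {t : α → Finset β}
    (ht : Q.card * k ≤ 2 * ∑ x ∈ Q, (t x).card) :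
    Q.card * k ^ 2 ≤ 8 * ∑ x ∈ Q, (t x).offDiag.card := by
  have hpoint (x : α) : 4 * (k - 1) * (t x).card ≤ 4 * (t x).offDiag.card + k ^ 2 := by
    rw [Finset.offDiag_card]
    zify [Nat.le_mul_self (t x).card, (by omega : 1 ≤ k)]
    nlinarith [sq_nonneg (2 * ((t x).card : ℤ) - k)]
  have hsum := Finset.sum_le_sum fun x (_ : x ∈ Q) => hpoint x
  rw [← Finset.mul_sum, Finset.sum_add_distrib, ← Finset.mul_sum, Finset.sum_const,
    smul_eq_mul] at hsum
  have hmul := Nat.mul_le_mul_left (4 * (k - 1)) ht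
  have hk2 : Q.card * k ^ 2 + 2 * (Q.card * k ^ 2) ≤ 4 * (k - 1) * (Q.card * k) := by
    zify [(by omega : 1 ≤ k)] at hk ⊢
    nlinarith [mul_nonneg (Nat.cast_nonneg Q.card) (mul_nonneg (by linarith : (0 : ℤ) ≤ k)
      (by linarith : (0 : ℤ) ≤ k - 4))]
  linarith

theorem IsPartialLinear.card_mul_le_or_exists_corner (h : IsPartialLinear inc Q L) {k : ℕ}
    (hk4 : 4 ≤ k) (hk : ∀ q ∈ Q, k ≤ (linesThrough inc L q).card) :
    Q.card * k ≤ 4 * L.card ∨ ∃ q₁ ∈ Q, ∃ q₂ ∈ Q, q₁ ≠ q₂ ∧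
      Q.card * k ^ 4 ≤ 288 * L.card ^ 2 * (corner inc Q L q₁ q₂).card := by
  refine or_iff_not_imp_left.2 fun hlt => ?_
  rw [not_le] at hlt
  have hQ : Q.Nonempty := Finset.card_pos.1 (Nat.pos_of_ne_zero fun h0 => by
    rw [h0, zero_mul] at hlt
    exact Nat.not_lt_zero _ hlt)
  obtain ⟨q₀, hq₀⟩ := hQ
  have hL : 0 < 2 * L.card := by
    have := (hk q₀ hq₀).trans (Finset.card_filter_le _ _)
    omega
  set ρ := Q.card * k / (2 * L.card)
  have hρ2 : 2 ≤ ρ := (Nat.le_div_iff_mul_le hL).2 (by omega)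
  have hρlt : Q.card * k < (ρ + 1) * (2 * L.card) := Nat.lt_mul_of_div_lt (Nat.lt_succ_self _) hL
  have hρ6 : Q.card * k ≤ 6 * L.card * (ρ - 1) := by
    have := Nat.mul_le_mul_right (2 * L.card) (show ρ + 1 ≤ 3 * (ρ - 1) by omega)
    linarith
  have hpairs := mul_sq_le_sum_card_offDiag hk4
    (mul_le_two_mul_sum_card_linesThrough_rich hk (Nat.div_mul_le_self _ _))
  have hcorner := h.mul_sum_card_offDiag_le (Finset.filter_subset _ L)
    fun l (hl : l ∈ L.filter fun l => ρ ≤ (pointsOn inc Q l).card) => (Finset.mem_filter.1 hl).2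
  set L' := L.filter fun l => ρ ≤ (pointsOn inc Q l).card
  set P := ∑ x ∈ Q, (linesThrough inc L' x).offDiag.card
  obtain ⟨z, hz, hzc⟩ := Finset.exists_le_of_sum_le (s := Q ×ˢ Q) (f := fun _ => Q.card * k ^ 4)
    (g := fun z => 288 * L.card ^ 2 * (corner inc Q L z.1 z.2).card)
    ⟨(q₀, q₀), Finset.mk_mem_product hq₀ hq₀⟩ (by
      rw [Finset.sum_const, smul_eq_mul, Finset.card_product, ← Finset.mul_sum]
      calc Q.card * Q.card * (Q.card * k ^ 4) = (Q.card * k) ^ 2 * (Q.card * k ^ 2) := by ring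
        _ ≤ (6 * L.card * (ρ - 1)) ^ 2 * (8 * P) := by gcongr
        _ = 288 * L.card ^ 2 * ((ρ - 1) ^ 2 * P) := by ring
        _ ≤ _ := Nat.mul_le_mul_left _ hcorner)
  obtain ⟨h₁, h₂⟩ := Finset.mem_product.1 hz
  refine ⟨z.1, h₁, z.2, h₂, fun heq => ?_, hzc⟩
  rw [← heq, h.corner_self h₁, Finset.card_empty, mul_zero] at hzc
  have : 0 < Q.card * k ^ 4 := by
    have := Finset.card_pos.2 ⟨q₀, hq₀⟩
    positivity
  omega

end Corners

/-! ### From corners to grids -/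

section Projective

variable {F V : Type*} [Field F] [AddCommGroup V] [Module F V]

/-- The map `v` induces an injection of `Q` into the projective space of `V`. -/
structure ProjInjOn {α : Type*} (F : Type*) {V : Type*} [Field F] [AddCommGroup V] [Module F V]
    (v : α → V) (Q : Finset α) : Prop where
  ne_zero : ∀ q ∈ Q, v q ≠ 0
  ne_smul : ∀ q ∈ Q, ∀ q' ∈ Q, q ≠ q' → ∀ c : F, v q' ≠ c • v q

/-- The point of projective space given by `v q` lies on the hyperplane given by `w l`. -/
def ProjIncident {α β : Type*} (v : α → V) (w : β → Module.Dual F V) (q : α) (l : β) : Prop :=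
  w l (v q) = 0

theorem ProjInjOn.linearIndependent {α : Type*} {v : α → V} {Q : Finset α} (hv : ProjInjOn F v Q)
    {q q' : α} (hq : q ∈ Q) (hq' : q' ∈ Q) (hne : q ≠ q') :
    LinearIndependent F ![v q, v q'] :=
  (LinearIndependent.pair_iff' (hv.ne_zero q hq)).2 fun c h => hv.ne_smul q hq q' hq' hne c h.symm

theorem exists_basis_fin_three (h3 : Module.finrank F V = 3) {x y : V}
    (hxy : LinearIndependent F ![x, y]) :
    ∃ b : Module.Basis (Fin 3) F V, b 1 = x ∧ b 2 = y := by
  obtain ⟨e, he⟩ := exists_linearIndependent_cons_of_lt_finrank hxy (by omega)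
  refine ⟨basisOfLinearIndependentOfCardEqFinrank he (by rw [h3, Fintype.card_fin]), ?_, ?_⟩ <;>
    rw [coe_basisOfLinearIndependentOfCardEqFinrank] <;> rfl

theorem apply_eq_sum_three (b : Module.Basis (Fin 3) F V) (w : Module.Dual F V) (u : V) :
    w u = b.repr u 0 * w (b 0) + b.repr u 1 * w (b 1) + b.repr u 2 * w (b 2) := by
  conv_lhs => rw [← b.sum_repr u, Fin.sum_univ_three]
  simp only [map_add, map_smul, smul_eq_mul]

theorem exists_eq_smul_of_apply_eq_zero (h3 : Module.finrank F V = 3) {x y : V}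
    (hxy : LinearIndependent F ![x, y]) {w w' : Module.Dual F V} (hw : w ≠ 0) (hx : w x = 0)
    (hy : w y = 0) (hx' : w' x = 0) (hy' : w' y = 0) : ∃ c : F, w' = c • w := by
  obtain ⟨b, rfl, rfl⟩ := exists_basis_fin_three h3 hxy
  have happly (u : V) : w u = b.repr u 0 * w (b 0) := by
    rw [apply_eq_sum_three b, hx, hy, mul_zero, mul_zero, add_zero, add_zero]
  have happly' (u : V) : w' u = b.repr u 0 * w' (b 0) := by
    rw [apply_eq_sum_three b, hx', hy', mul_zero, mul_zero, add_zero, add_zero]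
  have h0 : w (b 0) ≠ 0 := fun h0 => hw (LinearMap.ext fun u => by
    rw [happly, h0, mul_zero, LinearMap.zero_apply])
  refine ⟨w' (b 0) / w (b 0), LinearMap.ext fun u => ?_⟩
  rw [LinearMap.smul_apply, smul_eq_mul, happly u, happly' u]
  field_simp

theorem isPartialLinear_projIncident {α β : Type*} {v : α → V} {w : β → Module.Dual F V}
    {Q : Finset α} {L : Finset β} (h3 : Module.finrank F V = 3) (hv : ProjInjOn F v Q)
    (hw : ProjInjOn F w L) : IsPartialLinear (ProjIncident v w) Q L := by
  intro q hq q' hq' hne l hl l' hl' h₁ h₂ h₁' h₂'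
  by_contra hll
  obtain ⟨c, hc⟩ := exists_eq_smul_of_apply_eq_zero h3 (hv.linearIndependent hq hq' hne)
    (hw.ne_zero l hl) h₁ h₂ h₁' h₂'
  exact hw.ne_smul l hl l' hl' hll c hc

end Projective

section AffineChart

variable {F V : Type*} [Field F] [AddCommGroup V] [Module F V] (b : Module.Basis (Fin 3) F V)

/-- Affine coordinates in which `b 1` and `b 2` are the points at infinity of the coordinate
axes. -/
def pointCoord (u : V) : F × F := (b.repr u 2 / b.repr u 0, b.repr u 1 / b.repr u 0)

/-- Slope and intercept, in the coordinates `pointCoord b`, of a line which does not pass through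
`b 1`. -/
def lineCoord (w : Module.Dual F V) : F × F := (-(w (b 2) / w (b 1)), -(w (b 0) / w (b 1)))

variable {b} {u u' : V} {w w' : Module.Dual F V}

theorem apply_eq_zero_iff_pointCoord (hu : b.repr u 0 ≠ 0) (hw : w (b 1) ≠ 0) :
    w u = 0 ↔ (pointCoord b u).1 * (lineCoord b w).1 + (lineCoord b w).2 =
      (pointCoord b u).2 := by
  rw [apply_eq_sum_three b, pointCoord, lineCoord]
  field_simp
  constructor <;> intro h <;> linear_combination -h

theorem eq_smul_of_pointCoord_eq (hu : b.repr u 0 ≠ 0) (hu' : b.repr u' 0 ≠ 0)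
    (h : pointCoord b u = pointCoord b u') : u' = (b.repr u' 0 / b.repr u 0) • u := by
  rw [pointCoord, pointCoord, Prod.mk.injEq, div_eq_div_iff hu hu', div_eq_div_iff hu hu'] at h
  refine b.ext_elem fun i => ?_
  rw [map_smul, Finsupp.smul_apply, smul_eq_mul]
  fin_cases i
  · change b.repr u' 0 = _ * b.repr u 0
    field_simp
  · change b.repr u' 1 = _ * b.repr u 1
    field_simp
    linear_combination -h.2
  · change b.repr u' 2 = _ * b.repr u 2
    field_simp
    linear_combination -h.1

theorem eq_smul_of_lineCoord_eq (hw : w (b 1) ≠ 0) (hw' : w' (b 1) ≠ 0)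
    (h : lineCoord b w = lineCoord b w') : w' = (w' (b 1) / w (b 1)) • w := by
  rw [lineCoord, lineCoord, Prod.mk.injEq, neg_inj, neg_inj, div_eq_div_iff hw hw',
    div_eq_div_iff hw hw'] at h
  refine b.ext fun i => ?_
  rw [LinearMap.smul_apply, smul_eq_mul]
  fin_cases i
  · change w' (b 0) = _ * w (b 0)
    field_simp
    linear_combination -h.2
  · change w' (b 1) = _ * w (b 1)
    field_simp
  · change w' (b 2) = _ * w (b 2)
    field_simp
    linear_combination -h.1

theorem pointCoord_fst_eq (hu : b.repr u 0 ≠ 0) (h₁ : w (b 1) = 0) (h₂ : w (b 2) ≠ 0)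
    (h : w u = 0) : (pointCoord b u).1 = -(w (b 0) / w (b 2)) := by
  rw [apply_eq_sum_three b, h₁] at h
  rw [pointCoord]
  field_simp
  linear_combination h

theorem pointCoord_snd_eq (hu : b.repr u 0 ≠ 0) (h₂ : w (b 2) = 0) (h₁ : w (b 1) ≠ 0)
    (h : w u = 0) : (pointCoord b u).2 = -(w (b 0) / w (b 1)) := by
  rw [apply_eq_sum_three b, h₂] at h
  rw [pointCoord]
  field_simp
  linear_combination h

theorem repr_zero_ne_zero (hu : u ≠ 0) (h₁ : w (b 1) = 0) (h₂ : w (b 2) ≠ 0) (h : w u = 0)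
    (h₂' : w' (b 2) = 0) (h₁' : w' (b 1) ≠ 0) (h' : w' u = 0) : b.repr u 0 ≠ 0 := by
  intro h0
  rw [apply_eq_sum_three b, h0, h₁, zero_mul, mul_zero, zero_add, zero_add] at h
  rw [apply_eq_sum_three b, h0, h₂', zero_mul, mul_zero, zero_add, add_zero] at h'
  refine hu (b.ext_elem fun i => ?_)
  rw [map_zero, Finsupp.zero_apply]
  fin_cases i
  exacts [h0, (mul_eq_zero.1 h').resolve_right h₁', (mul_eq_zero.1 h).resolve_right h₂]

end AffineChart

section CornerBound

variable {α β : Type*}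

theorem IsPartialLinear.card_linesThrough_le_add_one {inc : α → β → Prop} {Q : Finset α}
    {L : Finset β} (h : IsPartialLinear inc Q L) {x q : α} (hx : x ∈ Q) (hq : q ∈ Q)
    (hne : x ≠ q) :
    (linesThrough inc L x).card ≤
      (linesThrough inc (L.filter fun l => ¬ inc q l) x).card + 1 := by
  rw [← Finset.card_filter_add_card_filter_not (s := linesThrough inc L x) fun l => ¬ inc q l]
  refine add_le_add (Finset.card_le_card fun l hl => ?_)
    (Finset.card_le_one.2 fun l hl l' hl' => ?_)
  · simp only [linesThrough, Finset.mem_filter] at hl ⊢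
    tauto
  · simp only [linesThrough, Finset.mem_filter, not_not] at hl hl'
    exact h hx hq hne hl.1.1 hl'.1.1 hl.1.2 hl.2 hl'.1.2 hl'.2

variable {F : Type*} [Field F] {p : ℕ}

theorem sq_card_mul_le_of_coordinates (hp : ∀ n : ℕ, n ≠ 0 → n < p → (n : F) ≠ 0) (hp2 : 2 ≤ p)
    {inc : α → β → Prop} {X : Finset α} {L : Finset β} {g : α → F × F} {h : β → F × F}
    (hg : Set.InjOn g X) (hh : Set.InjOn h L)
    (hinc : ∀ x ∈ X, ∀ l ∈ L, inc x l ↔ (g x).1 * (h l).1 + (h l).2 = (g x).2)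
    {A B : Finset F} (hgA : ∀ x ∈ X, (g x).1 ∈ A) (hgB : ∀ x ∈ X, (g x).2 ∈ B) {m k N : ℕ}
    (hA : A.card ≤ k) (hm : ∀ x ∈ X, m ≤ (linesThrough inc L x).card)
    (hk : ∀ x ∈ X, (linesThrough inc L x).card ≤ k) (hN : A.card * L.card ≤ N)
    (hNp : N ≤ 600 * p ^ 2) :
    ((X.card * m : ℕ) : ℝ) ^ 2 ≤ B.card * (2 ^ 20 * (N * √N + k * N)) := by
  have hlines (x) (hx : x ∈ X) :
      ((L.image h).filter fun l => (g x).1 * l.1 + l.2 = (g x).2).card =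
        (linesThrough inc L x).card := by
    rw [Finset.filter_image, Finset.card_image_of_injOn
      (hh.mono (Finset.coe_subset.2 (Finset.filter_subset _ _))), linesThrough,
      Finset.filter_congr fun l hl => hinc x hx l hl]
  have hcard : X.card * m ≤ (((X.image g) ×ˢ (L.image h)).filter
      fun z => z.1.1 * z.2.1 + z.2.2 = z.1.2).card := by
    rw [Finset.card_filter, Finset.sum_product, Finset.sum_image hg]
    refine Finset.card_nsmul_le_sum _ _ _ fun x hx => ?_
    rw [← Finset.card_filter, hlines x hx]
    exact hm x hx
  refine (pow_le_pow_left₀ (Nat.cast_nonneg _) (Nat.cast_le.2 hcard) 2).trans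
    (sq_card_incidences_le hp hp2 hA (Finset.forall_mem_image.2 hgA) (Finset.forall_mem_image.2 hgB)
      (Finset.forall_mem_image.2 fun x hx => (hlines x hx).trans_le (hk x hx)) ?_ hNp)
  exact (Nat.mul_le_mul_left _ Finset.card_image_le).trans hN

variable {V : Type*} [AddCommGroup V] [Module F V] {v : α → V} {w : β → Module.Dual F V}
  {Q : Finset α} {L : Finset β}

theorem exists_lines_of_mem_corner (hpl : IsPartialLinear (ProjIncident v w) Q L) {q₁ q₂ x : α}
    (hq₁ : q₁ ∈ Q) (hq₂ : q₂ ∈ Q) (hx : x ∈ corner (ProjIncident v w) Q L q₁ q₂) :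
    (∃ l ∈ L, w l (v q₁) = 0 ∧ w l (v q₂) ≠ 0 ∧ w l (v x) = 0) ∧
      ∃ l ∈ L, w l (v q₂) = 0 ∧ w l (v q₁) ≠ 0 ∧ w l (v x) = 0 := by
  obtain ⟨hxQ, hne₁, hne₂, l₁, hl₁, l₂, hl₂, hne, hx₁, h₁, hx₂, h₂⟩ := mem_corner.1 hx
  exact ⟨⟨l₁, hl₁, h₁, fun h => hne (hpl hxQ hq₂ hne₂ hl₁ hl₂ hx₁ h hx₂ h₂), hx₁⟩,
    ⟨l₂, hl₂, h₂, fun h => hne (hpl hxQ hq₁ hne₁ hl₁ hl₂ hx₁ h₁ hx₂ h), hx₂⟩⟩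

/-- Sending `q₁` and `q₂` to infinity turns a corner into a subset of a small grid. -/
theorem sq_card_corner_mul_le (hp : ∀ n : ℕ, n ≠ 0 → n < p → (n : F) ≠ 0) (hp2 : 2 ≤ p)
    (h3 : Module.finrank F V = 3) (hv : ProjInjOn F v Q) (hw : ProjInjOn F w L) {k K N : ℕ}
    (hk : ∀ q ∈ Q, k ≤ (linesThrough (ProjIncident v w) L q).card)
    (hK : ∀ q ∈ Q, (linesThrough (ProjIncident v w) L q).card ≤ K)
    (hN : K * L.card ≤ N) (hNp : N ≤ 600 * p ^ 2) {q₁ q₂ : α} (hq₁ : q₁ ∈ Q) (hq₂ : q₂ ∈ Q)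
    (hne : q₁ ≠ q₂) :
    (((corner (ProjIncident v w) Q L q₁ q₂).card * (k - 1) : ℕ) : ℝ) ^ 2 ≤
      K * (2 ^ 20 * (N * √N + K * N)) := by
  have hpl := isPartialLinear_projIncident h3 hv hw
  obtain ⟨b, hb₁, hb₂⟩ := exists_basis_fin_three h3 (hv.linearIndependent hq₁ hq₂ hne)
  set X := corner (ProjIncident v w) Q L q₁ q₂
  have hXQ : X ⊆ Q := Finset.filter_subset _ _
  have hlines (x) (hx : x ∈ X) := exists_lines_of_mem_corner hpl hq₁ hq₂ hx
  rw [← hb₁, ← hb₂] at hlines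
  have h0 (x) (hx : x ∈ X) : b.repr (v x) 0 ≠ 0 := by
    obtain ⟨⟨_, -, h₁, h₂, h⟩, _, -, h₂', h₁', h'⟩ := hlines x hx
    exact repr_zero_ne_zero (hv.ne_zero x (hXQ hx)) h₁ h₂ h h₂' h₁' h'
  set L₁ := L.filter fun l => ¬ ProjIncident v w q₁ l
  have hL₁ (l) (hl : l ∈ L₁) : w l (b 1) ≠ 0 := hb₁ ▸ (Finset.mem_filter.1 hl).2
  set A := (linesThrough (ProjIncident v w) L q₁).image fun l => -(w l (b 0) / w l (b 2))
  set B := (linesThrough (ProjIncident v w) L q₂).image fun l => -(w l (b 0) / w l (b 1))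
  have hA : A.card ≤ K := Finset.card_image_le.trans (hK q₁ hq₁)
  have hB : B.card ≤ K := Finset.card_image_le.trans (hK q₂ hq₂)
  refine (sq_card_mul_le_of_coordinates hp hp2 (inc := ProjIncident v w) (X := X) (L := L₁)
    (g := fun x => pointCoord b (v x)) (h := fun l => lineCoord b (w l)) (A := A) (B := B)
    (fun x hx x' hx' h => ?_) (fun l hl l' hl' h => ?_)
    (fun x hx l hl => apply_eq_zero_iff_pointCoord (h0 x hx) (hL₁ l hl)) (fun x hx => ?_)
    (fun x hx => ?_) hA (fun x hx => ?_) (fun x hx => ?_)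
    ((Nat.mul_le_mul hA (Finset.card_filter_le _ _)).trans hN) hNp).trans
    (mul_le_mul_of_nonneg_right (Nat.cast_le.2 hB) (by positivity))
  · by_contra hxx
    exact hv.ne_smul x (hXQ hx) x' (hXQ hx') hxx _
      (eq_smul_of_pointCoord_eq (h0 x hx) (h0 x' hx') h)
  · by_contra hll
    exact hw.ne_smul l (Finset.mem_filter.1 hl).1 l' (Finset.mem_filter.1 hl').1 hll _
      (eq_smul_of_lineCoord_eq (hL₁ l hl) (hL₁ l' hl') h)
  · obtain ⟨⟨l, hl, h₁, h₂, h⟩, -⟩ := hlines x hx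
    exact Finset.mem_image.2 ⟨l, Finset.mem_filter.2 ⟨hl, (congrArg (w l) hb₁).symm.trans h₁⟩,
      (pointCoord_fst_eq (h0 x hx) h₁ h₂ h).symm⟩
  · obtain ⟨-, l, hl, h₂, h₁, h⟩ := hlines x hx
    exact Finset.mem_image.2 ⟨l, Finset.mem_filter.2 ⟨hl, (congrArg (w l) hb₂).symm.trans h₂⟩,
      (pointCoord_snd_eq (h0 x hx) h₂ h₁ h).symm⟩
  · have := hpl.card_linesThrough_le_add_one (hXQ hx) hq₁ (mem_corner.1 hx).2.1
    exact Nat.sub_le_iff_le_add.2 ((hk x (hXQ hx)).trans this)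
  · exact (Finset.card_le_card (Finset.filter_subset_filter _ (Finset.filter_subset _ _))).trans
      (hK x (hXQ hx))

end CornerBound

/-! ### Rich points in a projective plane -/

section RichPoints

theorem pow_four_le_of_sq_mul_le {g k n : ℝ} (hg : 0 ≤ g) (hk : 4 ≤ k) (hkn : k ≤ n)
    (h : (g * (k - 1)) ^ 2 ≤
      100 * k * (2 ^ 20 * (100 * k * n * √(100 * k * n) + 100 * k * (100 * k * n)))) :
    g ^ 4 ≤ 2 ^ 86 * k * n ^ 3 := by
  set s := √(100 * k * n)
  have hn : 0 < n := by linarith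
  have hs2 : s ^ 2 = 100 * k * n := Real.sq_sqrt (by positivity)
  have : 0 ≤ s := Real.sqrt_nonneg _
  have hks : 100 * k ≤ 10 * s := le_of_sq_le_sq (by nlinarith) (by positivity)
  have hsq : (g * (k - 1)) ^ 2 ≤ 100 * k * (2 ^ 20 * (11 * s ^ 3)) := by
    refine h.trans ?_
    rw [← hs2]
    have : s ^ 2 * s + 100 * k * s ^ 2 ≤ 11 * s ^ 3 := by nlinarith [sq_nonneg s]
    gcongr
  have hfour : g ^ 4 * k ^ 4 ≤ 16 * 121 * 2 ^ 40 * 10 ^ 10 * k * n ^ 3 * k ^ 4 :=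
    calc g ^ 4 * k ^ 4 = 16 * (g * (k / 2)) ^ 4 := by ring
      _ ≤ 16 * (g * (k - 1)) ^ 4 := by gcongr; linarith
      _ = 16 * ((g * (k - 1)) ^ 2) ^ 2 := by ring
      _ ≤ 16 * (100 * k * (2 ^ 20 * (11 * s ^ 3))) ^ 2 := by gcongr
      _ = 16 * 121 * 2 ^ 40 * 10 ^ 4 * k ^ 2 * (s ^ 2) ^ 3 := by ring
      _ = 16 * 121 * 2 ^ 40 * 10 ^ 10 * k * n ^ 3 * k ^ 4 := by rw [hs2]; ring
  refine (le_of_mul_le_mul_right hfour (by positivity)).trans ?_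
  gcongr
  norm_num

theorem pow_four_mul_pow_le_of_corner {m k n g : ℝ} (hm : 0 ≤ m) (hk : 0 < k) (hn : 0 ≤ n)
    (hg : g ^ 4 ≤ 2 ^ 86 * k * n ^ 3) (h : m * k ^ 4 ≤ 288 * n ^ 2 * g) :
    m ^ 4 * k ^ 15 ≤ 2 ^ 120 * n ^ 11 := by
  refine le_of_mul_le_mul_right (a := k) ?_ hk
  calc m ^ 4 * k ^ 15 * k = (m * k ^ 4) ^ 4 := by ring
    _ ≤ (288 * n ^ 2 * g) ^ 4 := by gcongr
    _ = 288 ^ 4 * n ^ 8 * g ^ 4 := by ring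
    _ ≤ 288 ^ 4 * n ^ 8 * (2 ^ 86 * k * n ^ 3) := by gcongr
    _ = (288 ^ 4 * 2 ^ 86) * (n ^ 11 * k) := by ring
    _ ≤ 2 ^ 120 * (n ^ 11 * k) := by gcongr; norm_num
    _ = 2 ^ 120 * n ^ 11 * k := by ring

variable {F V α β : Type*} [Field F] [AddCommGroup V] [Module F V] {v : α → V}
  {w : β → Module.Dual F V} {Q : Finset α} {L : Finset β} {p k : ℕ}

theorem card_richPoints_le (hp : ∀ n : ℕ, n ≠ 0 → n < p → (n : F) ≠ 0) (hp2 : 2 ≤ p)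
    (h3 : Module.finrank F V = 3) (hv : ProjInjOn F v Q) (hw : ProjInjOn F w L) (hk4 : 4 ≤ k)
    (hk : ∀ q ∈ Q, k ≤ (linesThrough (ProjIncident v w) L q).card)
    (hK : ∀ q ∈ Q, (linesThrough (ProjIncident v w) L q).card ≤ 100 * k)
    (hnp : L.card ^ 3 ≤ p ^ 4) :
    Q.card * k ≤ 4 * L.card ∨ (Q.card : ℝ) ^ 4 * k ^ 15 ≤ 2 ^ 120 * (L.card : ℝ) ^ 11 := by
  have hpl := isPartialLinear_projIncident h3 hv hw
  rcases le_or_gt (2 * L.card) (k ^ 2) with hkn | hkn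
  · exact Or.inl ((hpl.card_mul_le hk hkn).trans (by omega))
  refine (hpl.card_mul_le_or_exists_corner hk4 hk).imp_right ?_
  rintro ⟨q₁, hq₁, q₂, hq₂, hne, hcorner⟩
  have hkL : k ≤ L.card := (hk q₁ hq₁).trans (Finset.card_filter_le _ _)
  have hN : 100 * k * L.card ≤ 600 * p ^ 2 := by
    refine (Nat.pow_le_pow_iff_left two_ne_zero).1 ?_
    have : L.card ^ 2 * k ^ 2 ≤ L.card ^ 2 * (2 * L.card) := Nat.mul_le_mul_left _ hkn.le
    nlinarith
  have hsq := sq_card_corner_mul_le hp hp2 h3 hv hw hk hK le_rfl hN hq₁ hq₂ hne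
  push_cast [Nat.cast_sub (by omega : 1 ≤ k)] at hsq
  refine pow_four_mul_pow_le_of_corner (Nat.cast_nonneg _) (Nat.cast_pos.2 (by omega))
    (Nat.cast_nonneg _) (pow_four_le_of_sq_mul_le (Nat.cast_nonneg _) ?_ (Nat.cast_le.2 hkL) hsq) ?_
  · exact_mod_cast hk4
  · exact_mod_cast hcorner

end RichPoints

/-! ### Linear systems of plane curves -/

section LinearSystems
open MvPolynomial

variable {F α : Type*} [Field F]

/-- The plane curve `f γ = 0` passes through `x`. -/
def OnCurve (f : α → MvPolynomial (Fin 2) F) (x : Fin 2 → F) (γ : α) : Prop := eval x (f γ) = 0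

/-- The points of `P` common to all curves of the linear system `V`. -/
def basePoints (V : Submodule F (MvPolynomial (Fin 2) F)) (P : Finset (Fin 2 → F)) :
    Finset (Fin 2 → F) :=
  P.filter fun x => ∀ g ∈ V, eval x g = 0

/-- A finite family of pairwise distinct irreducible curves of degree `d` in the linear system `V`,
each containing between `k` and `2k` points of `P`. Curves are given by their equations, so that
being distinct means having non-proportional equations. -/
structure IsRichFamily (P : Finset (Fin 2 → F)) (k d : ℕ)
    (V : Submodule F (MvPolynomial (Fin 2) F)) (f : α → MvPolynomial (Fin 2) F)
    (C : Finset α) : Prop where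
  mem : ∀ γ ∈ C, f γ ∈ V
  irreducible : ∀ γ ∈ C, Irreducible (f γ)
  totalDegree_eq : ∀ γ ∈ C, (f γ).totalDegree = d
  le_card : ∀ γ ∈ C, k ≤ (pointsOn (OnCurve f) P γ).card
  card_le : ∀ γ ∈ C, (pointsOn (OnCurve f) P γ).card ≤ 2 * k
  ne_smul : ∀ γ ∈ C, ∀ γ' ∈ C, γ ≠ γ' → ∀ c : F, f γ' ≠ c • f γ

theorem card_common_zeros_le_sq {d : ℕ} {f g : MvPolynomial (Fin 2) F} (hf : Irreducible f)
    (hfd : f.totalDegree = d) (hgd : g.totalDegree ≤ d) (hfg : ∀ c : F, g ≠ c • f)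
    (Z : Finset (Fin 2 → F)) (hZf : ∀ x ∈ Z, eval x f = 0) (hZg : ∀ x ∈ Z, eval x g = 0) :
    Z.card ≤ d ^ 2 := by
  have hdvd : ¬ f ∣ g := by
    rintro ⟨h, rfl⟩
    rcases eq_or_ne h 0 with rfl | hh0
    · exact hfg 0 (by rw [mul_zero, zero_smul])
    rw [totalDegree_mul_of_isDomain hf.ne_zero hh0, hfd] at hgd
    have hh : h.totalDegree = 0 := by omega
    refine hfg (coeff 0 h) ?_
    rw [smul_eq_C_mul, ← totalDegree_eq_zero_iff_eq_C.1 hh, mul_comm]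
  calc Z.card ≤ f.totalDegree * g.totalDegree := card_common_zeros_le hf.prime hdvd Z hZf hZg
    _ ≤ d ^ 2 := by rw [hfd, sq]; exact Nat.mul_le_mul_left d hgd

variable {P : Finset (Fin 2 → F)} {k d : ℕ} {V : Submodule F (MvPolynomial (Fin 2) F)}
  {f : α → MvPolynomial (Fin 2) F} {C : Finset α}

theorem IsRichFamily.card_basePoints_le (hC : IsRichFamily P k d V f C)
    (hV : V ≤ restrictTotalDegree (Fin 2) F d) (hrank : 2 ≤ Module.finrank F V)
    (hne : C.Nonempty) : (basePoints V P).card ≤ d ^ 2 := by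
  obtain ⟨γ, hγ⟩ := hne
  obtain ⟨g, hgV, hg⟩ : ∃ g ∈ V, ∀ c : F, g ≠ c • f γ := by
    by_contra! hspan
    have hle : V ≤ F ∙ f γ := fun g hg =>
      let ⟨c, hc⟩ := hspan g hg
      Submodule.mem_span_singleton.2 ⟨c, hc.symm⟩
    have hrank' := (Submodule.finrank_mono hle).trans (finrank_span_le_card _)
    rw [Set.toFinset_singleton, Finset.card_singleton] at hrank'
    omega
  exact card_common_zeros_le_sq (hC.irreducible γ hγ) (hC.totalDegree_eq γ hγ)
    ((mem_restrictTotalDegree _ _ _).1 (hV hgV)) hg _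
    (fun x hx => (Finset.mem_filter.1 hx).2 _ (hC.mem γ hγ))
    (fun x hx => (Finset.mem_filter.1 hx).2 _ hgV)

/-- Evaluation at a point of the plane, as a linear functional on the linear system `V`: it cuts
out the hyperplane of curves through that point. -/
def evalOn (V : Submodule F (MvPolynomial (Fin 2) F)) (x : Fin 2 → F) : Module.Dual F V :=
  (aeval x).toLinearMap.domRestrict V

theorem evalOn_apply (x : Fin 2 → F) (g : V) : evalOn V x g = eval x (g : MvPolynomial _ F) := by
  rw [evalOn, LinearMap.domRestrict_apply, AlgHom.toLinearMap_apply, aeval_eq_eval]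

theorem evalOn_eq_zero_iff {x : Fin 2 → F} : evalOn V x = 0 ↔ ∀ g ∈ V, eval x g = 0 := by
  simp only [LinearMap.ext_iff, evalOn_apply, LinearMap.zero_apply, Subtype.forall]

theorem evalOn_ne_zero {x : Fin 2 → F} (hx : x ∈ P) (hxb : x ∉ basePoints V P) :
    evalOn V x ≠ 0 :=
  fun h => hxb (Finset.mem_filter.2 ⟨hx, evalOn_eq_zero_iff.1 h⟩)

theorem finrank_map_ker_evalOn {j : ℕ} (hrank : Module.finrank F V = j + 1) {x : Fin 2 → F}
    (hx : evalOn V x ≠ 0) :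
    Module.finrank F ((LinearMap.ker (evalOn V x)).map V.subtype) = j := by
  have : FiniteDimensional F V := FiniteDimensional.of_finrank_pos (by omega)
  have hsum := LinearMap.finrank_range_add_finrank_ker (evalOn V x)
  rw [LinearMap.range_eq_top.2 (LinearMap.surjective_of_ne_zero hx), finrank_top,
    Module.finrank_self, hrank] at hsum
  rw [Submodule.finrank_map_subtype_eq]
  omega

theorem IsRichFamily.through (hC : IsRichFamily P k d V f C) (x : Fin 2 → F) :
    IsRichFamily P k d ((LinearMap.ker (evalOn V x)).map V.subtype) f
      (linesThrough (OnCurve f) C x) := by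
  have hsub : linesThrough (OnCurve f) C x ⊆ C := Finset.filter_subset _ _
  refine ⟨fun γ hγ => ?_, fun γ hγ => hC.irreducible γ (hsub hγ),
    fun γ hγ => hC.totalDegree_eq γ (hsub hγ), fun γ hγ => hC.le_card γ (hsub hγ),
    fun γ hγ => hC.card_le γ (hsub hγ),
    fun γ hγ γ' hγ' => hC.ne_smul γ (hsub hγ) γ' (hsub hγ')⟩
  refine ⟨⟨f γ, hC.mem γ (hsub hγ)⟩, ?_, rfl⟩
  rw [SetLike.mem_coe, LinearMap.mem_ker, evalOn_apply]
  exact (Finset.mem_filter.1 hγ).2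

theorem IsRichFamily.card_mul_le_two_mul_sum (hC : IsRichFamily P k d V f C)
    (hV : V ≤ restrictTotalDegree (Fin 2) F d) (hrank : 2 ≤ Module.finrank F V)
    (hk : 2 * d ^ 2 ≤ k) :
    C.card * k ≤ 2 * ∑ x ∈ P \ basePoints V P, (linesThrough (OnCurve f) C x).card := by
  rcases C.eq_empty_or_nonempty with rfl | hne
  · rw [Finset.card_empty, zero_mul]
    exact Nat.zero_le _
  have hbase := hC.card_basePoints_le hV hrank hne
  rw [sum_card_linesThrough, Finset.mul_sum, ← smul_eq_mul]
  refine Finset.card_nsmul_le_sum _ _ _ fun γ hγ => ?_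
  have hcover : pointsOn (OnCurve f) P γ ⊆
      pointsOn (OnCurve f) (P \ basePoints V P) γ ∪ basePoints V P := fun x hx => by
    obtain ⟨hxP, hxγ⟩ := Finset.mem_filter.1 hx
    by_cases hxb : x ∈ basePoints V P
    · exact Finset.mem_union_right _ hxb
    · exact Finset.mem_union_left _ (Finset.mem_filter.2 ⟨Finset.mem_sdiff.2 ⟨hxP, hxb⟩, hxγ⟩)
  have := (Finset.card_le_card hcover).trans (Finset.card_union_le _ _)
  have := hC.le_card γ hγ
  omega

theorem card_mul_pow_le_of_finrank_three (hk : 2 * d ^ 2 ≤ k) {D : ℝ} (hD : 0 ≤ D)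
    (hbase : ∀ (V : Submodule F (MvPolynomial (Fin 2) F)) (C : Finset α),
      V ≤ restrictTotalDegree (Fin 2) F d → Module.finrank F V = 3 → IsRichFamily P k d V f C →
      (C.card : ℝ) ≤ D) (j : ℕ) (V : Submodule F (MvPolynomial (Fin 2) F)) (C : Finset α)
    (hV : V ≤ restrictTotalDegree (Fin 2) F d) (hrank : Module.finrank F V = 3 + j)
    (hC : IsRichFamily P k d V f C) : (C.card : ℝ) * k ^ j ≤ (2 * P.card) ^ j * D := by
  induction j generalizing V C with
  | zero => simpa only [pow_zero, mul_one, one_mul] using hbase V C hV hrank hC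
  | succ j ih =>
    have hthrough : ∀ x ∈ P \ basePoints V P,
        ((linesThrough (OnCurve f) C x).card : ℝ) * k ^ j ≤ (2 * P.card) ^ j * D := fun x hx => by
      obtain ⟨hxP, hxb⟩ := Finset.mem_sdiff.1 hx
      exact ih _ _ ((Submodule.map_subtype_le _ _).trans hV)
        (finrank_map_ker_evalOn hrank (evalOn_ne_zero hxP hxb)) (hC.through x)
    have hsum : (∑ x ∈ P \ basePoints V P, ((linesThrough (OnCurve f) C x).card : ℝ)) * k ^ j ≤
        P.card * ((2 * P.card) ^ j * D) := by
      rw [Finset.sum_mul]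
      refine (Finset.sum_le_card_nsmul _ _ _ hthrough).trans ?_
      rw [nsmul_eq_mul]
      gcongr
      exact Finset.sdiff_subset
    have hdouble : (C.card : ℝ) * k ≤
        2 * ∑ x ∈ P \ basePoints V P, ((linesThrough (OnCurve f) C x).card : ℝ) := by
      exact_mod_cast hC.card_mul_le_two_mul_sum hV (by omega) hk
    calc (C.card : ℝ) * k ^ (j + 1) = C.card * k * k ^ j := by ring
      _ ≤ 2 * (∑ x ∈ P \ basePoints V P, ((linesThrough (OnCurve f) C x).card : ℝ)) * k ^ j := by
        gcongr
      _ = 2 * ((∑ x ∈ P \ basePoints V P, ((linesThrough (OnCurve f) C x).card : ℝ)) * k ^ j) := by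
        ring
      _ ≤ 2 * (P.card * ((2 * P.card) ^ j * D)) := by gcongr
      _ = (2 * P.card) ^ (j + 1) * D := by ring

end LinearSystems

/-! ### Nets of curves -/

section Nets
open MvPolynomial

theorem ProjInjOn.mono {F W β : Type*} [Field F] [AddCommGroup W] [Module F W] {v : β → W}
    {S T : Finset β} (hT : ProjInjOn F v T) (hST : S ⊆ T) : ProjInjOn F v S :=
  ⟨fun q hq => hT.ne_zero q (hST hq), fun q hq q' hq' => hT.ne_smul q (hST hq) q' (hST hq')⟩

theorem exists_projInjOn_subset {F W β : Type*} [Field F] [AddCommGroup W] [Module F W]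
    {v : β → W} {S : Finset β} (hS : ∀ x ∈ S, v x ≠ 0) :
    ∃ L ⊆ S, ProjInjOn F v L ∧ ∀ x ∈ S, ∃ y ∈ L, ∃ c : F, v x = c • v y := by
  induction S using Finset.induction_on with
  | empty => exact ⟨∅, subset_rfl, ⟨by simp, by simp⟩, by simp⟩
  | insert a S _ ih =>
    obtain ⟨L, hLS, hL, hcover⟩ := ih fun x hx => hS x (Finset.mem_insert_of_mem hx)
    have ha := hS a (Finset.mem_insert_self a S)
    by_cases hdep : ∃ y ∈ L, ∃ c : F, v a = c • v y
    · exact ⟨L, hLS.trans (Finset.subset_insert _ _), hL,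
        (Finset.forall_mem_insert ..).2 ⟨hdep, hcover⟩⟩
    push Not at hdep
    have hdep' : ∀ y ∈ L, ∀ c : F, v y ≠ c • v a := fun y hy c h => by
      have hc : c ≠ 0 := fun hc => hL.ne_zero y hy (by rw [h, hc, zero_smul])
      exact hdep y hy c⁻¹ (by rw [h, inv_smul_smul₀ hc])
    refine ⟨insert a L, Finset.insert_subset_insert a hLS,
      ⟨(Finset.forall_mem_insert ..).2 ⟨ha, hL.ne_zero⟩, ?_⟩,
      (Finset.forall_mem_insert ..).2 ⟨⟨a, Finset.mem_insert_self a L, 1, (one_smul F _).symm⟩,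
        fun x hx => (hcover x hx).imp fun y hy => ⟨Finset.mem_insert_of_mem hy.1, hy.2⟩⟩⟩
    intro q hq q' hq' hne
    rcases Finset.mem_insert.1 hq with rfl | hqL <;>
      rcases Finset.mem_insert.1 hq' with rfl | hqL'
    · exact absurd rfl hne
    · exact hdep' q' hqL'
    · exact hdep q hqL
    · exact hL.ne_smul q hqL q' hqL' hne

variable {F α : Type*} [Field F]

/-- The points of `P` lying on at least two curves of the family `C`. -/
def sharedPoints (f : α → MvPolynomial (Fin 2) F) (P : Finset (Fin 2 → F)) (C : Finset α) :
    Finset (Fin 2 → F) :=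
  P.filter fun x => 1 < (linesThrough (OnCurve f) C x).card

variable {P : Finset (Fin 2 → F)} {k d : ℕ} {V : Submodule F (MvPolynomial (Fin 2) F)}
  {f : α → MvPolynomial (Fin 2) F} {C : Finset α}

/-- Curves at most half of whose points are shared are few, as their unshared points are
disjoint. -/
theorem IsRichFamily.card_filter_sharedPoints_lt_le (hC : IsRichFamily P k d V f C) :
    (C.filter fun γ => 2 * (pointsOn (OnCurve f) (sharedPoints f P C) γ).card < k).card * k ≤
      2 * P.card := by
  set B := C.filter fun γ => 2 * (pointsOn (OnCurve f) (sharedPoints f P C) γ).card < k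
  have hunshared : ∀ γ ∈ B, k ≤ 2 * (pointsOn (OnCurve f) (P \ sharedPoints f P C) γ).card := by
    intro γ hγ
    obtain ⟨hγC, hlt⟩ := Finset.mem_filter.1 hγ
    have hunion : pointsOn (OnCurve f) P γ ⊆ pointsOn (OnCurve f) (sharedPoints f P C) γ ∪
        pointsOn (OnCurve f) (P \ sharedPoints f P C) γ := by
      rw [pointsOn, pointsOn, pointsOn, ← Finset.filter_union]
      refine Finset.filter_subset_filter _ ?_
      rw [Finset.union_sdiff_self_eq_union]
      exact Finset.subset_union_right
    have := (Finset.card_le_card hunion).trans (Finset.card_union_le _ _)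
    have := hC.le_card γ hγC
    omega
  calc B.card * k ≤ ∑ γ ∈ B, 2 * (pointsOn (OnCurve f) (P \ sharedPoints f P C) γ).card :=
        Finset.card_nsmul_le_sum _ _ _ hunshared
    _ = 2 * ∑ x ∈ P \ sharedPoints f P C, (linesThrough (OnCurve f) B x).card := by
        rw [← Finset.mul_sum, sum_card_linesThrough]
    _ ≤ 2 * ∑ _x ∈ P \ sharedPoints f P C, 1 := by
        refine Nat.mul_le_mul_left 2 (Finset.sum_le_sum fun x hx => ?_)
        obtain ⟨hxP, hx⟩ := Finset.mem_sdiff.1 hx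
        exact (Finset.card_le_card (Finset.filter_subset_filter _ (Finset.filter_subset _ _))).trans
          (not_lt.1 fun h => hx (Finset.mem_filter.2 ⟨hxP, h⟩))
    _ ≤ 2 * P.card := by
        rw [← Finset.card_eq_sum_ones]
        exact Nat.mul_le_mul_left 2 (Finset.card_le_card Finset.sdiff_subset)

theorem onCurve_iff_of_evalOn_eq_smul {γ : α} (hγ : f γ ∈ V) {x y : Fin 2 → F} {c : F}
    (hx : evalOn V x ≠ 0) (h : evalOn V x = c • evalOn V y) :
    OnCurve f x γ ↔ OnCurve f y γ := by
  have hc : c ≠ 0 := fun hc => hx (by rw [h, hc, zero_smul])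
  have heval := LinearMap.congr_fun h ⟨f γ, hγ⟩
  rw [LinearMap.smul_apply, evalOn_apply, evalOn_apply, smul_eq_mul] at heval
  rw [OnCurve, OnCurve, heval, mul_eq_zero, or_iff_right hc]

/-- Points imposing proportional conditions on `V` lie on the same curves of the family, and two of
these curves meet in at most `d ^ 2` points. -/
theorem IsRichFamily.card_filter_evalOn_eq_smul_le (hC : IsRichFamily P k d V f C)
    {S : Finset (Fin 2 → F)} (hS : ∀ x ∈ S, evalOn V x ≠ 0) {y : Fin 2 → F}
    (hy : y ∈ sharedPoints f P C) :
    (S.filter fun x => ∃ c : F, evalOn V x = c • evalOn V y).card ≤ d ^ 2 := by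
  obtain ⟨γ, hγ, γ', hγ', hne⟩ := Finset.one_lt_card.1 (Finset.mem_filter.1 hy).2
  obtain ⟨hγ, hyγ⟩ := Finset.mem_filter.1 hγ
  obtain ⟨hγ', hyγ'⟩ := Finset.mem_filter.1 hγ'
  refine card_common_zeros_le_sq (hC.irreducible γ hγ) (hC.totalDegree_eq γ hγ)
    (hC.totalDegree_eq γ' hγ').le (hC.ne_smul γ hγ γ' hγ' hne) _ (fun x hx => ?_) (fun x hx => ?_)
  all_goals obtain ⟨hxS, c, hc⟩ := Finset.mem_filter.1 hx
  · exact (onCurve_iff_of_evalOn_eq_smul (hC.mem γ hγ) (hS x hxS) hc).2 hyγ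
  · exact (onCurve_iff_of_evalOn_eq_smul (hC.mem γ' hγ') (hS x hxS) hc).2 hyγ'

theorem IsRichFamily.card_pointsOn_sharedPoints_le (hC : IsRichFamily P k d V f C)
    (hV : V ≤ restrictTotalDegree (Fin 2) F d) (hrank : 2 ≤ Module.finrank F V)
    {L : Finset (Fin 2 → F)} (hL : L ⊆ sharedPoints f P C \ basePoints V P)
    (hcover : ∀ x ∈ sharedPoints f P C \ basePoints V P, ∃ y ∈ L, ∃ c : F,
      evalOn V x = c • evalOn V y) {γ : α} (hγ : γ ∈ C) :
    (pointsOn (OnCurve f) (sharedPoints f P C) γ).card ≤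
      d ^ 2 * ((pointsOn (OnCurve f) L γ).card + 1) := by
  set S := sharedPoints f P C \ basePoints V P
  have hS : ∀ x ∈ S, evalOn V x ≠ 0 := fun x hx =>
    evalOn_ne_zero (Finset.mem_filter.1 (Finset.mem_sdiff.1 hx).1).1 (Finset.mem_sdiff.1 hx).2
  have hunion : pointsOn (OnCurve f) (sharedPoints f P C) γ ⊆
      pointsOn (OnCurve f) S γ ∪ basePoints V P := fun x hx => by
    obtain ⟨hxs, hxγ⟩ := Finset.mem_filter.1 hx
    by_cases hxb : x ∈ basePoints V P
    · exact Finset.mem_union_right _ hxb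
    · exact Finset.mem_union_left _ (Finset.mem_filter.2 ⟨Finset.mem_sdiff.2 ⟨hxs, hxb⟩, hxγ⟩)
  have hfibres : pointsOn (OnCurve f) S γ ⊆ (pointsOn (OnCurve f) L γ).biUnion fun y =>
      S.filter fun x => ∃ c : F, evalOn V x = c • evalOn V y := fun x hx => by
    obtain ⟨hxS, hxγ⟩ := Finset.mem_filter.1 hx
    obtain ⟨y, hy, c, hc⟩ := hcover x hxS
    exact Finset.mem_biUnion.2 ⟨y, Finset.mem_filter.2 ⟨hy,
      (onCurve_iff_of_evalOn_eq_smul (hC.mem γ hγ) (hS x hxS) hc).1 hxγ⟩,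
      Finset.mem_filter.2 ⟨hxS, c, hc⟩⟩
  calc (pointsOn (OnCurve f) (sharedPoints f P C) γ).card
      ≤ (pointsOn (OnCurve f) S γ).card + (basePoints V P).card :=
        (Finset.card_le_card hunion).trans (Finset.card_union_le _ _)
    _ ≤ (pointsOn (OnCurve f) L γ).card * d ^ 2 + d ^ 2 :=
        add_le_add ((Finset.card_le_card hfibres).trans (Finset.card_biUnion_le_card_mul _ _ _
          fun y hy => hC.card_filter_evalOn_eq_smul_le hS
            (Finset.mem_sdiff.1 (hL (Finset.mem_filter.1 hy).1)).1))
          (hC.card_basePoints_le hV hrank ⟨γ, hγ⟩)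
    _ = d ^ 2 * ((pointsOn (OnCurve f) L γ).card + 1) := by ring

theorem IsRichFamily.projInjOn (hC : IsRichFamily P k d V f C)
    {π : MvPolynomial (Fin 2) F →ₗ[F] V} (hπ : π ∘ₗ V.subtype = LinearMap.id) :
    ProjInjOn F (π ∘ f) C := by
  have hcoe : ∀ γ ∈ C, (π (f γ) : MvPolynomial (Fin 2) F) = f γ := fun γ hγ =>
    congrArg Subtype.val (LinearMap.congr_fun hπ ⟨f γ, hC.mem γ hγ⟩)
  refine ⟨fun γ hγ h0 => (hC.irreducible γ hγ).ne_zero ?_,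
    fun γ hγ γ' hγ' hne c hc => hC.ne_smul γ hγ γ' hγ' hne c ?_⟩
  · rw [← hcoe γ hγ, ← Function.comp_apply (f := π), h0, Submodule.coe_zero]
  · rw [← hcoe γ hγ, ← hcoe γ' hγ', ← Function.comp_apply (f := π) (x := γ'), hc]
    rfl

/-- Evaluation at a point of the plane being a linear functional on `V`, a family of curves in `V`
becomes a family of points of `ℙ V`, and a point of `P` becomes a hyperplane. The projection `π`
serves to regard the equations of the curves as elements of `V`. -/
theorem IsRichFamily.exists_projInjOn (hC : IsRichFamily P k d V f C)
    (hV : V ≤ restrictTotalDegree (Fin 2) F d) (hrank : 2 ≤ Module.finrank F V) :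
    ∃ (π : MvPolynomial (Fin 2) F →ₗ[F] V) (C' : Finset α) (L : Finset (Fin 2 → F)),
      C.card * k ≤ C'.card * k + 2 * P.card ∧ L ⊆ P ∧
      ProjInjOn F (π ∘ f) C' ∧ ProjInjOn F (evalOn V) L ∧
      (∀ γ ∈ C', k ≤
        2 * (d ^ 2 * ((linesThrough (ProjIncident (π ∘ f) (evalOn V)) L γ).card + 1))) ∧
      ∀ γ ∈ C', (linesThrough (ProjIncident (π ∘ f) (evalOn V)) L γ).card ≤ 2 * k := by
  obtain ⟨π, hπ⟩ := LinearMap.exists_leftInverse_of_injective V.subtype V.ker_subtype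
  obtain ⟨L, hLS, hL, hcover⟩ := exists_projInjOn_subset (F := F) (v := evalOn V)
    (S := sharedPoints f P C \ basePoints V P) fun x hx =>
      evalOn_ne_zero (Finset.mem_filter.1 (Finset.mem_sdiff.1 hx).1).1 (Finset.mem_sdiff.1 hx).2
  have hLP : L ⊆ P := hLS.trans (Finset.sdiff_subset.trans (Finset.filter_subset _ _))
  have hlines : ∀ γ ∈ C, linesThrough (ProjIncident (π ∘ f) (evalOn V)) L γ =
      pointsOn (OnCurve f) L γ := fun γ hγ => Finset.filter_congr fun x _ => by
    have hcoe := LinearMap.congr_fun hπ ⟨f γ, hC.mem γ hγ⟩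
    rw [ProjIncident, evalOn_apply, OnCurve]
    exact iff_of_eq (congrArg (fun g : V => eval x (g : MvPolynomial (Fin 2) F) = 0) hcoe)
  have hsub : (C.filter fun γ => k ≤ 2 * (pointsOn (OnCurve f) (sharedPoints f P C) γ).card) ⊆ C :=
    Finset.filter_subset _ _
  refine ⟨π, _, L, ?_, hLP, (hC.projInjOn hπ).mono hsub, hL, fun γ hγ => ?_, fun γ hγ => ?_⟩
  · have hsplit := Finset.card_filter_add_card_filter_not (s := C)
      fun γ => k ≤ 2 * (pointsOn (OnCurve f) (sharedPoints f P C) γ).card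
    have hfew := hC.card_filter_sharedPoints_lt_le
    simp only [not_le] at hsplit
    nlinarith
  · rw [hlines γ (hsub hγ)]
    exact (Finset.mem_filter.1 hγ).2.trans (Nat.mul_le_mul_left 2
      (hC.card_pointsOn_sharedPoints_le hV hrank hLS hcover (hsub hγ)))
  · rw [hlines γ (hsub hγ)]
    exact (Finset.card_le_card (Finset.filter_subset_filter _ hLP)).trans
      (hC.card_le γ (hsub hγ))

end Nets

/-! ### Counting rich cubics -/

section Counting
open MvPolynomial

variable {F α : Type*} [Field F] {p k : ℕ} {P : Finset (Fin 2 → F)}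
  {V : Submodule F (MvPolynomial (Fin 2) F)} {f : α → MvPolynomial (Fin 2) F} {C : Finset α}

theorem IsRichFamily.card_le_of_net (hC : IsRichFamily P k 3 V f C)
    (hp : ∀ n : ℕ, n ≠ 0 → n < p → (n : F) ≠ 0) (hp2 : 2 ≤ p)
    (hV : V ≤ restrictTotalDegree (Fin 2) F 3) (hrank : Module.finrank F V = 3)
    (hk : 1000 ≤ k) (hP : P.card ^ 3 ≤ p ^ 4) {D : ℝ} (hD : 0 ≤ D)
    (hDk : 2 ^ 120 * 50 ^ 15 * (P.card : ℝ) ^ 11 ≤ D ^ 4 * k ^ 15) :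
    (C.card : ℝ) ≤ 202 * (P.card / k) + D := by
  obtain ⟨π, C', L, hCC', hLP, hC', hL, hle, hge⟩ := hC.exists_projInjOn hV (by omega)
  have hLP := Finset.card_le_card hLP
  have hk0 : (0 : ℝ) < k := by exact_mod_cast (by omega : 0 < k)
  have hkk : (k : ℝ) ≤ 50 * (k / 40 : ℕ) := by exact_mod_cast (by omega : k ≤ 50 * (k / 40))
  suffices hC'D : (C'.card : ℝ) ≤ 200 * (P.card / k) + D by
    have hlost : (C.card : ℝ) * k ≤ (C'.card + 2 * (P.card / k)) * k := by
      rw [add_mul, mul_assoc, div_mul_cancel₀ _ hk0.ne']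
      exact_mod_cast hCC'
    linarith [le_of_mul_le_mul_right hlost hk0]
  rcases card_richPoints_le hp hp2 hrank hC' hL (k := k / 40) (by omega)
    (fun γ hγ => by have := hle γ hγ; omega) (fun γ hγ => (hge γ hγ).trans (by omega))
    ((Nat.pow_le_pow_left hLP 3).trans hP) with hfew | hrich
  · have hfew' : (C'.card : ℝ) * (k / 40 : ℕ) ≤ 4 * P.card := by
      exact_mod_cast hfew.trans (Nat.mul_le_mul_left 4 hLP)
    refine le_add_of_le_of_nonneg ?_ hD
    rw [mul_div_assoc', le_div_iff₀ hk0]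
    linarith [mul_le_mul_of_nonneg_left hkk (Nat.cast_nonneg (α := ℝ) C'.card)]
  · refine le_add_of_nonneg_of_le (by positivity) (le_of_pow_le_pow_left₀ four_ne_zero hD ?_)
    refine le_of_mul_le_mul_right (a := (k : ℝ) ^ 15) (le_trans ?_ hDk) (by positivity)
    calc (C'.card : ℝ) ^ 4 * k ^ 15 ≤ (C'.card : ℝ) ^ 4 * (50 * (k / 40 : ℕ)) ^ 15 := by gcongr
      _ = 50 ^ 15 * ((C'.card : ℝ) ^ 4 * ((k / 40 : ℕ) : ℝ) ^ 15) := by ring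
      _ ≤ 50 ^ 15 * (2 ^ 120 * (L.card : ℝ) ^ 11) := by gcongr
      _ ≤ 50 ^ 15 * (2 ^ 120 * (P.card : ℝ) ^ 11) := by gcongr
      _ = 2 ^ 120 * 50 ^ 15 * (P.card : ℝ) ^ 11 := by ring

/-- `D` stands for a multiple of `|P|^{11/4} k^{-15/4}`. -/
theorem IsRichFamily.card_mul_pow_seven_le
    (hC : IsRichFamily P k 3 (restrictTotalDegree (Fin 2) F 3) f C)
    (hp : ∀ n : ℕ, n ≠ 0 → n < p → (n : F) ≠ 0) (hp2 : 2 ≤ p)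
    (hk : 1000 ≤ k) (hP : P.card ^ 3 ≤ p ^ 4) {D : ℝ} (hD : 0 ≤ D)
    (hDk : 2 ^ 120 * 50 ^ 15 * (P.card : ℝ) ^ 11 ≤ D ^ 4 * k ^ 15) :
    (C.card : ℝ) * k ^ 7 ≤ (2 * P.card) ^ 7 * (202 * (P.card / k) + D) :=
  card_mul_pow_le_of_finrank_three (by omega) (by positivity)
    (fun _ _ hV hrank hC => hC.card_le_of_net hp hp2 hV hrank hk hP hD hDk) 7 _ C le_rfl
    (finrank_restrictTotalDegree (Fin 2) F 3) hC

end Counting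

/-! ### Dyadic summation -/

section Dyadic

variable {α : Type*}

/-- The elements of `C` at which `r` takes a value between `k` and `2k`. -/
def dyadicClass (C : Finset α) (r : α → ℕ) (k : ℕ) : Finset α :=
  C.filter fun γ => k ≤ r γ ∧ r γ ≤ 2 * k

theorem exists_pow_mul_le_and_le {r T : ℕ} (hT : 0 < T) (hr : T ≤ r) :
    ∃ i < r, 2 ^ i * T ≤ r ∧ r ≤ 2 * (2 ^ i * T) := by
  have hq : r / T ≠ 0 := (Nat.div_pos hr hT).ne'
  refine ⟨Nat.log 2 (r / T), (Nat.log_lt_self 2 hq).trans_le (Nat.div_le_self r T),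
    (Nat.le_div_iff_mul_le hT).1 (Nat.pow_log_le_self 2 hq), ?_⟩
  have hlt := (Nat.div_lt_iff_lt_mul hT).1 (Nat.lt_pow_succ_log_self one_lt_two (r / T))
  rw [Nat.succ_eq_add_one, pow_succ'] at hlt
  exact hlt.le.trans (mul_assoc _ _ _).le

theorem sum_le_add_sum_dyadicClass (C : Finset α) (r : α → ℕ) {T m : ℕ} (hT : 0 < T)
    (hr : ∀ γ ∈ C, r γ ≤ m) :
    ∑ γ ∈ C, r γ ≤ C.card * T +
      ∑ i ∈ Finset.range m, (dyadicClass C r (2 ^ i * T)).card * (2 * (2 ^ i * T)) := by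
  have hpointwise : ∀ γ ∈ C, r γ ≤ T + ∑ i ∈ Finset.range m with
      2 ^ i * T ≤ r γ ∧ r γ ≤ 2 * (2 ^ i * T), 2 * (2 ^ i * T) := fun γ hγ => by
    rcases lt_or_ge (r γ) T with hlt | hge
    · exact le_add_right hlt.le
    obtain ⟨i, hi, hri⟩ := exists_pow_mul_le_and_le hT hge
    exact le_add_left (hri.2.trans (Finset.single_le_sum (f := fun i => 2 * (2 ^ i * T))
      (fun _ _ => Nat.zero_le _)
      (Finset.mem_filter.2 ⟨Finset.mem_range.2 (hi.trans_le (hr γ hγ)), hri⟩)))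
  refine (Finset.sum_le_sum hpointwise).trans_eq ?_
  rw [Finset.sum_add_distrib, Finset.sum_const, smul_eq_mul, Finset.sum_comm'
    (t' := Finset.range m) (s' := fun i => dyadicClass C r (2 ^ i * T))]
  · simp only [Finset.sum_const, smul_eq_mul]
  · intro γ i
    simp only [dyadicClass, Finset.mem_filter]
    tauto

theorem mul_two_mul_le_mul_inv {N E T n M : ℝ} {e : ℕ} (he : 2 ≤ e) (hN : 0 ≤ N) (hE : 1 ≤ E)
    (hT : 0 ≤ T) (h : N * E ^ e ≤ M * n) : N * (2 * (E * T)) ≤ 2 * M * (n * T) * E⁻¹ := by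
  have hE0 : 0 < E := zero_lt_one.trans_le hE
  rw [← div_eq_mul_inv, le_div_iff₀ hE0]
  calc N * (2 * (E * T)) * E = 2 * T * (N * E ^ 2) := by ring
    _ ≤ 2 * T * (N * E ^ e) := by gcongr
    _ ≤ 2 * T * (M * n) := by gcongr
    _ = 2 * M * (n * T) := by ring

theorem sum_le_of_card_dyadicClass_le (C : Finset α) (r : α → ℕ) {T m : ℕ} (hT : 0 < T)
    (hr : ∀ γ ∈ C, r γ ≤ m) {M : ℝ} (hM : 0 ≤ M) {e : ℕ} (he : 2 ≤ e)
    (h : ∀ i : ℕ, ((dyadicClass C r (2 ^ i * T)).card : ℝ) * (2 ^ i) ^ e ≤ M * C.card) :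
    ((∑ γ ∈ C, r γ : ℕ) : ℝ) ≤ (1 + 4 * M) * (C.card * T) :=
  calc ((∑ γ ∈ C, r γ : ℕ) : ℝ)
      ≤ C.card * T + ∑ i ∈ Finset.range m,
          ((dyadicClass C r (2 ^ i * T)).card : ℝ) * (2 * (2 ^ i * T)) := by
        exact_mod_cast sum_le_add_sum_dyadicClass C r hT hr
    _ ≤ C.card * T + ∑ i ∈ Finset.range m, 2 * M * (C.card * T) * (1 / 2) ^ i := by
        refine add_le_add_right (Finset.sum_le_sum fun i _ => ?_) _
        rw [one_div, inv_pow]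
        exact mul_two_mul_le_mul_inv he (Nat.cast_nonneg _) (one_le_pow₀ one_le_two)
          (Nat.cast_nonneg _) (h i)
    _ ≤ C.card * T + 2 * M * (C.card * T) * 2 := by
        rw [← Finset.mul_sum]
        gcongr
        exact sum_geometric_two_le m
    _ = (1 + 4 * M) * (C.card * T) := by ring

theorem mul_pow_seven_le_of_threshold {m n N T E : ℝ} (hm : 0 < m) (hn : 0 ≤ n) (hT : 0 < T)
    (hE : 1 ≤ E) (h39 : m ^ 39 ≤ T ^ 43 * n ^ 4) (h8 : m ^ 8 ≤ T ^ 8 * n)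
    (hN : ∀ D : ℝ, 0 ≤ D → 2 ^ 120 * 50 ^ 15 * m ^ 11 ≤ D ^ 4 * (E * T) ^ 15 →
      N * (E * T) ^ 7 ≤ (2 * m) ^ 7 * (202 * (m / (E * T)) + D)) :
    N * E ^ 7 ≤ 2 ^ 61 * n := by
  have : 0 < E := zero_lt_one.trans_le hE
  have hET : T ≤ E * T := le_mul_of_one_le_left hT.le hE
  obtain ⟨D, hD0, hmD⟩ : ∃ D : ℝ, 0 ≤ D ∧ m ^ 7 * D = 2 ^ 53 * n * T ^ 7 :=
    ⟨2 ^ 53 * n * T ^ 7 / m ^ 7, by positivity, mul_div_cancel₀ _ (by positivity)⟩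
  have hD : 2 ^ 120 * 50 ^ 15 * m ^ 11 ≤ D ^ 4 * (E * T) ^ 15 := by
    refine le_of_mul_le_mul_left (a := m ^ 28) ?_ (by positivity)
    calc m ^ 28 * (2 ^ 120 * 50 ^ 15 * m ^ 11) = 2 ^ 120 * 50 ^ 15 * m ^ 39 := by ring
      _ ≤ (2 ^ 53) ^ 4 * (T ^ 43 * n ^ 4) :=
        mul_le_mul (by norm_num) h39 (by positivity) (by positivity)
      _ = (m ^ 7 * D) ^ 4 * T ^ 15 := by rw [hmD]; ring
      _ ≤ (m ^ 7 * D) ^ 4 * (E * T) ^ 15 := by gcongr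
      _ = m ^ 28 * (D ^ 4 * (E * T) ^ 15) := by ring
  have hlow : m ^ 7 * (m / (E * T)) ≤ n * T ^ 7 := by
    rw [mul_div_assoc', ← pow_succ, div_le_iff₀ (by positivity)]
    calc m ^ 8 ≤ T ^ 8 * n := h8
      _ = n * T ^ 7 * T := by ring
      _ ≤ n * T ^ 7 * (E * T) := by gcongr
  refine le_of_mul_le_mul_right (a := T ^ 7) ?_ (by positivity)
  calc N * E ^ 7 * T ^ 7 = N * (E * T) ^ 7 := by ring
    _ ≤ (2 * m) ^ 7 * (202 * (m / (E * T)) + D) := hN D hD0 hD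
    _ = 2 ^ 7 * (202 * (m ^ 7 * (m / (E * T))) + m ^ 7 * D) := by ring
    _ ≤ 2 ^ 7 * (202 * (n * T ^ 7) + 2 ^ 53 * n * T ^ 7) := by rw [hmD]; gcongr
    _ = 2 ^ 7 * (202 + 2 ^ 53) * (n * T ^ 7) := by ring
    _ ≤ 2 ^ 61 * (n * T ^ 7) := mul_le_mul_of_nonneg_right (by norm_num) (by positivity)
    _ = 2 ^ 61 * n * T ^ 7 := by ring

end Dyadic

section Threshold

variable {m n : ℝ}

theorem rpow_mul_rpow_pow_mul_pow (hm : 0 ≤ m) (hn : 0 < n) :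
    (m ^ ((39 : ℝ) / 43) * n ^ (-(4 : ℝ) / 43)) ^ 43 * n ^ 4 = m ^ 39 := by
  rw [mul_pow, ← Real.rpow_mul_natCast hm, ← Real.rpow_mul_natCast hn.le, mul_assoc,
    ← Real.rpow_natCast n 4, ← Real.rpow_add hn, ← Real.rpow_natCast m 39]
  norm_num

theorem mul_rpow_pow_eight_mul (hn : 0 < n) : (m * n ^ (-(1 : ℝ) / 8)) ^ 8 * n = m ^ 8 := by
  rw [mul_pow, ← Real.rpow_mul_natCast hn.le, mul_assoc, ← Real.rpow_add_one hn.ne']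
  norm_num

theorem mul_rpow_mul_rpow_eq (hm : 0 ≤ m) (hn : 0 < n) :
    n * (m ^ ((39 : ℝ) / 43) * n ^ (-(4 : ℝ) / 43)) = (m * n) ^ ((39 : ℝ) / 43) := by
  rw [Real.mul_rpow hm hn.le, mul_left_comm, ← Real.rpow_one_add' hn.le (by norm_num)]
  norm_num

/-- The left-hand side is the weighted geometric mean of the two terms on the right. -/
theorem mul_mul_rpow_le (hm : 0 ≤ m) (hn : 0 < n) :
    n * (m * n ^ (-(1 : ℝ) / 8)) ≤
      (m * n) ^ ((39 : ℝ) / 43) + m ^ ((71 : ℝ) / 43) * n ^ ((28 : ℝ) / 43) := by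
  set a := (m * n) ^ ((39 : ℝ) / 43)
  set b := m ^ ((71 : ℝ) / 43) * n ^ ((28 : ℝ) / 43)
  have ha : 0 ≤ a := by positivity
  have hb : 0 ≤ b := by positivity
  have hmean : n * (m * n ^ (-(1 : ℝ) / 8)) = a ^ ((7 : ℝ) / 8) * b ^ ((1 : ℝ) / 8) := by
    rw [← Real.rpow_mul (by positivity), Real.mul_rpow hm hn.le,
      Real.mul_rpow (by positivity) (by positivity), ← Real.rpow_mul hm, ← Real.rpow_mul hn.le,
      mul_mul_mul_comm, ← Real.rpow_add hn, ← Real.rpow_add_of_nonneg hm (by norm_num)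
      (by norm_num), mul_left_comm, ← Real.rpow_one_add' hn.le (by norm_num)]
    norm_num
  have := Real.geom_mean_le_arith_mean2_weighted (w₁ := 7 / 8) (w₂ := 1 / 8)
    (by norm_num) (by norm_num) ha hb (by norm_num)
  linarith

theorem exists_threshold (hm : 0 ≤ m) (hn : 1 ≤ n) :
    ∃ T : ℕ, 1000 ≤ T ∧ m ^ 39 ≤ (T : ℝ) ^ 43 * n ^ 4 ∧ m ^ 8 ≤ (T : ℝ) ^ 8 * n ∧
      n * T ≤ 1001 * ((m * n) ^ ((39 : ℝ) / 43)
        + m ^ ((71 : ℝ) / 43) * n ^ ((28 : ℝ) / 43) + n) := by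
  have hn0 : 0 < n := by linarith
  set t₁ : ℝ := m ^ ((39 : ℝ) / 43) * n ^ (-(4 : ℝ) / 43) with ht₁
  set t₂ : ℝ := m * n ^ (-(1 : ℝ) / 8) with ht₂
  have ht₁0 : 0 ≤ t₁ := by positivity
  have ht₂0 : 0 ≤ t₂ := by positivity
  have hle := Nat.le_ceil (1000 + t₁ + t₂)
  have hlt := Nat.ceil_lt_add_one (a := 1000 + t₁ + t₂) (by positivity)
  refine ⟨⌈1000 + t₁ + t₂⌉₊, ?_, ?_, ?_, ?_⟩
  · exact_mod_cast (by linarith : (1000 : ℝ) ≤ ⌈1000 + t₁ + t₂⌉₊)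
  · rw [← rpow_mul_rpow_pow_mul_pow hm hn0, ← ht₁]
    gcongr
    linarith
  · rw [← mul_rpow_pow_eight_mul hn0, ← ht₂]
    gcongr
    linarith
  · have hnT := mul_le_mul_of_nonneg_left hlt.le hn0.le
    have hnt₁ := mul_rpow_mul_rpow_eq hm hn0
    have hnt₂ := mul_mul_rpow_le hm hn0
    have : 0 ≤ (m * n) ^ ((39 : ℝ) / 43) := by positivity
    have : 0 ≤ m ^ ((71 : ℝ) / 43) * n ^ ((28 : ℝ) / 43) := by positivity
    rw [← ht₁] at hnt₁
    rw [← ht₂] at hnt₂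
    linarith

end Threshold

section Main
open MvPolynomial

variable {F : Type*} [Field F]

theorem card_filter_mem_eq_sum {α : Type*} (P : Finset α) (C : Finset (Set α)) :
    ((P ×ˢ C).filter fun z => z.1 ∈ z.2).card = ∑ γ ∈ C, (P.filter fun x => x ∈ γ).card := by
  rw [Finset.card_filter, Finset.sum_product_right]
  exact Finset.sum_congr rfl fun γ _ => (Finset.card_filter _ _).symm

theorem cube_le_pow_four {p m : ℕ} (hp : 1 ≤ p) (h : (m : ℝ) ≤ (p : ℝ) ^ ((15 : ℝ) / 13)) :
    m ^ 3 ≤ p ^ 4 := by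
  have hcube : (m : ℝ) ^ 3 ≤ (p : ℝ) ^ 4 :=
    calc (m : ℝ) ^ 3 ≤ ((p : ℝ) ^ ((15 : ℝ) / 13)) ^ 3 := by gcongr
      _ = (p : ℝ) ^ ((15 : ℝ) / 13 * (3 : ℕ)) := (Real.rpow_mul_natCast (by positivity) _ _).symm
      _ ≤ (p : ℝ) ^ ((4 : ℕ) : ℝ) :=
        Real.rpow_le_rpow_of_exponent_le (Nat.one_le_cast.2 hp) (by norm_num)
      _ = (p : ℝ) ^ 4 := Real.rpow_natCast _ 4
  exact_mod_cast hcube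

theorem exists_natCast_ne_zero_of_charP (F : Type*) [Field F] (p : ℕ) [CharP F p] {m : ℕ}
    (hm : p = 0 ∨ m ^ 3 ≤ p ^ 4) :
    ∃ q : ℕ, 2 ≤ q ∧ m ^ 3 ≤ q ^ 4 ∧ ∀ n : ℕ, n ≠ 0 → n < q → (n : F) ≠ 0 := by
  rcases CharP.char_is_prime_or_zero F p with hp | rfl
  · refine ⟨p, hp.two_le, hm.resolve_left hp.ne_zero, fun n hn0 hnp h => ?_⟩
    exact hnp.not_ge (Nat.le_of_dvd (Nat.pos_of_ne_zero hn0) ((CharP.cast_eq_zero_iff F p n).1 h))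
  · refine ⟨m + 2, Nat.le_add_left 2 m, ?_, fun n hn0 _ h => hn0 ?_⟩
    · exact (Nat.pow_le_pow_left (Nat.le_add_right m 2) 3).trans
        (Nat.pow_le_pow_right (Nat.succ_pos _) (by norm_num))
    · exact zero_dvd_iff.1 ((CharP.cast_eq_zero_iff F 0 n).1 h)

variable {P : Finset (Fin 2 → F)} {C : Finset (Set (Fin 2 → F))}
  {f : Set (Fin 2 → F) → MvPolynomial (Fin 2) F}

theorem isRichFamily_dyadicClass {d : ℕ}
    (hf : ∀ γ ∈ C, Irreducible (f γ) ∧ (f γ).totalDegree = d ∧ γ = {x | eval x (f γ) = 0})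
    (k : ℕ) :
    IsRichFamily P k d (restrictTotalDegree (Fin 2) F d) f
      (dyadicClass C (fun γ => (P.filter fun x => x ∈ γ).card) k) := by
  have hpoints : ∀ γ ∈ C, pointsOn (OnCurve f) P γ = P.filter fun x => x ∈ γ := fun γ hγ =>
    Finset.filter_congr fun x _ => (Set.ext_iff.1 (hf γ hγ).2.2 x).symm
  have hsub : dyadicClass C (fun γ => (P.filter fun x => x ∈ γ).card) k ⊆ C :=
    Finset.filter_subset _ _
  refine ⟨fun γ hγ => ?_, fun γ hγ => (hf γ (hsub hγ)).1, fun γ hγ => (hf γ (hsub hγ)).2.1,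
    fun γ hγ => ?_, fun γ hγ => ?_, fun γ hγ γ' hγ' hne c hc => hne ?_⟩
  · exact (mem_restrictTotalDegree _ _ _).2 (hf γ (hsub hγ)).2.1.le
  · rw [hpoints γ (hsub hγ)]
    exact (Finset.mem_filter.1 hγ).2.1
  · rw [hpoints γ (hsub hγ)]
    exact (Finset.mem_filter.1 hγ).2.2
  · have hc0 : c ≠ 0 := fun hc0 => (hf γ' (hsub hγ')).1.ne_zero (by rw [hc, hc0, zero_smul])
    rw [(hf γ (hsub hγ)).2.2, (hf γ' (hsub hγ')).2.2, hc]
    simp only [smul_eval, mul_eq_zero, hc0, false_or]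

theorem card_dyadicClass_mul_pow_seven_le {q T : ℕ} (hq2 : 2 ≤ q)
    (hq : ∀ n : ℕ, n ≠ 0 → n < q → (n : F) ≠ 0) (hPq : P.card ^ 3 ≤ q ^ 4) (hP : P.Nonempty)
    (hf : ∀ γ ∈ C, Irreducible (f γ) ∧ (f γ).totalDegree = 3 ∧ γ = {x | eval x (f γ) = 0})
    (hT : 1000 ≤ T) (h39 : (P.card : ℝ) ^ 39 ≤ (T : ℝ) ^ 43 * (C.card : ℝ) ^ 4)
    (h8 : (P.card : ℝ) ^ 8 ≤ (T : ℝ) ^ 8 * C.card) (i : ℕ) :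
    ((dyadicClass C (fun γ => (P.filter fun x => x ∈ γ).card) (2 ^ i * T)).card : ℝ) *
      (2 ^ i) ^ 7 ≤ 2 ^ 61 * C.card := by
  refine mul_pow_seven_le_of_threshold (Nat.cast_pos.2 hP.card_pos) (Nat.cast_nonneg _)
    (Nat.cast_pos.2 (by omega)) (one_le_pow₀ one_le_two) h39 h8 fun D hD hDk => ?_
  have hk : 1000 ≤ 2 ^ i * T := hT.trans (Nat.le_mul_of_pos_left T (Nat.two_pow_pos i))
  have hcast : ((2 ^ i * T : ℕ) : ℝ) = 2 ^ i * T := by push_cast; rfl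
  rw [← hcast] at hDk ⊢
  exact (isRichFamily_dyadicClass hf _).card_mul_pow_seven_le hq hq2 hk hPq hD hDk

end Main

end CubicIncidences

theorem incidence_bound_main_general :
    ∃ c : ℝ, 0 < c ∧ ∀ (F : Type*) [Field F] (p : ℕ) [CharP F p]
      (P : Finset (Fin 2 → F)) (C : Finset (Set (Fin 2 → F))),
        (p = 0 ∨ P.card ^ 3 ≤ p ^ 4) →
        (∀ γ ∈ C, ∃ f : MvPolynomial (Fin 2) F, Irreducible f ∧ f.totalDegree = 3 ∧
          γ = {x | MvPolynomial.eval x f = 0}) →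
        (((P ×ˢ C).filter fun z => z.1 ∈ z.2).card : ℝ) ≤
          c * (((P.card : ℝ) * (C.card : ℝ)) ^ ((39 : ℝ) / 43)
            + (P.card : ℝ) ^ ((71 : ℝ) / 43) * (C.card : ℝ) ^ ((28 : ℝ) / 43)
            + (C.card : ℝ)) := by
  refine ⟨(1 + 4 * 2 ^ 61) * 1001, by norm_num, fun F _ p _ P C hP hC => ?_⟩
  rcases (P ×ˢ C).eq_empty_or_nonempty with hempty | hne
  · rw [hempty, Finset.filter_empty, Finset.card_empty, Nat.cast_zero]
    positivity
  obtain ⟨hPne, hCne⟩ := Finset.nonempty_product.1 hne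
  choose! f hf using hC
  obtain ⟨q, hq2, hPq, hq⟩ := CubicIncidences.exists_natCast_ne_zero_of_charP F p hP
  obtain ⟨T, hT, h39, h8, hCT⟩ := CubicIncidences.exists_threshold
    (Nat.cast_nonneg (α := ℝ) P.card) (Nat.one_le_cast.2 hCne.card_pos)
  rw [CubicIncidences.card_filter_mem_eq_sum, mul_assoc]
  refine (CubicIncidences.sum_le_of_card_dyadicClass_le (e := 7) C _ (by omega)
    (fun γ _ => Finset.card_filter_le P _) (by norm_num) (by norm_num) fun i =>
      CubicIncidences.card_dyadicClass_mul_pow_seven_le hq2 hq hPq hPne hf hT h39 h8 i).trans ?_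
  exact mul_le_mul_of_nonneg_left hCT (by norm_num)

theorem incidence_bound_main :
    ∃ c : ℝ, 0 < c ∧ ∀ p : ℕ, p.Prime →
      ∀ (P : Finset (Fin 2 → ZMod p)) (C : Finset (Set (Fin 2 → ZMod p))),
        (P.card : ℝ) ≤ (p : ℝ) ^ ((15 : ℝ) / 13) →
        (∀ γ ∈ C, IsIrredCubic γ) →
        (incidences P C : ℝ) ≤
          c * (((P.card : ℝ) * (C.card : ℝ)) ^ ((39 : ℝ) / 43)
            + (P.card : ℝ) ^ ((71 : ℝ) / 43) * (C.card : ℝ) ^ ((28 : ℝ) / 43)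
            + (C.card : ℝ)) := by
  obtain ⟨c, hc, h⟩ := incidence_bound_main_general
  refine ⟨c, hc, fun p hp P C hP hC => ?_⟩
  have : Fact p.Prime := ⟨hp⟩
  exact h (ZMod p) p P C (Or.inr (CubicIncidences.cube_le_pow_four hp.one_le hP)) hC
end
end

section
/- Let p be a prime and let S ⊆ F_p^2 be a set of seven distinct points. If there exists an irreducible cubic curve in F_p^2 containing all seven points of S, then the F_p-vector space of polynomials in F_p[X,Y] of total degree at most 3 that vanish at every point of S has dimension exactly 3 (as a subspace of the 10-dimensional space of all polynomials of total degree at most 3). -/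
/-!
A finite set `S` imposes independent conditions on polynomials of degree at most `d` as soon as each
`q ∈ S` can be separated from the other points of `S` by such a polynomial. Suppose that
`#S ≤ 2 * d + 1` and that no `d + 2` points of `S` are collinear. Colour the other points of `S`, of
which there are at most `2 * d`, by the line joining them to `q`. Every colour occurs at most `d`
times, so these points can be covered by `d` pairs of points of different colours. The line through
such a pair misses `q`, so it lies in a hyperplane that misses `q`, and the product of the equations
of these hyperplanes separates `q`.

The points of an irreducible cubic satisfy this for `d = 3`, since a plane curve of degree `m` that
does not contain a given line meets it in at most `m` points: otherwise the equation of the curve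
would restrict to zero on the line, and the equation of the line would divide it.
-/

open scoped Classical

noncomputable section

/-- The space of polynomials of total degree at most 3 vanishing at every point of `S`,
as a subspace of the 10-dimensional space of polynomials of total degree at most 3. -/
def vanishingCubics (p : ℕ) (S : Finset (Fin 2 → ZMod p)) :
    Submodule (ZMod p) (MvPolynomial (Fin 2) (ZMod p)) :=
  MvPolynomial.restrictTotalDegree (Fin 2) (ZMod p) 3 ⊓
    ⨅ q ∈ S, LinearMap.ker (MvPolynomial.aeval (R := ZMod p) q).toLinearMap

open Finset MvPolynomial
open scoped Polynomial

section Pairing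

variable {α β : Type*}

theorem exists_monotone_enumeration [LinearOrder β] (c : α → β) (T : Finset α) :
    ∃ x : Fin #T → α, x.Injective ∧ Set.range x = T ∧ Monotone (c ∘ x) := by
  let e : Fin #T ≃ T := T.equivFin.symm
  let σ := Tuple.sort fun i => c (e i)
  refine ⟨fun i => e (σ i), ?_, ?_, Tuple.monotone_sort fun i => c (e i)⟩
  · exact Subtype.val_injective.comp (e.injective.comp σ.injective)
  · change Set.range (Subtype.val ∘ (σ.trans e)) = T
    rw [(σ.trans e).surjective.range_comp, Subtype.range_coe_subtype, Finset.setOfPred_mem]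

theorem le_card_fiber_of_apply_eq [PartialOrder β] {n d : ℕ} {c : α → β} {T : Finset α}
    {x : Fin n → α} (hinj : x.Injective) (hxT : ∀ i, x i ∈ T) (hmono : Monotone (c ∘ x))
    {i : Fin n} (hi : i + d < n) (hc : c (x i) = c (x ⟨i + d, hi⟩)) :
    d + 1 ≤ #{a ∈ T | c a = c (x i)} := by
  let j : Fin n := ⟨i + d, hi⟩
  have hsub : (Icc i j).image x ⊆ {a ∈ T | c a = c (x i)} := by
    intro a ha
    obtain ⟨k, hk, rfl⟩ := mem_image.mp ha
    obtain ⟨hik, hkj⟩ := mem_Icc.mp hk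
    exact mem_filter.mpr ⟨hxT k, ((hmono hkj).trans_eq hc.symm).antisymm (hmono hik)⟩
  have hcard : #((Icc i j).image x) = d + 1 := by
    rw [card_image_of_injective _ hinj, Fin.card_Icc]
    simp only [j]
    omega
  exact hcard ▸ card_le_card hsub

/-- The degenerate pair `(a, a)` accommodates a point without a partner. -/
theorem exists_pairs_of_card_fiber_le (c : α → β) {T : Finset α} {d : ℕ} (hT : #T ≤ 2 * d)
    (hfiber : ∀ y, #{a ∈ T | c a = y} ≤ d) :
    ∃ P : Finset (α × α), #P ≤ d ∧ (∀ a ∈ T, ∃ e ∈ P, a = e.1 ∨ a = e.2) ∧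
      ∀ e ∈ P, e.1 ∈ T ∧ e.2 ∈ T ∧ (c e.1 = c e.2 → e.1 = e.2) := by
  let _ : LinearOrder β := linearOrderOfSTO WellOrderingRel
  obtain ⟨x, hinj, hrange, hmono⟩ := exists_monotone_enumeration c T
  have hxT : ∀ i, x i ∈ T := fun i => by
    rw [← mem_coe, ← hrange]
    exact Set.mem_range_self i
  -- In an enumeration by colour, points at distance `d` have different colours.
  let pair : Fin #T → α × α := fun i => (x i, if h : i + d < #T then x ⟨i + d, h⟩ else x i)
  refine ⟨({i : Fin #T | i < d} : Finset _).image pair, ?_, ?_, ?_⟩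
  · exact card_image_le.trans (Fin.card_filter_val_lt.trans_le (min_le_right _ _))
  · intro a ha
    obtain ⟨i, rfl⟩ : a ∈ Set.range x := hrange ▸ ha
    by_cases hi : i < d
    · exact ⟨pair i, mem_image_of_mem _ (by simpa using hi), .inl rfl⟩
    · refine ⟨pair ⟨i - d, by omega⟩, mem_image_of_mem _ ?_, .inr ?_⟩
      · simp only [mem_filter, mem_univ, true_and]
        omega
      · simp [pair, Nat.sub_add_cancel (not_lt.mp hi)]
  · intro e he
    obtain ⟨i, -, rfl⟩ := mem_image.mp he
    by_cases hi : i + d < #T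
    · simp only [pair, hi, dif_pos]
      refine ⟨hxT _, hxT _, fun hc => absurd (hfiber (c (x i))) ?_⟩
      exact not_le.mpr (le_card_fiber_of_apply_eq hinj hxT hmono hi hc)
    · simp [pair, hi, hxT]

end Pairing

theorem finrank_inf_iInf_ker_add_card {K M ι : Type*} [Field K] [AddCommGroup M] [Module K M]
    (W : Submodule K M) [FiniteDimensional K W] (s : Finset ι) (φ : ι → M →ₗ[K] K)
    (h : ∀ i ∈ s, ∃ g ∈ W, φ i g ≠ 0 ∧ ∀ j ∈ s, j ≠ i → φ j g = 0) :
    Module.finrank K ↥(W ⊓ ⨅ i ∈ s, LinearMap.ker (φ i)) + #s = Module.finrank K W := by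
  choose! g hgW hgi hgj using h
  let Φ : M →ₗ[K] (s → K) := LinearMap.pi fun i => φ i
  let E : W →ₗ[K] (s → K) := Φ.domRestrict W
  have hker : (LinearMap.ker E).map W.subtype = W ⊓ ⨅ i ∈ s, LinearMap.ker (φ i) := by
    rw [LinearMap.ker_domRestrict, Submodule.map_comap_subtype, LinearMap.ker_pi,
      iInf_subtype' (p := (· ∈ s))]
  have hsurj : Function.Surjective E := by
    intro v
    refine ⟨∑ i : s, (v i / φ i (g i)) • ⟨g i, hgW i i.2⟩, funext fun j => ?_⟩
    rw [map_sum, Finset.sum_apply, Finset.sum_eq_single j]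
    · simp [E, Φ, div_mul_cancel₀ _ (hgi j j.2)]
    · intro i _ hij
      simp [E, Φ, hgj i i.2 j j.2 (Subtype.coe_ne_coe.mpr hij.symm)]
    · simp
  rw [← hker, Submodule.finrank_map_subtype_eq, ← E.finrank_range_add_finrank_ker,
    LinearMap.range_eq_top.mpr hsurj, finrank_top, Module.finrank_fintype_fun_eq_card,
    Fintype.card_coe, add_comm]

theorem card_degree_le (σ : Type*) [Fintype σ] (d : ℕ) :
    Nat.card {n : σ →₀ ℕ // n.sum (fun _ e => e) ≤ d} =
      (d + Fintype.card σ).choose (Fintype.card σ) := by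
  have hmem (n : σ →₀ ℕ) :
      n ∈ (range (d + 1)).biUnion (finsuppAntidiag univ) ↔ n.sum (fun _ e => e) ≤ d := by
    simp [mem_finsuppAntidiag, Finsupp.sum_fintype]
  rw [Nat.subtype_card _ hmem, card_biUnion, ← Nat.sum_range_multichoose]
  · simp only [card_finsuppAntidiag_nat_eq_multichoose, card_univ]
  · intro i _ j _ hij
    refine disjoint_left.mpr fun n hi hj => hij ?_
    exact (mem_finsuppAntidiag.mp hi).1.symm.trans (mem_finsuppAntidiag.mp hj).1

theorem finrank_restrictTotalDegree (σ R : Type*) [Fintype σ] [CommRing R] [Nontrivial R] (d : ℕ) :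
    Module.finrank R (restrictTotalDegree σ R d) = (d + Fintype.card σ).choose (Fintype.card σ) :=
  (Module.finrank_eq_nat_card_basis (basisRestrictSupport R _)).trans (card_degree_le σ d)

section Hyperplane

variable {σ R : Type*} [Fintype σ] [CommRing R]

/-- The equation `w ⬝ᵥ (x - a) = 0` of the hyperplane through `a` with normal vector `w`, as a
polynomial in the coordinates of `x`; it is `0` when `w = 0`. -/
def hyperplanePoly (w a : σ → R) : MvPolynomial σ R :=
  ∑ i, C (w i) * (X i - C (a i))

theorem eval_hyperplanePoly (w a x : σ → R) : eval x (hyperplanePoly w a) = w ⬝ᵥ (x - a) := by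
  simp [hyperplanePoly, dotProduct]

theorem totalDegree_hyperplanePoly_le (w a : σ → R) : (hyperplanePoly w a).totalDegree ≤ 1 := by
  cases subsingleton_or_nontrivial R
  · rw [Subsingleton.elim (hyperplanePoly w a) 0, totalDegree_zero]
    exact zero_le_one
  refine totalDegree_finsetSum_le fun i _ => (totalDegree_mul _ _).trans ?_
  rw [totalDegree_C, zero_add]
  refine (totalDegree_sub _ _).trans ?_
  simp

theorem totalDegree_hyperplanePoly {w : σ → R} (hw : w ≠ 0) (a : σ → R) :
    (hyperplanePoly w a).totalDegree = 1 := by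
  refine (totalDegree_hyperplanePoly_le w a).antisymm (Nat.one_le_iff_ne_zero.mpr fun h => hw ?_)
  have hconst (x : σ → R) : w ⬝ᵥ (x - a) = (hyperplanePoly w a).coeff 0 := by
    rw [← eval_hyperplanePoly, totalDegree_eq_zero_iff_eq_C.mp h, eval_C, coeff_zero_C]
  have hzero (u : σ → R) : w ⬝ᵥ u = 0 := by
    have := (hconst (u + a)).trans (hconst a).symm
    simpa using this
  exact dotProduct_eq_zero w hzero

theorem exists_totalDegree_le_one_of_notMem {σ K : Type*} [Finite σ] [Field K]
    {L : AffineSubspace K (σ → K)} {q : σ → K} (hq : q ∉ L) :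
    ∃ ℓ : MvPolynomial σ K, ℓ.totalDegree ≤ 1 ∧ (∀ x ∈ L, eval x ℓ = 0) ∧ eval q ℓ ≠ 0 := by
  obtain rfl | ⟨a, ha⟩ := L.eq_bot_or_nonempty
  · exact ⟨1, by simp, fun x hx => (AffineSubspace.notMem_bot K _ x hx).elim, by simp⟩
  cases nonempty_fintype σ
  have hdir : q - a ∉ L.direction := mt (AffineSubspace.vsub_right_mem_direction_iff_mem ha q).mp hq
  obtain ⟨φ, hφq, hφL⟩ := Submodule.exists_le_ker_of_notMem hdir
  obtain ⟨w, rfl⟩ := (dotProductEquiv K σ).surjective φ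
  refine ⟨hyperplanePoly w a, totalDegree_hyperplanePoly_le w a, fun x hx => ?_, ?_⟩
  · rw [eval_hyperplanePoly]
    exact hφL (AffineSubspace.vsub_mem_direction hx ha)
  · rwa [eval_hyperplanePoly]

end Hyperplane

section Lines

variable {K V P : Type*} [DivisionRing K] [AddCommGroup V] [Module K V] [AddTorsor V P]

theorem notMem_line_of_line_ne {q a b : P} (ha : a ≠ q) (hb : b ≠ q)
    (h : line[K, q, a] = line[K, q, b] → a = b) : q ∉ line[K, a, b] := by
  intro hq
  have hcol : Collinear K {q, a, b} := collinear_insert_of_mem_affineSpan_pair hq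
  have hab : a = b := h <|
    (hcol.affineSpan_eq_of_ne (by simp) (by simp) ha.symm).trans
      (hcol.affineSpan_eq_of_ne (by simp) (by simp) hb.symm).symm
  subst hab
  simp [ha.symm] at hq

theorem collinear_affineSpan_pair (a b : P) : Collinear K (line[K, a, b] : Set (P)) := by
  rw [Collinear, ← AffineSubspace.direction_eq_vectorSpan, direction_affineSpan]
  exact collinear_pair K a b

theorem card_filter_line_eq_le {d : ℕ} {q : P} {S : Finset (P)} (hq : q ∈ S)
    (hcol : ∀ T ⊆ S, Collinear K (T : Set (P)) → #T ≤ d + 1) (L : AffineSubspace K (P)) :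
    #{x ∈ S.erase q | line[K, q, x] = L} ≤ d := by
  set U : Finset (P) := {x ∈ S.erase q | line[K, q, x] = L} with hU
  obtain hU' | ⟨a, ha⟩ := U.eq_empty_or_nonempty
  · simp [hU']
  have hqU : q ∉ U := by simp [hU]
  have hline : ((insert q U : Finset (P)) : Set (P)) ⊆ line[K, q, a] := by
    intro x hx
    obtain rfl | hx := mem_insert.mp (mem_coe.mp hx)
    · exact left_mem_affineSpan_pair K _ _
    · rw [(mem_filter.mp ha).2, ← (mem_filter.mp hx).2]
      exact right_mem_affineSpan_pair K q x
  have hsub : insert q U ⊆ S :=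
    insert_subset hq ((filter_subset _ _).trans (erase_subset q S))
  have hcard := hcol _ hsub ((collinear_affineSpan_pair q a).subset hline)
  rw [card_insert_of_notMem hqU] at hcard
  exact Nat.le_of_succ_le_succ hcard

end Lines

section IndependentConditions

variable {σ K : Type*} [Field K]

/-- The space of polynomials of total degree at most `d` vanishing at every point of `S`: the
hypersurfaces of degree `d` through `S`, including degenerate ones. -/
def vanishingSpace (d : ℕ) (S : Finset (σ → K)) : Submodule K (MvPolynomial σ K) :=
  restrictTotalDegree σ K d ⊓ ⨅ q ∈ S, LinearMap.ker (aeval (R := K) q).toLinearMap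

theorem exists_totalDegree_le_separating [Finite σ] {d : ℕ} {S : Finset (σ → K)}
    (hS : #S ≤ 2 * d + 1) (hcol : ∀ T ⊆ S, Collinear K (T : Set (σ → K)) → #T ≤ d + 1)
    {q : σ → K} (hq : q ∈ S) :
    ∃ g : MvPolynomial σ K, g.totalDegree ≤ d ∧ eval q g ≠ 0 ∧ ∀ x ∈ S, x ≠ q → eval x g = 0 := by
  have hcard : #(S.erase q) ≤ 2 * d := by
    rw [card_erase_of_mem hq]
    omega
  obtain ⟨P, hPd, hcover, hP⟩ := exists_pairs_of_card_fiber_le (fun x => line[K, q, x]) hcard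
    (card_filter_line_eq_le hq hcol)
  have hline : ∀ e ∈ P, q ∉ line[K, e.1, e.2] := fun e he =>
    notMem_line_of_line_ne (ne_of_mem_erase (hP e he).1) (ne_of_mem_erase (hP e he).2.1)
      (hP e he).2.2
  choose! ℓ hℓdeg hℓline hℓq using fun e he => exists_totalDegree_le_one_of_notMem (hline e he)
  refine ⟨∏ e ∈ P, ℓ e, ?_, ?_, fun x hx hxq => ?_⟩
  · calc (∏ e ∈ P, ℓ e).totalDegree ≤ ∑ e ∈ P, (ℓ e).totalDegree := totalDegree_finsetProd _ _
      _ ≤ #P := by simpa using sum_le_card_nsmul P _ 1 hℓdeg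
      _ ≤ d := hPd
  · rw [eval_prod]
    exact prod_ne_zero_iff.mpr hℓq
  · obtain ⟨e, he, hxe⟩ := hcover x (mem_erase.mpr ⟨hxq, hx⟩)
    rw [eval_prod]
    refine prod_eq_zero he (hℓline e he x ?_)
    rcases hxe with rfl | rfl
    · exact left_mem_affineSpan_pair K _ _
    · exact right_mem_affineSpan_pair K _ _

theorem finrank_vanishingSpace_add_card [Fintype σ] {d : ℕ} {S : Finset (σ → K)}
    (hS : #S ≤ 2 * d + 1) (hcol : ∀ T ⊆ S, Collinear K (T : Set (σ → K)) → #T ≤ d + 1) :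
    Module.finrank K (vanishingSpace d S) + #S = (d + Fintype.card σ).choose (Fintype.card σ) := by
  rw [← finrank_restrictTotalDegree σ K d]
  refine finrank_inf_iInf_ker_add_card _ S _ fun q hq => ?_
  obtain ⟨g, hgd, hgq, hgS⟩ := exists_totalDegree_le_separating hS hcol hq
  exact ⟨g, (mem_restrictTotalDegree _ _ _).mpr hgd, hgq, hgS⟩

end IndependentConditions

section LineComponent

variable {σ R K : Type*} [CommRing R] [Field K]

/-- The restriction of a polynomial to the line through `a` with direction `v`, as a univariate
polynomial in the parameter `t` of `a + t • v`. -/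
def restrictLine (a v : σ → R) : MvPolynomial σ R →ₐ[R] R[X] :=
  aeval fun i => Polynomial.C (a i) + Polynomial.C (v i) * Polynomial.X

theorem eval_restrictLine (a v : σ → R) (t : R) (f : MvPolynomial σ R) :
    (restrictLine a v f).eval t = eval (a + t • v) f := by
  have hcomp : (Polynomial.aeval t).comp (restrictLine a v) =
      (aeval (a + t • v) : MvPolynomial σ R →ₐ[R] R) :=
    algHom_ext fun i => by simp [restrictLine, mul_comm t]
  simpa [aeval_eq_eval] using DFunLike.congr_fun hcomp f

theorem natDegree_restrictLine_le (a v : σ → R) (f : MvPolynomial σ R) :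
    (restrictLine a v f).natDegree ≤ f.totalDegree := by
  simpa using! aeval_natDegree_le f le_rfl _ (n := 1) fun i => by compute_degree

theorem dvd_sub_bind₁ {ℓ : MvPolynomial σ R} {y : σ → MvPolynomial σ R}
    (h : ∀ i, ℓ ∣ X i - y i) (f : MvPolynomial σ R) : ℓ ∣ f - bind₁ y f := by
  let π := Ideal.Quotient.mkₐ R (Ideal.span {ℓ})
  have hπ : π = π.comp (bind₁ y) := algHom_ext fun i => by
    simpa [π, Ideal.Quotient.eq, Ideal.mem_span_singleton] using h i
  rw [← Ideal.mem_span_singleton, ← Ideal.Quotient.eq]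
  exact DFunLike.congr_fun hπ f

theorem hyperplanePoly_dvd_of_restrictLine_eq_zero {f : MvPolynomial (Fin 2) K} {a v : Fin 2 → K}
    (hv : v ≠ 0) (hf : restrictLine a v f = 0) : hyperplanePoly ![v 1, -v 0] a ∣ f := by
  obtain ⟨w, hw⟩ : ∃ w : Fin 2 → K, w ⬝ᵥ v = 1 := by
    obtain ⟨i, hi⟩ := Function.ne_iff.mp hv
    exact ⟨Pi.single i (v i)⁻¹, by simpa using inv_mul_cancel₀ hi⟩
  -- `t` recovers the parameter of a point of the line.
  let t := hyperplanePoly w a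
  have hX : ∀ i, hyperplanePoly ![v 1, -v 0] a ∣ X i - (C (a i) + C (v i) * t) := by
    have hw' : C (w 0) * C (v 0) + C (w 1) * C (v 1) = (1 : MvPolynomial (Fin 2) K) := by
      rw [dotProduct, Fin.sum_univ_two] at hw
      rw [← C_mul, ← C_mul, ← C_add, hw, C_1]
    refine Fin.forall_fin_two.mpr ⟨⟨C (w 1), ?_⟩, ⟨-C (w 0), ?_⟩⟩
    · simp only [t, hyperplanePoly, Fin.sum_univ_two, Matrix.cons_val_zero, Matrix.cons_val_one,
        Matrix.cons_val_fin_one, C_neg]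
      linear_combination (C (a 0) - X 0) * hw'
    · simp only [t, hyperplanePoly, Fin.sum_univ_two, Matrix.cons_val_zero, Matrix.cons_val_one,
        Matrix.cons_val_fin_one, C_neg]
      linear_combination (C (a 1) - X 1) * hw'
  have hbind : bind₁ (fun i => C (a i) + C (v i) * t) f =
      Polynomial.aeval t (restrictLine a v f) := by
    have hcomp : bind₁ (fun i => C (a i) + C (v i) * t) =
        (Polynomial.aeval t).comp (restrictLine a v) :=
      algHom_ext fun i => by simp [restrictLine, algebraMap_eq]
    exact DFunLike.congr_fun hcomp f
  simpa [hbind, hf] using dvd_sub_bind₁ hX f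

theorem card_le_totalDegree_of_collinear {f : MvPolynomial (Fin 2) K}
    (hf : ∀ ℓ : MvPolynomial (Fin 2) K, ℓ.totalDegree = 1 → ¬ ℓ ∣ f) {T : Finset (Fin 2 → K)}
    (hT : Collinear K (T : Set (Fin 2 → K))) (hfT : ∀ x ∈ T, eval x f = 0) :
    #T ≤ f.totalDegree := by
  obtain ⟨a, v, hv, hline⟩ : ∃ a v : Fin 2 → K, v ≠ 0 ∧ ∀ x ∈ T, ∃ t : K, x = a + t • v := by
    obtain ⟨a, v, hline⟩ := (collinear_iff_exists_forall_eq_smul_vadd _).mp hT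
    obtain rfl | hv := eq_or_ne v 0
    · exact ⟨a, 1, one_ne_zero, fun x hx => ⟨0, by simpa using hline x hx⟩⟩
    · exact ⟨a, v, hv, by simpa [add_comm] using hline⟩
  have hnormal : ![v 1, -v 0] ≠ 0 := fun h => hv <| funext <| Fin.forall_fin_two.mpr
    ⟨neg_eq_zero.mp (congr_fun h 1), congr_fun h 0⟩
  have hg : restrictLine a v f ≠ 0 := fun h =>
    hf _ (totalDegree_hyperplanePoly hnormal a) (hyperplanePoly_dvd_of_restrictLine_eq_zero hv h)
  have hsub : T ⊆ (restrictLine a v f).roots.toFinset.image fun t => a + t • v := by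
    intro x hx
    obtain ⟨t, rfl⟩ := hline x hx
    refine mem_image_of_mem _ (Multiset.mem_toFinset.mpr ((Polynomial.mem_roots hg).mpr ?_))
    exact (eval_restrictLine a v t f).trans (hfT _ hx)
  calc #T ≤ #(restrictLine a v f).roots.toFinset := (card_le_card hsub).trans card_image_le
    _ ≤ (restrictLine a v f).roots.card := Multiset.toFinset_card_le _
    _ ≤ (restrictLine a v f).natDegree := Polynomial.card_roots' _
    _ ≤ f.totalDegree := natDegree_restrictLine_le a v f

theorem not_dvd_of_irreducible_of_totalDegree_lt [IsReduced R] {f ℓ : MvPolynomial σ R}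
    (hf : Irreducible f) (hℓ : 0 < ℓ.totalDegree) (hlt : ℓ.totalDegree < f.totalDegree) :
    ¬ ℓ ∣ f := by
  rintro ⟨u, rfl⟩
  rcases hf.isUnit_or_isUnit rfl with h | h
  · exact hℓ.ne' (isUnit_iff_totalDegree_of_isReduced.mp h).2
  · have := totalDegree_mul ℓ u
    rw [(isUnit_iff_totalDegree_of_isReduced.mp h).2] at this
    omega

end LineComponent

theorem vanishing_space_of_seven_on_irreducible_cubic_general {K : Type*} [Field K] {d : ℕ}
    {f : MvPolynomial (Fin 2) K} (hf : ∀ ℓ : MvPolynomial (Fin 2) K, ℓ.totalDegree = 1 → ¬ ℓ ∣ f)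
    (hfd : f.totalDegree ≤ d + 1) {S : Finset (Fin 2 → K)} (hS : #S ≤ 2 * d + 1)
    (hfS : ∀ x ∈ S, eval x f = 0) :
    Module.finrank K (vanishingSpace d S) + #S = (d + 2).choose 2 :=
  finrank_vanishingSpace_add_card hS fun _ hTS hT =>
    (card_le_totalDegree_of_collinear hf hT fun x hx => hfS x (hTS hx)).trans hfd

theorem vanishing_space_of_seven_on_irreducible_cubic
    (p : ℕ) [Fact p.Prime] (S : Finset (Fin 2 → ZMod p)) (hS : S.card = 7)
    (h : ∃ γ : Set (Fin 2 → ZMod p), IsIrredCubic γ ∧ ∀ q ∈ S, q ∈ γ) :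
    Module.finrank (ZMod p) (vanishingCubics p S) = 3 := by
  obtain ⟨_, ⟨f, hf, hdeg, rfl⟩, hfS⟩ := h
  have hfinrank : Module.finrank (ZMod p) (vanishingCubics p S) + #S = (3 + 2).choose 2 :=
    vanishing_space_of_seven_on_irreducible_cubic_general
      (fun ℓ hℓ => not_dvd_of_irreducible_of_totalDegree_lt hf (by omega) (by omega))
      (by omega) (by omega) hfS
  simpa [hS, Nat.choose] using hfinrank
end
end
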